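/- arXiv:0909.0244 — 5 statements merged into one kernel-verified Lean document; each statement's English description precedes it below -/
import Mathlib

section
/- Let l ∈ R_1 be a strong Lefschetz element for M and let M ≅ ⊕_{α∈Λ} S_α be a decomposition of M as an S-module, S = k[l], with S_α = S(−i_α)/(l^{d_α}). Then for every subset Γ ⊆ Λ, the graded S-module ⊕_{α∈Γ} S_α has the strong Lefschetz property, with strong Lefschetz element l. -/
open MvPolynomial TensorProduct

/-- `gr` is a grading making `M` a graded module over the standard graded polynomial ring
`k[x_1, …, x_n]`: `M` is the internal direct sum of the subspaces `gr i`, and homogeneous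
polynomials of degree `i` map `gr j` into `gr (i + j)`. -/
def IsGrading (k : Type*) [Field k] (n : ℕ) {M : Type*} [AddCommGroup M] [Module k M]
    [Module (MvPolynomial (Fin n) k) M] (gr : ℕ → Submodule k M) : Prop :=
  DirectSum.IsInternal gr ∧
    ∀ (i j : ℕ) (r : MvPolynomial (Fin n) k), r ∈ homogeneousSubmodule (Fin n) k i →
      ∀ x ∈ gr j, r • x ∈ gr (i + j)

/-- The scalar `z` satisfies the strong Lefschetz condition for the grading `gr`:
for all nonnegative `a` and `d`, multiplication by `z ^ a` maps `gr d` to `gr (d + a)`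
injectively or surjectively. -/
def IsSLAction {k A T : Type*} [Field k] [CommRing A] [AddCommGroup T] [Module k T]
    [Module A T] (gr : ℕ → Submodule k T) (z : A) : Prop :=
  ∀ a d : ℕ, (∀ x ∈ gr d, z ^ a • x = 0 → x = 0) ∨
    (∀ w ∈ gr (d + a), ∃ x ∈ gr d, z ^ a • x = w)

/-- The data `(iv α, dv α, e α)` exhibits a degree-zero decomposition
`T ≅ ⊕_α k[z](-(iv α))/(z^(dv α))` of the graded module `T` as a graded `k[z]`-module:
each `e α` is homogeneous of degree `iv α`, is killed by `z ^ dv α`, the elements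
`z ^ j • e α` (`j < dv α`) are homogeneous of degree `iv α + j` and form a `k`-basis of `T`. -/
def IsDecomp {k A T : Type*} [Field k] [CommRing A] [AddCommGroup T] [Module k T]
    [Module A T] (gr : ℕ → Submodule k T) (z : A) {Λ : Type*} (iv dv : Λ → ℕ)
    (e : Λ → T) : Prop :=
  (∀ α, 1 ≤ dv α) ∧ (∀ (α : Λ) (j : ℕ), j < dv α → z ^ j • e α ∈ gr (iv α + j)) ∧
    (∀ α, z ^ dv α • e α = 0) ∧
    LinearIndependent k (fun q : Σ α : Λ, Fin (dv α) => z ^ (q.2 : ℕ) • e q.1) ∧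
    Submodule.span k (Set.range (fun q : Σ α : Λ, Fin (dv α) => z ^ (q.2 : ℕ) • e q.1)) = ⊤

/-- `p` is the socle degree of the graded module with grading `gr`:
the largest degree in which the module is nonzero. -/
def IsSocleDegree {k T : Type*} [Field k] [AddCommGroup T] [Module k T]
    (gr : ℕ → Submodule k T) (p : ℕ) : Prop :=
  gr p ≠ ⊥ ∧ ∀ e : ℕ, p < e → gr e = ⊥

/-- The partial order on the cyclic summands of a decomposition:
`S_β ⪯ S_α` iff `iv α ≤ iv β` and `dv β + iv β ≤ dv α + iv α`. -/
def Prec {Λ : Type*} (iv dv : Λ → ℕ) (β α : Λ) : Prop :=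
  iv α ≤ iv β ∧ dv β + iv β ≤ dv α + iv α

/-- A decomposition with data `(iv, dv)` is almost centered if whenever `S_β ⪯ S_α` one has
`|L_{αβ} - R_{αβ}| ≤ 1`, where `L_{αβ} = iv β - iv α` and
`R_{αβ} = (dv α + iv α) - (dv β + iv β)`. -/
def AlmostCentered {Λ : Type*} (iv dv : Λ → ℕ) : Prop :=
  ∀ α β : Λ, Prec iv dv β α →
    |((iv β : ℤ) - (iv α : ℤ)) - (((dv α : ℤ) + (iv α : ℤ)) - ((dv β : ℤ) + (iv β : ℤ)))| ≤ 1

/-- Let `l ∈ R_1` be a strong Lefschetz element for `M` and let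
`M ≅ ⊕_{α ∈ Λ} S_α` be a decomposition of `M` as a graded `S = k[l]`-module, with
`S_α = S(-i_α)/(l^{d_α})`.  Then for every subset `Γ ⊆ Λ`, the graded `S`-module
`⊕_{α ∈ Γ} S_α` (realized inside `M` as the span of the elements `l^j • e_α`, `α ∈ Γ`,
`j < d_α`, with the induced grading) has the strong Lefschetz property with strong Lefschetz
element `l`. -/
theorem statement2 {k : Type} [Field k] [CharZero k] {n : ℕ} {M : Type} [AddCommGroup M]
    [Module k M] [Module (MvPolynomial (Fin n) k) M]
    [IsScalarTower k (MvPolynomial (Fin n) k) M]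
    [Module.Finite (MvPolynomial (Fin n) k) M] [FiniteDimensional k M]
    (gr : ℕ → Submodule k M) (hgr : IsGrading k n gr)
    (l : MvPolynomial (Fin n) k) (hl : l ∈ homogeneousSubmodule (Fin n) k 1)
    (hSL : IsSLAction gr l)
    {Λ : Type} [Fintype Λ] (iv dv : Λ → ℕ) (e : Λ → M)
    (hdec : IsDecomp gr l iv dv e) :
    ∀ Γ : Set Λ,
      IsSLAction (fun dd =>
        (Submodule.span k {t : M | ∃ α ∈ Γ, ∃ j : ℕ, j < dv α ∧ t = l ^ j • e α}) ⊓ gr dd)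
        l := by
  classical
  intro Γ
  obtain ⟨-, hmem, hkill, hli, hsp⟩ := hdec
  let b := Module.Basis.mk hli hsp.ge
  have hb : ∀ q, b q = l ^ (q.2 : ℕ) • e q.1 := fun q => Module.Basis.mk_apply hli hsp.ge q
  let P : M →ₗ[k] M := b.constr k (fun q => if q.1 ∈ Γ then b q else 0)
  have hPb : ∀ q, P (b q) = if q.1 ∈ Γ then b q else 0 := fun q => b.constr_basis k _ q
  have hPe : ∀ α j, P (l ^ j • e α) = if α ∈ Γ then l ^ j • e α else 0 := by
    intro α j
    by_cases hj : j < dv α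
    · have := hPb ⟨α, ⟨j, hj⟩⟩
      simpa [hb] using this
    · have h0 : l ^ j • e α = 0 := by
        obtain ⟨c, rfl⟩ := Nat.exists_eq_add_of_le (not_lt.mp hj)
        rw [add_comm, pow_add, mul_smul, hkill, smul_zero]
      simp [h0]
  -- `P` commutes with powers of `l`
  have hPl : ∀ (a : ℕ) (x : M), P (l ^ a • x) = l ^ a • P x := by
    intro a x
    have : P ∘ₗ Algebra.lsmul k k M (l ^ a) = Algebra.lsmul k k M (l ^ a) ∘ₗ P := by
      refine b.ext fun q => ?_
      simp only [LinearMap.comp_apply, Algebra.lsmul_coe, hb]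
      rw [← mul_smul, ← pow_add, hPe, hPe]
      split_ifs
      · rw [← mul_smul, ← pow_add]
      · simp
    exact LinearMap.congr_fun this x
  -- `P` preserves the grading
  letI := hgr.1.chooseDecomposition
  have hPgr : ∀ (d : ℕ) (x : M), x ∈ gr d → P x ∈ gr d := by
    intro d x hx
    let p : M →ₗ[k] M := (gr d).subtype ∘ₗ DirectSum.component k ℕ (fun i => gr i) d ∘ₗ
      (DirectSum.decomposeLinearEquiv gr).toLinearMap
    have hp : ∀ y, p y = (DirectSum.decompose gr y d : M) := fun y => rfl
    have hc : P ∘ₗ p = p ∘ₗ P := by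
      refine b.ext fun q => ?_
      have hq : b q ∈ gr (iv q.1 + q.2) := by
        rw [hb]; exact hmem _ _ q.2.2
      have hpq : p (b q) = if iv q.1 + q.2 = d then b q else 0 := by
        rw [hp]
        split_ifs with h
        · subst h
          exact DirectSum.decompose_of_mem_same gr hq
        · exact DirectSum.decompose_of_mem_ne gr hq h
      simp only [LinearMap.comp_apply, hpq, hPb]
      split_ifs with h1 h2 h2 <;> simp only [hpq, hPb, h1, h2, if_true, if_false, map_zero]
    have h1 : p x = x := by rw [hp]; exact DirectSum.decompose_of_mem_same gr hx
    have h2 : P (p x) = p (P x) := LinearMap.congr_fun hc x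
    rw [h1] at h2
    rw [h2, hp]
    exact SetLike.coe_mem _
  set N := Submodule.span k {t : M | ∃ α ∈ Γ, ∃ j : ℕ, j < dv α ∧ t = l ^ j • e α} with hN
  have hPN : ∀ x, P x ∈ N := by
    intro x
    have hx : x ∈ Submodule.span k (Set.range b) := by rw [b.span_eq]; trivial
    induction hx using Submodule.span_induction with
    | mem x h =>
      obtain ⟨q, rfl⟩ := h
      rw [hPb]
      split_ifs with hq
      · exact Submodule.subset_span ⟨q.1, hq, q.2, q.2.2, hb q⟩
      · exact N.zero_mem
    | zero => simp
    | add x y _ _ hx hy => rw [map_add]; exact N.add_mem hx hy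
    | smul c x _ hx => rw [map_smul]; exact N.smul_mem c hx
  have hPid : ∀ x ∈ N, P x = x := by
    intro x hx
    induction hx using Submodule.span_induction with
    | mem x h =>
      obtain ⟨α, hα, j, hj, rfl⟩ := h
      rw [hPe, if_pos hα]
    | zero => simp
    | add x y _ _ hx hy => rw [map_add, hx, hy]
    | smul c x _ hx => rw [map_smul, hx]
  intro a d
  rcases hSL a d with h | h
  · exact Or.inl fun x hx => h x hx.2
  · refine Or.inr fun w hw => ?_
    obtain ⟨x, hx, rfl⟩ := h w hw.2
    exact ⟨P x, ⟨hPN x, hPgr d x hx⟩, by rw [← hPl, hPid _ hw.1]⟩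
end

section
/- Let l ∈ R_1 and let M ≅ ⊕_{α∈Λ} S_α be a decomposition of M as a graded S-module, S = k[l], with S_α = S(−i_α)/(l^{d_α}). Then l is a strong Lefschetz element for M if and only if the family {S_α}_{α∈Λ} is totally ordered with respect to the partial order ⪯, i.e. for all α, β ∈ Λ either (i_α ≤ i_β and d_β+i_β ≤ d_α+i_α) or (i_β ≤ i_α and d_α+i_α ≤ d_β+i_β). -/
open MvPolynomial TensorProduct

section Helpers

/-- Coefficients of a homogeneous element vanish outside its degree. -/
theorem repr_eq_zero_of_mem {k M : Type} [Field k] [AddCommGroup M] [Module k M]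
    (gr : ℕ → Submodule k M) (hgr : DirectSum.IsInternal gr)
    {ι : Type} [Fintype ι] (b : Module.Basis ι k M) (deg : ι → ℕ) (hb : ∀ q, b q ∈ gr (deg q))
    (d : ℕ) (x : M) (hx : x ∈ gr d) (q : ι) (hq : deg q ≠ d) : b.repr x q = 0 := by
  classical
  letI := hgr.chooseDecomposition
  let P : M →ₗ[k] M := (gr d).subtype ∘ₗ DirectSum.component k ℕ (fun i => gr i) d ∘ₗ
    (DirectSum.decomposeLinearEquiv gr).toLinearMap
  have hP : ∀ i (y : M), y ∈ gr i → P y = if i = d then y else 0 := by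
    intro i y hy
    have : P y = (DirectSum.decompose gr y d : M) := rfl
    rw [this]
    split_ifs with h
    · subst h
      exact DirectSum.decompose_of_mem_same gr hy
    · exact DirectSum.decompose_of_mem_ne gr hy h
  have key : ((b.coord q) ∘ₗ P) = 0 := by
    refine b.ext fun i => ?_
    rw [LinearMap.comp_apply, hP _ _ (hb i)]
    split_ifs with h
    · have hne : i ≠ q := fun h2 => hq (h2 ▸ h)
      simp [hne]
    · simp
  have h1 := LinearMap.congr_fun key x
  simpa [hP d x hx] using h1

theorem repr_smul_pow {k A M : Type} [Field k] [CommRing A] [Algebra k A] [AddCommGroup M]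
    [Module k M] [Module A M] [IsScalarTower k A M] {Λ : Type} [Fintype Λ]
    (z : A) (dv : Λ → ℕ) (e : Λ → M)
    (hk : ∀ α, z ^ dv α • e α = 0)
    (b : Module.Basis (Σ α : Λ, Fin (dv α)) k M) (hb : ∀ q, b q = z ^ (q.2 : ℕ) • e q.1)
    (a : ℕ) (x : M) (γ : Λ) (j : Fin (dv γ)) :
    b.repr (z ^ a • x) ⟨γ, j⟩ =
      if a ≤ j then b.repr x ⟨γ, ⟨j - a, by omega⟩⟩ else 0 := by
  classical
  let F : M →ₗ[k] M := DistribSMul.toLinearMap k M (z ^ a)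
  let G : M →ₗ[k] k := if a ≤ j then b.coord ⟨γ, ⟨j - a, by omega⟩⟩ else 0
  have key : b.coord ⟨γ, j⟩ ∘ₗ F = G := by
    refine b.ext ?_
    rintro ⟨δ, i⟩
    have hF : F (b ⟨δ, i⟩) = z ^ (a + i) • e δ := by
      simp [F, hb, smul_smul, pow_add]
    have hG : G (b ⟨δ, i⟩) = if a ≤ j then b.coord ⟨γ, ⟨j - a, by omega⟩⟩ (b ⟨δ, i⟩) else 0 := by
      simp only [G]; split_ifs <;> rfl
    rw [LinearMap.comp_apply, hF, hG]
    by_cases h : a + i < dv δ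
    · have : z ^ (a + (i : ℕ)) • e δ = b ⟨δ, ⟨a + i, h⟩⟩ := by rw [hb]
      rw [this]
      simp only [Module.Basis.coord_apply, Module.Basis.repr_self, Finsupp.single_apply]
      by_cases hδ : δ = γ
      · subst hδ
        simp only [Sigma.mk.injEq, heq_eq_eq, true_and, Fin.ext_iff]
        split_ifs <;> first | rfl | omega
      · simp [hδ]
    · have : z ^ (a + (i : ℕ)) • e δ = 0 := by
        obtain ⟨c, hc⟩ := Nat.exists_eq_add_of_le (not_lt.mp h)
        rw [hc, add_comm, pow_add, mul_smul, hk, smul_zero]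
      rw [this]
      simp only [Module.Basis.coord_apply, Module.Basis.repr_self, Finsupp.single_apply]
      by_cases hδ : δ = γ
      · subst hδ
        have := j.2
        simp only [Sigma.mk.injEq, heq_eq_eq, true_and, Fin.ext_iff]
        split_ifs <;> first | omega | simp
      · simp [hδ]
  have h1 := LinearMap.congr_fun key x
  have h2 : G x = if a ≤ j then b.repr x ⟨γ, ⟨j - a, by omega⟩⟩ else 0 := by
    simp only [G]; split_ifs <;> rfl
  rw [← h2, ← h1]
  rfl

end Helpers

/-- Let `l ∈ R_1` and let `M ≅ ⊕_{α ∈ Λ} S_α` be a decomposition of `M` as a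
graded `S = k[l]`-module, with `S_α = S(-i_α)/(l^{d_α})`.  Then `l` is a strong Lefschetz
element for `M` if and only if the family `{S_α}` is totally ordered with respect to `⪯`:
for all `α, β ∈ Λ`, either `S_β ⪯ S_α` or `S_α ⪯ S_β`. -/
theorem statement3 {k : Type} [Field k] [CharZero k] {n : ℕ} {M : Type} [AddCommGroup M]
    [Module k M] [Module (MvPolynomial (Fin n) k) M]
    [IsScalarTower k (MvPolynomial (Fin n) k) M]
    [Module.Finite (MvPolynomial (Fin n) k) M] [FiniteDimensional k M]
    (gr : ℕ → Submodule k M) (hgr : IsGrading k n gr)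
    (l : MvPolynomial (Fin n) k) (hl : l ∈ homogeneousSubmodule (Fin n) k 1)
    {Λ : Type} [Fintype Λ] (iv dv : Λ → ℕ) (e : Λ → M)
    (hdec : IsDecomp gr l iv dv e) :
    IsSLAction gr l ↔ ∀ α β : Λ, Prec iv dv β α ∨ Prec iv dv α β := by
  classical
  obtain ⟨h1, hdeg, hk, hli, hsp⟩ := hdec
  let b : Module.Basis (Σ α : Λ, Fin (dv α)) k M := Module.Basis.mk hli hsp.ge
  have hb : ∀ q, b q = l ^ (q.2 : ℕ) • e q.1 := fun q => by simp [b]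
  have hz := repr_eq_zero_of_mem gr hgr.1 b (fun q => iv q.1 + q.2)
    (fun q => by rw [hb]; exact hdeg _ _ q.2.2)
  have hs := repr_smul_pow l dv e hk b hb
  have hne : ∀ (α : Λ) (j : ℕ), j < dv α → l ^ j • e α ≠ 0 := fun α j hj =>
    hb ⟨α, ⟨j, hj⟩⟩ ▸ b.ne_zero _
  constructor
  · intro hSL
    have aux : ∀ α β : Λ, iv α < iv β → dv α + iv α < dv β + iv β → False := by
      intro α β hi hd
      have hα := h1 α
      have hβ := h1 β
      rcases hSL (iv β + dv β - 1 - iv α) (iv α) with h | h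
      · have h0 := hdeg α 0 hα
        rw [pow_zero, one_smul, add_zero] at h0
        have hz0 : l ^ (iv β + dv β - 1 - iv α) • e α = 0 := by
          obtain ⟨c, hc⟩ := Nat.exists_eq_add_of_le
            (show dv α ≤ iv β + dv β - 1 - iv α by omega)
          rw [hc, add_comm, pow_add, mul_smul, hk, smul_zero]
        exact hne α 0 hα (by simpa using h _ h0 hz0)
      · have hw := hdeg β (dv β - 1) (by omega)
        rw [show iv β + (dv β - 1) = iv α + (iv β + dv β - 1 - iv α) by omega] at hw
        obtain ⟨x, hx, hxw⟩ := h _ hw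
        have h3 := hs (iv β + dv β - 1 - iv α) x β ⟨dv β - 1, by omega⟩
        rw [hxw, if_neg (by simp only; omega)] at h3
        have h4 : l ^ (dv β - 1) • e β = b ⟨β, ⟨dv β - 1, by omega⟩⟩ := by rw [hb]
        rw [h4] at h3
        simp at h3
    intro α β
    have h3 := aux α β
    have h4 := aux β α
    unfold Prec
    by_contra hcon
    by_cases h5 : iv α < iv β ∧ dv α + iv α < dv β + iv β
    · exact h3 h5.1 h5.2
    · by_cases h6 : iv β < iv α ∧ dv β + iv β < dv α + iv α
      · exact h4 h6.1 h6.2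
      · omega
  · intro hT a d
    by_cases hα : ∃ α, iv α ≤ d ∧ d < iv α + dv α ∧ iv α + dv α ≤ d + a
    · right
      obtain ⟨α, hα1, hα2, hα3⟩ := hα
      intro w hw
      have : w ∈ (gr d).map (DistribSMul.toLinearMap k M (l ^ a)) := by
        rw [← b.sum_repr w]
        refine Submodule.sum_mem _ fun q _ => ?_
        by_cases hq : iv q.1 + q.2 = d + a
        · refine Submodule.smul_mem _ _ ?_
          obtain ⟨β, j⟩ := q
          have hj := j.2
          simp only at hq
          have hle : iv β ≤ d := by
            rcases hT α β with h | h <;> unfold Prec at h <;> omega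
          refine ⟨l ^ ((j : ℕ) - a) • e β, ?_, ?_⟩
          · have := hdeg β (j - a) (by omega)
            rwa [show iv β + ((j : ℕ) - a) = d by omega] at this
          · rw [hb, DistribSMul.toLinearMap_apply, smul_smul, ← pow_add,
              show a + ((j : ℕ) - a) = j by omega]
        · rw [hz _ w hw q hq, zero_smul]
          exact Submodule.zero_mem _
      exact this
    · left
      intro x hx hx0
      apply b.repr.injective
      ext ⟨γ, j⟩
      rw [map_zero, Finsupp.zero_apply]
      by_cases hq : iv γ + j = d
      · have hlt : (j : ℕ) + a < dv γ := by
          by_contra hcon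
          have := j.2
          exact hα ⟨γ, by omega, by omega, by omega⟩
        have h3 := hs a x γ ⟨j + a, hlt⟩
        rw [hx0, if_pos (by simp)] at h3
        simpa using h3.symm
      · exact hz _ x hx ⟨γ, j⟩ hq
end

section
/- Let l ∈ R_1 be a strong Lefschetz element for M, S = k[l], and let M ≅ ⊕_{α∈Λ} S(−i_α)/(l^{d_α}) be the decomposition of M as a graded S-module. Then the graded R[y]-module M ⊗_k k[y]/(y^m) has the strong Lefschetz property for all m ≥ 0 if and only if the decomposition of M as an S-module is almost centered; in this case l+y is a strong Lefschetz element of M ⊗_k k[y]/(y^m) for every m ≥ 0. -/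
open MvPolynomial TensorProduct

/-- The graded `R[y]`-module `M ⊗_k k[y]/(y^m)` (with `R = k[x_1, …, x_n]`), realized as the
quotient of the polynomial module `M[y]` by the submodule `y^m · M[y]`.  It is a module over
`R[y] = Polynomial R`, graded by total degree. -/
abbrev TruncExt (k : Type*) [Field k] (n : ℕ) (M : Type*) [AddCommGroup M]
    [Module (MvPolynomial (Fin n) k) M] (m : ℕ) : Type _ :=
  PolynomialModule (MvPolynomial (Fin n) k) M ⧸
    (Ideal.span {(Polynomial.X : Polynomial (MvPolynomial (Fin n) k)) ^ m} •
      (⊤ : Submodule (Polynomial (MvPolynomial (Fin n) k))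
        (PolynomialModule (MvPolynomial (Fin n) k) M)))

/-- The total-degree grading on `M ⊗_k k[y]/(y^m)`: the degree `e` component is spanned by
the classes of the elements `x · y^j` with `x ∈ M` homogeneous of degree `e - j`. -/
noncomputable def truncGr {k : Type*} [Field k] (n : ℕ) {M : Type*} [AddCommGroup M]
    [Module k M] [Module (MvPolynomial (Fin n) k) M]
    [IsScalarTower k (MvPolynomial (Fin n) k) M]
    (gr : ℕ → Submodule k M) (m e : ℕ) : Submodule k (TruncExt k n M m) :=
  Submodule.span k {t | ∃ (j : ℕ) (x : M), j ≤ e ∧ x ∈ gr (e - j) ∧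
    t = Submodule.Quotient.mk (PolynomialModule.single (MvPolynomial (Fin n) k) j x)}

/-- Linear forms of `R[y]`: elements `r + c·y` with `r ∈ R_1` a linear form of
`R = k[x_1, …, x_n]` and `c ∈ k`. -/
def IsLinearFormExt {k : Type*} [Field k] {n : ℕ}
    (w : Polynomial (MvPolynomial (Fin n) k)) : Prop :=
  ∃ (r : MvPolynomial (Fin n) k) (c : k), r ∈ homogeneousSubmodule (Fin n) k 1 ∧
    w = Polynomial.C r + Polynomial.C (MvPolynomial.C c) * Polynomial.X


section PolyCore
open Polynomial

theorem core_wronskian_zero {k : Type*} [Field k] [CharZero k] {v g : k[X]}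
    (hW : wronskian v g = 0) (hv : v ≠ 0) (hg : g ≠ 0) : v.natDegree = g.natDegree := by
  have h : v * derivative g = derivative v * g := by
    rw [wronskian] at hW; exact sub_eq_zero.mp hW
  have h2 := congrArg leadingCoeff h
  rw [leadingCoeff_mul, leadingCoeff_mul, leadingCoeff_derivative, leadingCoeff_derivative] at h2
  have hv' := leadingCoeff_ne_zero.mpr hv
  have hg' := leadingCoeff_ne_zero.mpr hg
  have h3 : (v.leadingCoeff * g.leadingCoeff) * (g.natDegree : k)
      = (v.leadingCoeff * g.leadingCoeff) * (v.natDegree : k) := by linear_combination h2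
  have h4 := mul_left_cancel₀ (mul_ne_zero hv' hg') h3
  exact_mod_cast h4.symm

theorem core_pow_dvd_wronskian {k : Type*} [Field k] (q u v : k[X]) (a : ℕ) :
    q ^ (a - 1) ∣ wronskian v (q ^ a * u) := by
  rw [wronskian, derivative_mul, derivative_pow]
  have h : q ^ (a - 1) ∣ q ^ a := pow_dvd_pow _ (by omega)
  refine dvd_sub (Dvd.dvd.mul_left (dvd_add ?_ ?_) _) (Dvd.dvd.mul_left (Dvd.dvd.mul_right h _) _)
  · exact Dvd.dvd.mul_right (Dvd.dvd.mul_right (Dvd.intro_left _ rfl) _) _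
  · exact Dvd.dvd.mul_right h _

/-- The core Lefschetz injectivity statement for `k[x,y]/(x^d,y^m)`, dehomogenized. -/
theorem core_injective {k : Type*} [Field k] [CharZero k] {d m j a : ℕ} (hd : j < d) (hm : j < m)
    (ha : a + 2 + 2 * j = d + m) (p : k[X]) (hp : p.natDegree ≤ j)
    (h : ∀ i, d - 1 - j ≤ i → i < d → ((Polynomial.X + 1) ^ a * p).coeff i = 0) : p = 0 := by
  by_contra hp0
  have hX1 : (Polynomial.X + 1 : k[X]).natDegree = 1 := by
    simpa using natDegree_X_add_C (1 : k)
  have hX10 : (Polynomial.X + 1 : k[X]) ≠ 0 := by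
    intro h0; rw [h0] at hX1; simp at hX1
  have hcop : IsCoprime (Polynomial.X : k[X]) (Polynomial.X + 1) := ⟨-1, 1, by ring⟩
  set f : k[X] := (Polynomial.X + 1) ^ a * p with hf
  have hfdeg : f.natDegree ≤ a + j := by
    rw [hf, natDegree_mul (pow_ne_zero _ hX10) hp0, natDegree_pow, hX1]; omega
  set v : k[X] := ∑ i ∈ Finset.range (d - 1 - j), monomial i (f.coeff i) with hv
  have hvc : ∀ i, v.coeff i = if i < d - 1 - j then f.coeff i else 0 := by
    intro i
    simp [hv, Polynomial.coeff_monomial]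
  obtain ⟨u, hu⟩ : Polynomial.X ^ d ∣ f - v := by
    rw [Polynomial.X_pow_dvd_iff]
    intro i hi
    rw [Polynomial.coeff_sub, hvc]
    split_ifs with h1
    · simp
    · rw [h i (by omega) hi]; simp
  have hvdeg : v.natDegree ≤ d - 2 - j := by
    rw [natDegree_le_iff_coeff_eq_zero]
    intro N hN
    rw [hvc]; split_ifs with h1
    · omega
    · rfl
  set g : k[X] := Polynomial.X ^ d * u with hg
  have hfg : f = v + g := by rw [← hu]; ring
  have hgdeg : g.natDegree ≤ a + j := by
    rw [← hu]; refine (natDegree_sub_le _ _).trans ?_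
    refine max_le hfdeg (hvdeg.trans (by omega))
  by_cases hv0 : v = 0
  · rw [hv0, zero_add] at hfg
    have h1 : Polynomial.X ^ d ∣ (Polynomial.X + 1) ^ a * p := by rw [← hf, hfg, hg]; exact Dvd.intro _ rfl
    have h2 : Polynomial.X ^ d ∣ p := (hcop.pow (m := d) (n := a)).dvd_of_dvd_mul_left h1
    have h3 := natDegree_le_of_dvd h2 hp0
    rw [natDegree_X_pow] at h3; omega
  have hdj : 1 ≤ d - 1 - j := by
    by_contra hc
    apply hv0
    rw [hv, show d - 1 - j = 0 by omega]; simp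
  by_cases hg0 : g = 0
  · rw [hg0, add_zero] at hfg
    have h1 : f.natDegree = a + p.natDegree := by
      rw [hf, natDegree_mul (pow_ne_zero _ hX10) hp0, natDegree_pow, hX1]; omega
    rw [hfg] at h1; omega
  have hgd : d ≤ g.natDegree := by
    have := natDegree_le_of_dvd (show Polynomial.X ^ d ∣ g from Dvd.intro _ rfl) hg0
    rwa [natDegree_X_pow] at this
  by_cases hW : wronskian v g = 0
  · have := core_wronskian_zero hW hv0 hg0
    omega
  have d1 : Polynomial.X ^ (d - 1) ∣ wronskian v g := core_pow_dvd_wronskian Polynomial.X u v d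
  have d2 : (Polynomial.X + 1) ^ (a - 1) ∣ wronskian v g := by
    have : wronskian v g = wronskian v f := by
      rw [hfg, wronskian_add_right, wronskian_self_eq_zero, zero_add]
    rw [this, hf]
    exact core_pow_dvd_wronskian (Polynomial.X + 1) p v a
  have d3 := (hcop.pow (m := d - 1) (n := a - 1)).mul_dvd d1 d2
  have d4 := natDegree_le_of_dvd d3 hW
  rw [natDegree_mul (pow_ne_zero _ Polynomial.X_ne_zero) (pow_ne_zero _ hX10), natDegree_X_pow,
    natDegree_pow, hX1] at d4
  have d5 := natDegree_wronskian_lt_add hW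
  omega

/-- Existence of the generators of the strings. -/
theorem core_exists {k : Type*} [Field k] (d j a : ℕ) :
    ∃ p : k[X], p ≠ 0 ∧ p.natDegree ≤ j ∧
      ∀ i, d - j ≤ i → i < d → ((Polynomial.X + 1) ^ a * p).coeff i = 0 := by
  let φ : degreeLT k (j + 1) →ₗ[k] (Fin j → k) :=
    LinearMap.pi fun i => (lcoeff k (d - j + i)) ∘ₗ (LinearMap.mulLeft k ((Polynomial.X + 1) ^ a)) ∘ₗ
      (degreeLT k (j + 1)).subtype
  have e := degreeLTEquiv k (j + 1)
  have : FiniteDimensional k (degreeLT k (j + 1)) := e.symm.finiteDimensional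
  have hk : LinearMap.ker φ ≠ ⊥ := by
    apply LinearMap.ker_ne_bot_of_finrank_lt
    rw [e.finrank_eq]; simp
  obtain ⟨⟨p, hp⟩, hpk, hp0⟩ := Submodule.exists_mem_ne_zero_of_ne_bot hk
  have hp0' : p ≠ 0 := fun h => hp0 (by ext1; exact h)
  refine ⟨p, hp0', ?_, ?_⟩
  · rw [mem_degreeLT] at hp
    have := (natDegree_lt_iff_degree_lt hp0').mpr hp
    omega
  · intro i hi hid
    have := congrFun (LinearMap.mem_ker.mp hpk) ⟨i - (d - j), by omega⟩
    simp [φ] at this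
    rwa [show d - j + (i - (d - j)) = i by omega] at this

end PolyCore


section Strings
variable {k A T : Type*} [Field k] [CommRing A] [Algebra k A] [AddCommGroup T] [Module k T]
    [Module A T] [IsScalarTower k A T]

theorem smul_k_comm (z : A) (c : k) (x : T) : z • c • x = c • z • x := by
  rw [← algebraMap_smul A c x, ← algebraMap_smul A c (z • x), smul_smul, smul_smul, mul_comm]

/-- Strings with independent tops are independent. -/
theorem strings_li {J : Type*} [Fintype J] (z : A) (len : J → ℕ) (g : J → T)
    (hz : ∀ j, z ^ len j • g j = 0)
    (hli : LinearIndependent k (fun j => z ^ (len j - 1) • g j)) :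
    LinearIndependent k (fun q : Σ j : J, Fin (len j) => z ^ (q.2 : ℕ) • g q.1) := by
  classical
  rw [Fintype.linearIndependent_iff] at hli ⊢
  intro c hc
  have hz' : ∀ j n, len j ≤ n → z ^ n • g j = 0 := by
    intro j n hn
    rw [show n = (n - len j) + len j by omega, pow_add, mul_smul, hz, smul_zero]
  -- height induction
  have key : ∀ N B : ℕ, (∀ j, len j ≤ B + N) →
      ∀ (j : J) (i : Fin (len j)), B + i + 1 ≤ len j → c ⟨j, i⟩ = 0 := by
    intro N
    induction N with
    | zero => intro B hB j i hi; have := hB j; omega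
    | succ N ih =>
      intro B hB j i hi
      have ih' := ih (B + 1) (fun j => by have := hB j; omega)
      by_cases h1 : B + 1 + i + 1 ≤ len j
      · exact ih' j i h1
      have h2 : z ^ B • (∑ q : Σ j : J, Fin (len j), c q • z ^ (q.2 : ℕ) • g q.1) = 0 := by
        rw [hc, smul_zero]
      rw [Fintype.sum_sigma, Finset.smul_sum] at h2
      have h3 : ∀ j : J, z ^ B • (∑ i : Fin (len j), c ⟨j, i⟩ • z ^ (i : ℕ) • g j) =
          (if h : B + 1 ≤ len j then c ⟨j, ⟨len j - 1 - B, by omega⟩⟩ else 0) •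
            z ^ (len j - 1) • g j := by
        intro j
        rw [Finset.smul_sum]
        split_ifs with h
        · rw [Finset.sum_eq_single (⟨len j - 1 - B, by omega⟩ : Fin (len j))]
          · rw [smul_k_comm, smul_smul (z ^ B), ← pow_add]
            congr 3
            simp only []
            omega
          · intro i _ hi
            rw [smul_k_comm, smul_smul (z ^ B), ← pow_add]
            have hne : (i : ℕ) ≠ len j - 1 - B := fun h => hi (Fin.ext h)
            by_cases h4 : B + 1 + i + 1 ≤ len j
            · rw [ih' j i h4, zero_smul]
            · rw [hz' j _ (by omega), smul_zero]
          · simp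
        · rw [zero_smul]
          refine Finset.sum_eq_zero fun i _ => ?_
          rw [smul_k_comm, smul_smul (z ^ B), ← pow_add, hz' j _ (by omega), smul_zero]
      simp only [h3] at h2
      have h5 := hli _ h2 j
      rw [dif_pos (by omega)] at h5
      convert h5 using 2
      congr 1
      ext
      simp only []
      omega
  rintro ⟨j, i⟩
  refine key (∑ j, len j) 0 (fun j => ?_) j i (by have := i.2; omega)
  have := Finset.single_le_sum (f := len) (fun _ _ => Nat.zero_le _) (Finset.mem_univ j)
  omega

theorem iSupIndep_li {J : Type*} {gr : ℕ → Submodule k T} (hind : iSupIndep gr)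
    (deg : J → ℕ) (hdeg : Function.Injective deg) (h : J → T) (hm : ∀ j, h j ∈ gr (deg j))
    (h0 : ∀ j, h j ≠ 0) : LinearIndependent k h :=
  (hind.comp hdeg).linearIndependent (fun j => gr (deg j)) hm h0

/-- From a homogeneous decomposition, each graded piece is spanned by the basis vectors in it. -/
theorem gr_le_span {gr : ℕ → Submodule k T} (hind : iSupIndep gr) {z : A} {Λ : Type*}
    {iv dv : Λ → ℕ} {e : Λ → T} (h : IsDecomp gr z iv dv e) (D : ℕ) :
    gr D ≤ Submodule.span k {x | ∃ α, iv α ≤ D ∧ D < iv α + dv α ∧ x = z ^ (D - iv α) • e α} := by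
  set U : ℕ → Submodule k T := fun D =>
    Submodule.span k {x | ∃ α, iv α ≤ D ∧ D < iv α + dv α ∧ x = z ^ (D - iv α) • e α} with hU
  have hUle : ∀ D, U D ≤ gr D := by
    intro D
    rw [hU, Submodule.span_le]
    rintro x ⟨α, h1, h2, rfl⟩
    have := h.2.1 α (D - iv α) (by omega)
    rwa [show iv α + (D - iv α) = D by omega] at this
  have htop : (⨆ D, U D) = ⊤ := by
    rw [eq_top_iff, ← h.2.2.2.2, Submodule.span_le]
    rintro _ ⟨⟨α, j⟩, rfl⟩
    refine Submodule.mem_iSup_of_mem (iv α + j) (Submodule.subset_span ⟨α, by omega, ?_, ?_⟩)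
    · have := j.2; omega
    · simp
  intro x hx
  have hx1 : x ∈ U D ⊔ ⨆ (i) (_ : i ≠ D), U i := by
    have : x ∈ ⨆ D, U D := by rw [htop]; trivial
    rwa [iSup_split_single U D] at this
  obtain ⟨u, hu, v, hv, huv⟩ := Submodule.mem_sup.mp hx1
  have hv' : v ∈ ⨆ (i) (_ : i ≠ D), gr i :=
    (iSup₂_mono (fun i _ => hUle i) : (⨆ (i) (_ : i ≠ D), U i) ≤ _) hv
  have hvD : v ∈ gr D := by
    have : v = x - u := by rw [← huv]; simp
    rw [this]; exact Submodule.sub_mem _ hx (hUle D hu)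
  have hv0 : v = 0 := by
    have := Submodule.disjoint_def.mp (hind D) v hvD hv'
    exact this
  rw [hv0, add_zero] at huv
  rw [← huv]; exact hu

/-- The basis associated to a decomposition. -/
theorem decomp_pow_zero {gr : ℕ → Submodule k T} {z : A} {Λ : Type*}
    {iv dv : Λ → ℕ} {e : Λ → T} (h : IsDecomp gr z iv dv e) (α : Λ) (n : ℕ) (hn : dv α ≤ n) :
    z ^ n • e α = 0 := by
  rw [show n = (n - dv α) + dv α by omega, pow_add, mul_smul, h.2.2.1, smul_zero]

/-- Badly placed strings prevent injectivity and surjectivity. -/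
theorem not_SL_of_strings {gr : ℕ → Submodule k T} {z : A} {Λ : Type*}
    {iv dv : Λ → ℕ} {e : Λ → T} (h : IsDecomp gr z iv dv e) {p q : Λ} {a D : ℕ}
    (h1 : iv p ≤ D) (h2 : D < iv p + dv p) (h3 : iv p + dv p ≤ D + a) (h4 : D < iv q)
    (h5 : iv q ≤ D + a) (h6 : D + a < iv q + dv q) :
    ¬ ((∀ x ∈ gr D, z ^ a • x = 0 → x = 0) ∨
      (∀ w ∈ gr (D + a), ∃ x ∈ gr D, z ^ a • x = w)) := by
  classical
  rintro (hi | hs)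
  · have hm := h.2.1 p (D - iv p) (by omega)
    rw [show iv p + (D - iv p) = D by omega] at hm
    have h0 := hi _ hm (by
      rw [smul_smul, ← pow_add, decomp_pow_zero h p _ (by omega)])
    exact h.2.2.2.1.ne_zero ⟨p, ⟨D - iv p, by omega⟩⟩ h0
  · have hm := h.2.1 q (D + a - iv q) (by omega)
    rw [show iv q + (D + a - iv q) = D + a by omega] at hm
    obtain ⟨x, -, hx⟩ := hs _ hm
    let b := Module.Basis.mk h.2.2.2.1 h.2.2.2.2.ge
    let Q : Σ α : Λ, Fin (dv α) := ⟨q, ⟨D + a - iv q, by omega⟩⟩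
    let f : T →ₗ[k] k := b.coord Q ∘ₗ (Algebra.lsmul k k T (z ^ a))
    have hf : f = 0 := by
      refine b.ext fun ⟨α, j⟩ => ?_
      have hb : b ⟨α, j⟩ = z ^ (j : ℕ) • e α := by simp [b]
      simp only [f, LinearMap.comp_apply, hb, Algebra.lsmul_coe, LinearMap.zero_apply]
      rw [smul_smul, ← pow_add]
      by_cases hj : a + j < dv α
      · have hb' : z ^ (a + j : ℕ) • e α = b ⟨α, ⟨a + j, hj⟩⟩ := by simp [b]
        rw [hb', Module.Basis.coord_apply, Module.Basis.repr_self, Finsupp.single_apply, if_neg]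
        intro he
        obtain ⟨rfl, he2⟩ := Sigma.mk.inj_iff.mp he
        have := congrArg Fin.val (eq_of_heq he2)
        simp only [] at this
        omega
      · rw [decomp_pow_zero h α _ (by omega), map_zero]
    have h7 : f x = 1 := by
      have hb' : z ^ (D + a - iv q : ℕ) • e q = b Q := by simp [b, Q]
      simp only [f, LinearMap.comp_apply, Algebra.lsmul_coe]
      rw [hx, hb']; simp
    rw [hf] at h7; simp at h7

/-- Nested strings give the strong Lefschetz property. -/
theorem SL_of_nested {gr : ℕ → Submodule k T} (hind : iSupIndep gr) {z : A} {Λ : Type*} [Finite Λ]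
    {iv dv : Λ → ℕ} {e : Λ → T} (h : IsDecomp gr z iv dv e)
    (hn : ∀ p q, iv p < iv q → iv p + dv p < iv q + dv q → False) : IsSLAction gr z := by
  classical
  intro a D
  by_cases hc : ∃ p, iv p ≤ D ∧ D < iv p + dv p ∧ iv p + dv p ≤ D + a
  · obtain ⟨p, h1, h2, h3⟩ := hc
    right
    intro w hw
    have hw' := gr_le_span hind h _ hw
    have : w ∈ (gr D).map (Algebra.lsmul k k T (z ^ a)) := by
      refine (Submodule.span_le.mpr ?_) hw'
      rintro x ⟨q, h4, h5, rfl⟩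
      have h6 : iv q ≤ D := by
        by_contra hlt
        exact hn p q (by omega) (by omega)
      have hm := h.2.1 q (D - iv q) (by omega)
      rw [show iv q + (D - iv q) = D by omega] at hm
      refine ⟨_, hm, ?_⟩
      simp only [Algebra.lsmul_coe]
      rw [smul_smul, ← pow_add, show a + (D - iv q) = D + a - iv q by omega]
    obtain ⟨x, hx, hxw⟩ := this
    exact ⟨x, hx, hxw⟩
  · left
    intro x hx hzx
    have hx' := gr_le_span hind h _ hx
    let I := {α : Λ // iv α ≤ D ∧ D < iv α + dv α}
    have hr : {x | ∃ α, iv α ≤ D ∧ D < iv α + dv α ∧ x = z ^ (D - iv α) • e α} =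
        Set.range (fun α : I => z ^ (D - iv α.1) • e α.1) := by
      ext x; constructor
      · rintro ⟨α, h1, h2, rfl⟩; exact ⟨⟨α, h1, h2⟩, rfl⟩
      · rintro ⟨⟨α, h1, h2⟩, rfl⟩; exact ⟨α, h1, h2, rfl⟩
    rw [hr] at hx'
    have : Fintype I := Fintype.ofFinite I
    obtain ⟨c, rfl⟩ := (Submodule.mem_span_range_iff_exists_fun k).mp hx'
    have hlt : ∀ α : I, D + a - iv α.1 < dv α.1 := by
      rintro ⟨α, h1, h2⟩
      by_contra hcon
      exact hc ⟨α, h1, h2, by simp only [] at hcon; omega⟩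
    have hinj : Function.Injective
        (fun α : I => (⟨α.1, ⟨D + a - iv α.1, hlt α⟩⟩ : Σ α : Λ, Fin (dv α))) := by
      intro α β hab
      exact Subtype.ext (Sigma.mk.inj_iff.mp hab).1
    have hli := (Fintype.linearIndependent_iff.mp (h.2.2.2.1.comp _ hinj)) c (by
      rw [← hzx, Finset.smul_sum]
      refine Finset.sum_congr rfl fun α _ => ?_
      rw [smul_k_comm, smul_smul, ← pow_add]
      simp only [Function.comp]
      congr 3
      have := α.2.1
      omega)
    simp [hli]

end Strings


section Tensor
variable {k A T : Type*} [Field k] [CommRing A] [Algebra k A] [AddCommGroup T] [Module k T]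
    [Module A T] [IsScalarTower k A T]

/-- The form of degree `D` with dehomogenization `p`, applied to `e`. -/
noncomputable def formAt (x y : A) (e : T) (D : ℕ) (p : Polynomial k) : T :=
  ∑ i ∈ Finset.range (D + 1), p.coeff i • (x ^ i * y ^ (D - i)) • e

theorem formAt_add_smul (x y : A) (e : T) (D : ℕ) (p : Polynomial k) (hp : p.natDegree ≤ D) :
    (x + y) • formAt x y e D p = formAt x y e (D + 1) ((Polynomial.X + 1) * p) := by
  have h1 : x • formAt x y e D p = formAt x y e (D + 1) (Polynomial.X * p) := by
    rw [formAt, formAt, Finset.sum_range_succ' _ (D + 1), Finset.smul_sum]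
    simp only [Polynomial.coeff_X_mul, Polynomial.coeff_X_mul_zero, zero_smul, add_zero]
    refine Finset.sum_congr rfl fun i hi => ?_
    rw [smul_k_comm, smul_smul]
    congr 2
    rw [show D + 1 - (i + 1) = D - i by omega]; ring
  have h2 : y • formAt x y e D p = formAt x y e (D + 1) p := by
    rw [formAt, formAt, Finset.sum_range_succ _ (D + 1), Finset.smul_sum]
    rw [Polynomial.coeff_eq_zero_of_natDegree_lt (show p.natDegree < D + 1 by omega), zero_smul,
      add_zero]
    refine Finset.sum_congr rfl fun i hi => ?_
    rw [smul_k_comm, smul_smul]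
    congr 2
    have := Finset.mem_range.mp hi
    rw [show D + 1 - i = (D - i) + 1 by omega]; ring
  rw [add_smul, h1, h2]
  simp only [formAt, ← Finset.sum_add_distrib, ← add_smul, ← Polynomial.coeff_add]
  refine Finset.sum_congr rfl fun i hi => ?_
  congr 2
  ring

theorem formAt_pow_smul (x y : A) (e : T) (D a : ℕ) (p : Polynomial k) (hp : p.natDegree ≤ D) :
    (x + y) ^ a • formAt x y e D p = formAt x y e (D + a) ((Polynomial.X + 1) ^ a * p) := by
  induction a with
  | zero => simp
  | succ a ih =>
    rw [pow_succ', mul_smul, ih, formAt_add_smul, ← mul_assoc, ← pow_succ']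
    · rfl
    · refine Polynomial.natDegree_mul_le.trans ?_
      have h1 : (Polynomial.X + 1 : Polynomial k).natDegree ≤ 1 := by
        simpa using (Polynomial.natDegree_X_add_C (1 : k)).le
      have := Polynomial.natDegree_pow_le_of_le a h1
      omega

theorem formAt_eq_zero {x y : A} {e : T} {d m : ℕ} (hx : x ^ d • e = 0) (hy : y ^ m • e = 0)
    {D : ℕ} {p : Polynomial k}
    (h : ∀ i, i ≤ D → i < d → D - i < m → p.coeff i = 0) : formAt x y e D p = 0 := by
  refine Finset.sum_eq_zero fun i hi => ?_
  have hi' := Finset.mem_range.mp hi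
  by_cases h1 : i < d
  · by_cases h2 : D - i < m
    · rw [h i (by omega) h1 h2, zero_smul]
    · rw [show D - i = (D - i - m) + m by omega, pow_add, ← mul_assoc, mul_smul, hy, smul_zero,
        smul_zero]
  · rw [show i = (i - d) + d by omega, pow_add, mul_comm, ← mul_assoc, mul_smul, hx, smul_zero,
        smul_zero]

theorem formAt_coeff {x y : A} {e : T} {d m : ℕ} (hx : x ^ d • e = 0) (hy : y ^ m • e = 0)
    (hli : LinearIndependent k (fun q : Fin d × Fin m => (x ^ (q.1 : ℕ) * y ^ (q.2 : ℕ)) • e))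
    {D : ℕ} {p : Polynomial k} (h0 : formAt x y e D p = 0)
    (i : ℕ) (hiD : i ≤ D) (hi : i < d) (hD : D - i < m) : p.coeff i = 0 := by
  classical
  rw [Fintype.linearIndependent_iff] at hli
  have key := hli (fun q => if (q.1 : ℕ) + q.2 = D then p.coeff q.1 else 0) (by
    rw [← h0, formAt, Fintype.sum_prod_type, Fin.sum_univ_eq_sum_range
      (f := fun i => ∑ j : Fin m, (if i + (j : ℕ) = D then p.coeff i else 0) •
        (x ^ i * y ^ (j : ℕ)) • e)]
    have h1 : ∀ i, ∑ j : Fin m, (if i + (j : ℕ) = D then p.coeff i else 0) •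
        (x ^ i * y ^ (j : ℕ)) • e =
        if i ≤ D then p.coeff i • (x ^ i * y ^ (D - i)) • e else 0 := by
      intro i
      split_ifs with hiD
      · by_cases hD : D - i < m
        · rw [Finset.sum_eq_single ⟨D - i, hD⟩]
          · rw [if_pos]; simp only []; omega
          · intro j _ hj
            have : (j : ℕ) ≠ D - i := fun h => hj (Fin.ext h)
            rw [if_neg (by omega), zero_smul]
          · simp
        · rw [show D - i = (D - i - m) + m by omega, pow_add, ← mul_assoc, mul_smul, hy, smul_zero,
            smul_zero]
          refine Finset.sum_eq_zero fun j _ => ?_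
          have := j.2
          rw [if_neg (by omega), zero_smul]
      · refine Finset.sum_eq_zero fun j _ => ?_
        rw [if_neg (by omega), zero_smul]
    simp only [h1]
    rw [← Finset.sum_filter]
    have h2 : ∀ s : Finset ℕ, ∑ i ∈ s, p.coeff i • (x ^ i * y ^ (D - i)) • e =
        ∑ i ∈ s with i < d, p.coeff i • (x ^ i * y ^ (D - i)) • e := by
      intro s
      rw [Finset.sum_filter_of_ne]
      intro i _ hne
      by_contra hid
      apply hne
      rw [show i = (i - d) + d by omega, pow_add, mul_comm, ← mul_assoc, mul_smul, hx, smul_zero,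
        smul_zero]
    rw [h2 (Finset.range (D + 1))]
    refine Finset.sum_congr ?_ fun _ _ => rfl
    ext i
    simp only [Finset.mem_filter, Finset.mem_range]
    omega)
  have := key (⟨i, hi⟩, ⟨D - i, hD⟩)
  simpa [show i + (D - i) = D by omega] using this

theorem sum_len (d m : ℕ) (hd : 1 ≤ d) :
    ∑ j : Fin (min d m), (d + m - 1 - 2 * (j : ℕ)) = d * m := by
  rw [Fin.sum_univ_eq_sum_range (f := fun j => d + m - 1 - 2 * j)]
  have : ∀ μ, μ ≤ d → μ ≤ m → ∑ j ∈ Finset.range μ, (d + m - 1 - 2 * j) = μ * (d + m - μ) := by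
    intro μ
    induction μ with
    | zero => simp
    | succ μ ih =>
      intro h1 h2
      rw [Finset.sum_range_succ, ih (by omega) (by omega)]
      obtain ⟨a, rfl⟩ := Nat.exists_eq_add_of_le h1
      obtain ⟨b, rfl⟩ := Nat.exists_eq_add_of_le h2
      rw [show μ + 1 + a + (μ + 1 + b) - μ = μ + a + b + 2 by omega,
        show μ + 1 + a + (μ + 1 + b) - 1 - 2 * μ = a + b + 1 by omega,
        show μ + 1 + a + (μ + 1 + b) - (μ + 1) = μ + a + b + 1 by omega]
      ring
  rw [this _ (min_le_left _ _) (min_le_right _ _)]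
  rcases le_total d m with h | h
  · rw [min_eq_left h]; congr 1; omega
  · rw [min_eq_right h, mul_comm]; congr 1; omega

theorem tensor_one [CharZero k] {gr : ℕ → Submodule k T} (hind : iSupIndep gr) {x y : A} {e : T}
    {d m s : ℕ} (hd : 1 ≤ d) (hx : x ^ d • e = 0) (hy : y ^ m • e = 0)
    (hgr : ∀ i j, i < d → j < m → (x ^ i * y ^ j) • e ∈ gr (s + i + j))
    (hli : LinearIndependent k (fun q : Fin d × Fin m => (x ^ (q.1 : ℕ) * y ^ (q.2 : ℕ)) • e)) :
    ∃ g : Fin (min d m) → T,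
      (∀ (j : Fin (min d m)) (i : ℕ), (x + y) ^ i • g j ∈ gr (s + j + i)) ∧
      (∀ j : Fin (min d m), (x + y) ^ (d + m - 1 - 2 * (j : ℕ)) • g j = 0) ∧
      ∀ q : Fin d × Fin m, (x ^ (q.1 : ℕ) * y ^ (q.2 : ℕ)) • e ∈ Submodule.span k (Set.range
        (fun q : Σ j : Fin (min d m), Fin (d + m - 1 - 2 * (j : ℕ)) =>
          (x + y) ^ (q.2 : ℕ) • g q.1)) := by
  classical
  have hz0 : ∀ i j, ¬ (i < d ∧ j < m) → (x ^ i * y ^ j) • e = 0 := by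
    intro i j h
    by_cases hi : i < d
    · rw [show j = (j - m) + m by omega, pow_add, ← mul_assoc, mul_smul, hy, smul_zero]
    · rw [show i = (i - d) + d by omega, pow_add, mul_comm, ← mul_assoc, mul_smul, hx, smul_zero]
  have hgr' : ∀ i j, (x ^ i * y ^ j) • e ∈ gr (s + i + j) := by
    intro i j
    by_cases h : i < d ∧ j < m
    · exact hgr i j h.1 h.2
    · rw [hz0 i j h]; exact Submodule.zero_mem _
  have hfm : ∀ D (p : Polynomial k), formAt x y e D p ∈ gr (s + D) := by
    intro D p
    refine Submodule.sum_mem _ fun i hi => Submodule.smul_mem _ _ ?_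
    have := Finset.mem_range.mp hi
    have h := hgr' i (D - i)
    rwa [show s + i + (D - i) = s + D by omega] at h
  choose P hP0 hPd hPc using fun j : Fin (min d m) =>
    core_exists (k := k) d j (d + m - 1 - 2 * (j : ℕ))
  have hjlt : ∀ j : Fin (min d m), (j : ℕ) < d ∧ (j : ℕ) < m := fun j =>
    ⟨lt_of_lt_of_le j.2 (min_le_left _ _), lt_of_lt_of_le j.2 (min_le_right _ _)⟩
  let g : Fin (min d m) → T := fun j => formAt x y e j (P j)
  have hg1 : ∀ (j : Fin (min d m)) (i : ℕ), (x + y) ^ i • g j ∈ gr (s + j + i) := by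
    intro j i
    simp only [g]
    rw [formAt_pow_smul _ _ _ _ _ _ (hPd j), add_assoc]
    exact hfm _ _
  have hg2 : ∀ j : Fin (min d m), (x + y) ^ (d + m - 1 - 2 * (j : ℕ)) • g j = 0 := by
    intro j
    simp only [g]
    rw [formAt_pow_smul _ _ _ _ _ _ (hPd j)]
    refine formAt_eq_zero hx hy fun i h1 h2 h3 => hPc j i ?_ h2
    have := hjlt j
    omega
  have hg3 : ∀ j : Fin (min d m), (x + y) ^ (d + m - 1 - 2 * (j : ℕ) - 1) • g j ≠ 0 := by
    intro j h0
    simp only [g] at h0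
    rw [formAt_pow_smul _ _ _ _ _ _ (hPd j)] at h0
    have := hjlt j
    refine hP0 j (core_injective this.1 this.2
      (a := d + m - 1 - 2 * (j : ℕ) - 1) (by omega) _ (hPd j) ?_)
    intro i h1 h2
    exact formAt_coeff hx hy hli h0 i (by omega) h2 (by omega)
  have hli2 := strings_li (k := k) (x + y) (fun j : Fin (min d m) => d + m - 1 - 2 * (j : ℕ)) g hg2
    (iSupIndep_li hind (fun j : Fin (min d m) => s + j + (d + m - 1 - 2 * (j : ℕ) - 1))
      (by
        intro j j' h
        have := hjlt j
        have := hjlt j'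
        ext
        simp only [] at h
        omega) _ (fun j => hg1 j _) hg3)
  refine ⟨g, hg1, hg2, fun q => ?_⟩
  set W := Submodule.span k (Set.range
    (fun q : Fin d × Fin m => (x ^ (q.1 : ℕ) * y ^ (q.2 : ℕ)) • e)) with hW
  have hWm : ∀ i j, (x ^ i * y ^ j) • e ∈ W := by
    intro i j
    by_cases h : i < d ∧ j < m
    · exact Submodule.subset_span ⟨(⟨i, h.1⟩, ⟨j, h.2⟩), rfl⟩
    · rw [hz0 i j h]; exact Submodule.zero_mem _
  have hle : Submodule.span k (Set.range
        (fun q : Σ j : Fin (min d m), Fin (d + m - 1 - 2 * (j : ℕ)) =>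
          (x + y) ^ (q.2 : ℕ) • g q.1)) ≤ W := by
    rw [Submodule.span_le]
    rintro _ ⟨⟨j, i⟩, rfl⟩
    simp only [g]
    rw [formAt_pow_smul _ _ _ _ _ _ (hPd j)]
    exact Submodule.sum_mem _ fun i hi => Submodule.smul_mem _ _ (hWm _ _)
  have : FiniteDimensional k W := FiniteDimensional.span_of_finite k (Set.finite_range _)
  have heq := Submodule.eq_of_le_of_finrank_eq hle (by
    rw [hW, finrank_span_eq_card hli2, finrank_span_eq_card hli]
    simp only [Fintype.card_sigma, Fintype.card_fin, Fintype.card_prod]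
    exact sum_len d m hd)
  rw [heq]
  exact hWm _ _

theorem tensor_decomp [CharZero k] {gr : ℕ → Submodule k T} (hind : iSupIndep gr) {x y : A}
    {Λ : Type*} [Fintype Λ] {iv dv : Λ → ℕ} {m : ℕ} {e : Λ → T} (hd : ∀ α, 1 ≤ dv α)
    (hx : ∀ α, x ^ dv α • e α = 0) (hy : ∀ α, y ^ m • e α = 0)
    (hgr : ∀ α i j, i < dv α → j < m → (x ^ i * y ^ j) • e α ∈ gr (iv α + i + j))
    (hli : LinearIndependent k (fun q : Σ α, Fin (dv α) × Fin m =>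
      (x ^ (q.2.1 : ℕ) * y ^ (q.2.2 : ℕ)) • e q.1))
    (hsp : Submodule.span k (Set.range (fun q : Σ α, Fin (dv α) × Fin m =>
      (x ^ (q.2.1 : ℕ) * y ^ (q.2.2 : ℕ)) • e q.1)) = ⊤) :
    ∃ g : (Σ α, Fin (min (dv α) m)) → T, IsDecomp gr (x + y)
      (fun q : Σ α, Fin (min (dv α) m) => iv q.1 + q.2)
      (fun q => dv q.1 + m - 1 - 2 * (q.2 : ℕ)) g := by
  classical
  choose g hg1 hg2 hg3 using fun α => tensor_one hind (hd α) (hx α) (hy α) (hgr α)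
    (hli.comp (fun q : Fin (dv α) × Fin m => (⟨α, q⟩ : Σ α, Fin (dv α) × Fin m))
      (fun a b h => eq_of_heq (Sigma.mk.inj_iff.mp h).2))
  have hspan : Submodule.span k (Set.range
      (fun q : Σ p : (Σ α, Fin (min (dv α) m)), Fin (dv p.1 + m - 1 - 2 * (p.2 : ℕ)) =>
        (x + y) ^ (q.2 : ℕ) • g q.1.1 q.1.2)) = ⊤ := by
    rw [eq_top_iff, ← hsp, Submodule.span_le]
    rintro _ ⟨⟨α, q⟩, rfl⟩
    refine Submodule.span_mono ?_ (hg3 α q)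
    rintro _ ⟨⟨j, i⟩, rfl⟩
    exact ⟨⟨⟨α, j⟩, i⟩, rfl⟩
  refine ⟨fun q => g q.1 q.2, ?_, ?_, ?_, ?_, hspan⟩
  · rintro ⟨α, j⟩
    have := lt_of_lt_of_le j.2 (min_le_left _ _)
    have := lt_of_lt_of_le j.2 (min_le_right _ _)
    simp only []
    omega
  · rintro ⟨α, j⟩ i _
    exact hg1 α j i
  · rintro ⟨α, j⟩
    exact hg2 α j
  · refine linearIndependent_of_top_le_span_of_card_eq_finrank hspan.ge ?_
    have h1 := Module.finrank_eq_card_basis (Module.Basis.mk hli hsp.ge)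
    rw [h1]
    simp only [Fintype.card_sigma, Fintype.card_fin, Fintype.card_prod]
    rw [Fintype.sum_sigma]
    exact Finset.sum_congr rfl fun α _ => sum_len _ _ (hd α)

end Tensor


section Families

/-- Polynomial families `k → E`. -/
def PF (k E : Type*) [Field k] [AddCommGroup E] [Module k E] : Submodule k (k → E) :=
  Submodule.span k {f | ∃ (i : ℕ) (c : E), f = fun t => t ^ i • c}

variable {k : Type*} [Field k] {E F G : Type*} [AddCommGroup E] [Module k E]
  [AddCommGroup F] [Module k F] [AddCommGroup G] [Module k G]

theorem PF.mono (i : ℕ) (c : E) : (fun t : k => t ^ i • c) ∈ PF k E :=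
  Submodule.subset_span ⟨i, c, rfl⟩

theorem PF.const (c : E) : (fun _ : k => c) ∈ PF k E := by
  have := PF.mono (k := k) 0 c
  simpa using this

theorem PF.zero' : (fun _ : k => (0 : E)) ∈ PF k E := Submodule.zero_mem _

theorem PF.add' {f g : k → E} (hf : f ∈ PF k E) (hg : g ∈ PF k E) :
    (fun t => f t + g t) ∈ PF k E := Submodule.add_mem _ hf hg

theorem PF.csmul' (a : k) {f : k → E} (hf : f ∈ PF k E) :
    (fun t => a • f t) ∈ PF k E := Submodule.smul_mem _ a hf

theorem PF.lin (φ : E →ₗ[k] F) {f : k → E} (hf : f ∈ PF k E) : (fun t => φ (f t)) ∈ PF k F := by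
  induction hf using Submodule.span_induction with
  | mem f h => obtain ⟨i, c, rfl⟩ := h; simpa using PF.mono i (φ c)
  | zero => simpa using PF.zero'
  | add f g _ _ h1 h2 => simpa using PF.add' h1 h2
  | smul a f _ h => simpa using PF.csmul' a h

theorem PF.bilin (B : E →ₗ[k] F →ₗ[k] G) {f : k → E} {g : k → F} (hf : f ∈ PF k E)
    (hg : g ∈ PF k F) : (fun t => B (f t) (g t)) ∈ PF k G := by
  induction hf using Submodule.span_induction with
  | mem f h =>
    obtain ⟨i, c, rfl⟩ := h
    induction hg using Submodule.span_induction with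
    | mem g h =>
      obtain ⟨j, c', rfl⟩ := h
      have := PF.mono (k := k) (i + j) (B c c')
      simpa [smul_smul, pow_add, mul_comm] using this
    | zero => simpa using PF.zero'
    | add f g _ _ h1 h2 =>
      have := PF.add' h1 h2
      simpa [smul_add] using this
    | smul a f _ h =>
      have := PF.csmul' a h
      convert this using 1
      ext t
      simp [smul_comm a]
  | zero => simpa using PF.zero'
  | add f g _ _ h1 h2 => simpa using PF.add' h1 h2
  | smul a f _ h => simpa using PF.csmul' a h

theorem PF.scalar {f : k → k} (hf : f ∈ PF k k) : ∃ P : Polynomial k, ∀ t, f t = P.eval t := by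
  induction hf using Submodule.span_induction with
  | mem f h =>
    obtain ⟨i, c, rfl⟩ := h
    exact ⟨Polynomial.X ^ i * Polynomial.C c, fun t => by simp; ring⟩
  | zero => exact ⟨0, by simp⟩
  | add f g _ _ h1 h2 =>
    obtain ⟨P, hP⟩ := h1
    obtain ⟨Q, hQ⟩ := h2
    exact ⟨P + Q, fun t => by simp [hP, hQ]⟩
  | smul a f _ h =>
    obtain ⟨P, hP⟩ := h
    exact ⟨Polynomial.C a * P, fun t => by simp [hP]⟩

theorem PF.eval_mem (P : Polynomial k) : (fun t => P.eval t) ∈ PF k k := by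
  induction P using Polynomial.induction_on' with
  | add p q hp hq => simpa using PF.add' hp hq
  | monomial n a =>
    have := PF.mono (k := k) n a
    simpa [mul_comm] using this

theorem PF.smul {f : k → k} {g : k → E} (hf : f ∈ PF k k) (hg : g ∈ PF k E) :
    (fun t => f t • g t) ∈ PF k E := by
  have := PF.bilin (LinearMap.lsmul k E) hf hg
  simpa using this

theorem PF.pow {A : Type*} [Ring A] [Algebra k A] {f : k → A} (hf : f ∈ PF k A) (n : ℕ) :
    (fun t => f t ^ n) ∈ PF k A := by
  induction n with
  | zero => simpa using PF.const (k := k) (1 : A)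
  | succ n ih =>
    have := PF.bilin (LinearMap.mul k A) ih hf
    simpa [pow_succ] using this

theorem PF.adj [FiniteDimensional k E] {f : k → Module.End k E} (hf : f ∈ PF k (Module.End k E)) :
    ∃ (P : Polynomial k) (Q : k → Module.End k E), Q ∈ PF k (Module.End k E) ∧
      (∀ t, LinearMap.det (f t) = P.eval t) ∧ ∀ t, f t * Q t = P.eval t • 1 := by
  classical
  let b := Module.finBasis k E
  let L := LinearMap.toMatrix b b
  have h1 : ∀ i j, ∃ P : Polynomial k, ∀ t, L (f t) i j = P.eval t := by
    intro i j
    exact PF.scalar (PF.lin ((Matrix.entryLinearMap k k i j) ∘ₗ L.toLinearMap) hf)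
  choose R hR using h1
  let RM : Matrix _ _ (Polynomial k) := Matrix.of R
  have hRM : ∀ t, L (f t) = RM.map (Polynomial.evalRingHom t) := by
    intro t; ext i j; simp [RM, hR]
  have hdet : ∀ t, LinearMap.det (f t) = RM.det.eval t := by
    intro t
    rw [← LinearMap.det_toMatrix b, show LinearMap.toMatrix b b (f t) = _ from hRM t]
    exact (RingHom.map_det (Polynomial.evalRingHom t) RM).symm
  refine ⟨RM.det, fun t => L.symm (RM.adjugate.map (Polynomial.evalRingHom t)), ?_, hdet, ?_⟩
  · refine PF.lin L.symm.toLinearMap (f := fun t => RM.adjugate.map (Polynomial.evalRingHom t)) ?_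
    have : (fun t => RM.adjugate.map (Polynomial.evalRingHom t)) =
        ∑ i, ∑ j, fun t => (RM.adjugate i j).eval t • Matrix.single i j (1 : k) := by
      ext t i j
      simp only [Finset.sum_apply, Matrix.sum_apply, Matrix.smul_apply, Matrix.map_apply]
      simp [Matrix.single_apply, ite_and]
    rw [this]
    exact Submodule.sum_mem _ fun i _ => Submodule.sum_mem _ fun j _ =>
      PF.smul (PF.eval_mem _) (PF.const _)
  · intro t
    apply L.injective
    rw [map_smul]
    simp only [L]
    rw [LinearMap.toMatrix_mul, LinearEquiv.apply_symm_apply, LinearMap.toMatrix_one,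
      show LinearMap.toMatrix b b (f t) = _ from hRM t, ← RingHom.mapMatrix_apply,
      ← RingHom.mapMatrix_apply, ← map_mul, Matrix.mul_adjugate]
    ext i j
    simp [Matrix.one_apply]
    split_ifs <;> simp

theorem PF.generic_det [FiniteDimensional k E] {f : k → Module.End k E}
    (hf : f ∈ PF k (Module.End k E)) {t₀ : k} (h0 : LinearMap.det (f t₀) ≠ 0) :
    ∃ P : Polynomial k, P ≠ 0 ∧ ∀ t, P.eval t ≠ 0 → LinearMap.det (f t) ≠ 0 := by
  obtain ⟨P, -, -, hP, -⟩ := PF.adj hf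
  refine ⟨P, ?_, fun t ht => by rwa [hP]⟩
  rintro rfl
  rw [hP] at h0; simp at h0

theorem bijective_of_det_ne [FiniteDimensional k E] {f : Module.End k E}
    (h : LinearMap.det f ≠ 0) : Function.Bijective f := by
  have := LinearMap.equivOfDetNeZero f h
  have hu : IsUnit f := (LinearMap.isUnit_iff_isUnit_det f).mpr (isUnit_iff_ne_zero.mpr h)
  exact (Module.End.isUnit_iff f).mp hu

theorem generic_inj_surj [FiniteDimensional k E] {φ : k → Module.End k E}
    (hφ : φ ∈ PF k (Module.End k E)) (U W : Submodule k E)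
    (hUW : ∀ t, ∀ x ∈ U, φ t x ∈ W) {t₀ : k}
    (h0 : (∀ x ∈ U, φ t₀ x = 0 → x = 0) ∨ (∀ w ∈ W, ∃ x ∈ U, φ t₀ x = w)) :
    ∃ P : Polynomial k, P ≠ 0 ∧ ∀ t, P.eval t ≠ 0 →
      ((∀ x ∈ U, φ t x = 0 → x = 0) ∨ (∀ w ∈ W, ∃ x ∈ U, φ t x = w)) := by
  rcases h0 with h0 | h0
  · obtain ⟨g, hg⟩ := LinearMap.exists_leftInverse_of_injective (φ t₀ ∘ₗ U.subtype) (by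
      rw [LinearMap.ker_eq_bot']
      rintro ⟨x, hx⟩ h
      exact Subtype.ext (h0 x hx h))
    have hF : (fun t => g ∘ₗ φ t ∘ₗ U.subtype) ∈ PF k (Module.End k U) :=
      PF.lin (LinearMap.llcomp k U E U g ∘ₗ (LinearMap.lcomp k E U.subtype)) hφ
    obtain ⟨P, hP, hPt⟩ := PF.generic_det hF (t₀ := t₀) (by
      rw [hg]; simp)
    refine ⟨P, hP, fun t ht => Or.inl fun x hx hx0 => ?_⟩
    have hb := (bijective_of_det_ne (hPt t ht)).1
    have := @hb ⟨x, hx⟩ 0 (by simp [hx0])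
    exact congrArg Subtype.val this
  · obtain ⟨π, hπ⟩ := LinearMap.exists_leftInverse_of_injective W.subtype
      (LinearMap.ker_eq_bot.mpr W.injective_subtype)
    have hπ' : ∀ w (hw : w ∈ W), π w = ⟨w, hw⟩ := fun w hw => LinearMap.congr_fun hπ ⟨w, hw⟩
    have hs : Function.Surjective (π ∘ₗ φ t₀ ∘ₗ U.subtype) := by
      rintro ⟨w, hw⟩
      obtain ⟨x, hx, hxw⟩ := h0 w hw
      exact ⟨⟨x, hx⟩, by simp [hxw, hπ' w hw]⟩
    obtain ⟨g, hg⟩ := LinearMap.exists_rightInverse_of_surjective _ (LinearMap.range_eq_top.mpr hs)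
    have hF : (fun t => (π ∘ₗ φ t) ∘ₗ (U.subtype ∘ₗ g)) ∈ PF k (Module.End k W) :=
      PF.lin ((LinearMap.lcomp k W (U.subtype ∘ₗ g)) ∘ₗ LinearMap.llcomp k E E W π) hφ
    obtain ⟨P, hP, hPt⟩ := PF.generic_det hF (t₀ := t₀) (by
      rw [show (π ∘ₗ φ t₀) ∘ₗ (U.subtype ∘ₗ g) = LinearMap.id from hg]; simp)
    refine ⟨P, hP, fun t ht => Or.inr fun w hw => ?_⟩
    obtain ⟨v, hv⟩ := (bijective_of_det_ne (hPt t ht)).2 ⟨w, hw⟩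
    refine ⟨g v, (g v).2, ?_⟩
    have h1 : π (φ t (g v)) = ⟨w, hw⟩ := hv
    rw [hπ' _ (hUW t _ (g v).2)] at h1
    exact congrArg Subtype.val h1

/-- Deforming a kernel vector of a surjective map. -/
theorem deform_kernel [FiniteDimensional k E] {φ : k → Module.End k E}
    (hφ : φ ∈ PF k (Module.End k E)) (U W : Submodule k E)
    (hUW : ∀ t, ∀ x ∈ U, φ t x ∈ W) 
    (h0 : ∀ w ∈ W, ∃ x ∈ U, φ 0 x = w) (e : E) (he : e ∈ U) (hker : φ 0 e = 0) :
    ∃ f : k → E, f ∈ PF k E ∧ f 0 = e ∧ (∀ t, f t ∈ U) ∧ ∀ t, φ t (f t) = 0 := by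
  obtain ⟨π, hπ⟩ := LinearMap.exists_leftInverse_of_injective W.subtype
    (LinearMap.ker_eq_bot.mpr W.injective_subtype)
  have hπ' : ∀ w (hw : w ∈ W), π w = ⟨w, hw⟩ := fun w hw => LinearMap.congr_fun hπ ⟨w, hw⟩
  have hs : Function.Surjective (π ∘ₗ φ 0 ∘ₗ U.subtype) := by
    rintro ⟨w, hw⟩
    obtain ⟨x, hx, hxw⟩ := h0 w hw
    exact ⟨⟨x, hx⟩, by simp [hxw, hπ' w hw]⟩
  obtain ⟨g, hg⟩ := LinearMap.exists_rightInverse_of_surjective _ (LinearMap.range_eq_top.mpr hs)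
  have hF : (fun t => (π ∘ₗ φ t) ∘ₗ (U.subtype ∘ₗ g)) ∈ PF k (Module.End k W) :=
    PF.lin ((LinearMap.lcomp k W (U.subtype ∘ₗ g)) ∘ₗ LinearMap.llcomp k E E W π) hφ
  obtain ⟨P, Q, hQ, hdet, hPQ⟩ := PF.adj hF
  have hP0 : P.eval 0 = 1 := by
    rw [← hdet, show (π ∘ₗ φ 0) ∘ₗ (U.subtype ∘ₗ g) = LinearMap.id from hg]; simp
  have hm : (fun t => (Q t) (π (φ t e))) ∈ PF k W := by
    have h1 : (fun t => π (φ t e)) ∈ PF k W := PF.lin (π ∘ₗ LinearMap.applyₗ e) hφ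
    exact PF.bilin LinearMap.id hQ h1
  refine ⟨fun t => P.eval t • e - (g (Q t (π (φ t e))) : U), ?_, ?_, ?_, ?_⟩
  · exact Submodule.sub_mem _ (PF.smul (PF.eval_mem P) (PF.const e))
      (PF.lin (U.subtype ∘ₗ g) hm)
  · simp [hP0, hker]
  · intro t
    exact Submodule.sub_mem _ (Submodule.smul_mem _ _ he) (Submodule.coe_mem _)
  · intro t
    have h1 := LinearMap.congr_fun (hPQ t) (π (φ t e))
    have h2 : π (φ t (g (Q t (π (φ t e))) : U)) = P.eval t • π (φ t e) := h1
    rw [hπ' _ (hUW t _ (Submodule.coe_mem _)), hπ' _ (hUW t _ he)] at h2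
    have h3 := congrArg Subtype.val h2
    simp only [Submodule.coe_smul] at h3
    rw [map_sub, map_smul, hπ' _ (hUW t _ he), h3, sub_self]

theorem generic_basis [FiniteDimensional k E] {ι : Type*} (v : ι → k → E)
    (hv : ∀ i, v i ∈ PF k E) (h1 : LinearIndependent k (fun i => v i 0))
    (h2 : Submodule.span k (Set.range (fun i => v i 0)) = ⊤) :
    ∃ P : Polynomial k, P ≠ 0 ∧ ∀ t, P.eval t ≠ 0 → LinearIndependent k (fun i => v i t) ∧
      Submodule.span k (Set.range (fun i => v i t)) = ⊤ := by
  classical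
  let b := Module.Basis.mk h1 h2.ge
  have : Fintype ι := Module.Basis.fintypeIndexOfRankLtAleph0 b (by
    exact Module.rank_lt_aleph0 k E)
  let f : k → Module.End k E := fun t => b.constr k (fun i => v i t)
  have hf : f ∈ PF k (Module.End k E) := by
    refine PF.lin (b.constr k).toLinearMap (f := fun t => fun i => v i t) ?_
    have : (fun t => fun i => v i t) = ∑ i, fun t => Pi.single (M := fun _ => E) i (v i t) := by
      ext t i
      simp [Finset.sum_apply, Pi.single_apply]
    rw [this]
    exact Submodule.sum_mem _ fun i _ => PF.lin (LinearMap.single k (fun _ => E) i) (hv i)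
  have hf0 : f 0 = LinearMap.id := by
    refine b.ext fun i => ?_
    rw [Module.Basis.constr_basis]
    simp [b]
  obtain ⟨P, hP, hPt⟩ := PF.generic_det hf (t₀ := 0) (by rw [hf0]; simp)
  refine ⟨P, hP, fun t ht => ?_⟩
  have hb := bijective_of_det_ne (hPt t ht)
  have hfb : (fun i => v i t) = f t ∘ b := by
    ext i; simp [f]
  rw [hfb]
  constructor
  · exact b.linearIndependent.map' _ (LinearMap.ker_eq_bot.mpr hb.1)
  · rw [Set.range_comp, ← Submodule.map_span, b.span_eq, Submodule.map_top,
      LinearMap.range_eq_top.mpr hb.2]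

theorem generic_decomp {A : Type*} [CommRing A] [Algebra k A] [Module A E] [IsScalarTower k A E]
    [FiniteDimensional k E] {gr : ℕ → Submodule k E} {l s : A}
    (hmap : ∀ (t : k) (d i : ℕ), ∀ x ∈ gr i, (l + t • s) ^ d • x ∈ gr (i + d))
    (hSL : IsSLAction gr l) {Λ : Type*} [Fintype Λ] {iv dv : Λ → ℕ} {e : Λ → E}
    (hdec : IsDecomp gr l iv dv e) :
    ∃ P : Polynomial k, P ≠ 0 ∧ ∀ t, P.eval t ≠ 0 →
      ∃ e' : Λ → E, IsDecomp gr (l + t • s) iv dv e' := by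
  classical
  have hA : (fun t : k => l + t • s) ∈ PF k A := by
    refine Submodule.add_mem _ (PF.const l) ?_
    simpa using PF.mono (k := k) 1 s
  have hpow : ∀ n, (fun t : k => Algebra.lsmul k k E ((l + t • s) ^ n)) ∈ PF k (Module.End k E) :=
    fun n => PF.lin (Algebra.lsmul k k E).toLinearMap (PF.pow hA n)
  have hmem : ∀ α, e α ∈ gr (iv α) := by
    intro α
    simpa using hdec.2.1 α 0 (hdec.1 α)
  have hex : ∀ α, ∃ f : k → E, f ∈ PF k E ∧ f 0 = e α ∧ (∀ t, f t ∈ gr (iv α)) ∧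
      ∀ t, (l + t • s) ^ dv α • f t = 0 := by
    intro α
    refine deform_kernel (hpow (dv α)) (gr (iv α)) (gr (iv α + dv α))
      (fun t x hx => hmap t _ _ x hx) ?_ (e α) (hmem α) ?_
    · rcases hSL (dv α) (iv α) with h | h
      · exfalso
        have := h _ (hmem α) (hdec.2.2.1 α)
        have h0 := hdec.2.2.2.1.ne_zero ⟨α, ⟨0, hdec.1 α⟩⟩
        simp [this] at h0
      · simpa only [zero_smul, add_zero, Algebra.lsmul_coe] using h
    · simpa only [zero_smul, add_zero, Algebra.lsmul_coe] using hdec.2.2.1 α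
  choose f hf hf0 hfm hfk using hex
  obtain ⟨P, hP, hPt⟩ := generic_basis
    (fun (q : Σ α : Λ, Fin (dv α)) t => (l + t • s) ^ (q.2 : ℕ) • f q.1 t)
    (fun q => PF.bilin LinearMap.id (hpow q.2) (hf q.1))
    (by simpa [hf0] using hdec.2.2.2.1) (by simpa [hf0] using hdec.2.2.2.2)
  refine ⟨P, hP, fun t ht => ⟨fun α => f α t, hdec.1, ?_, fun α => hfk α t, (hPt t ht).1,
    (hPt t ht).2⟩⟩
  intro α j _
  exact hmap t j _ _ (hfm α t)

end Families


section Trunc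

variable {k : Type*} [Field k] {n : ℕ} {M : Type*} [AddCommGroup M] [Module k M]
  [Module (MvPolynomial (Fin n) k) M] [IsScalarTower k (MvPolynomial (Fin n) k) M]

/-- The class of `x · y^j`. -/
noncomputable def sg (m j : ℕ) : M →ₗ[k] TruncExt k n M m where
  toFun x := Submodule.Quotient.mk (PolynomialModule.single (MvPolynomial (Fin n) k) j x)
  map_add' x y := by rw [PolynomialModule.single_add, Submodule.Quotient.mk_add]
  map_smul' c x := by
    rw [RingHom.id_apply, ← Submodule.Quotient.mk_smul]
    congr 1
    ext i
    change (Finsupp.single j (c • x)) i = (c • Finsupp.single j x) i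
    rw [Finsupp.smul_single]

theorem sg_apply (m j : ℕ) (x : M) : (sg m j x : TruncExt k n M m) =
    Submodule.Quotient.mk (PolynomialModule.single (MvPolynomial (Fin n) k) j x) := rfl

theorem monomial_smul_sg (m i j : ℕ) (r : MvPolynomial (Fin n) k) (x : M) :
    Polynomial.monomial i r • (sg m j x : TruncExt k n M m) = sg m (i + j) (r • x) := by
  rw [sg_apply, ← Submodule.Quotient.mk_smul, PolynomialModule.monomial_smul_single, sg_apply]

theorem X_pow_smul_trunc (m : ℕ) (t : TruncExt k n M m) :
    (Polynomial.X : Polynomial (MvPolynomial (Fin n) k)) ^ m • t = 0 := by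
  obtain ⟨t, rfl⟩ := Submodule.Quotient.mk_surjective _ t
  rw [← Submodule.Quotient.mk_smul, Submodule.Quotient.mk_eq_zero]
  exact Submodule.smul_mem_smul (Ideal.mem_span_singleton_self _) trivial

theorem sg_ge {m j : ℕ} (h : m ≤ j) (x : M) : (sg m j x : TruncExt k n M m) = 0 := by
  have h1 := X_pow_smul_trunc m (sg m (j - m) x : TruncExt k n M m)
  have h2 := monomial_smul_sg (k := k) (n := n) m m (j - m) 1 x
  rw [one_smul, show m + (j - m) = j by omega] at h2
  rw [← h2, ← h1, ← Polynomial.X_pow_eq_monomial]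

theorem trunc_induction {m : ℕ} {p : TruncExt k n M m → Prop} (t : TruncExt k n M m)
    (h0 : p 0) (hadd : ∀ x y, p x → p y → p (x + y)) (hs : ∀ j x, p (sg m j x)) : p t := by
  obtain ⟨t, rfl⟩ := Submodule.Quotient.mk_surjective _ t
  induction t using PolynomialModule.induction_linear with
  | zero => simpa using h0
  | add x y hx hy => rw [Submodule.Quotient.mk_add]; exact hadd _ _ hx hy
  | single j x => exact hs j x

/-- Coefficients of polynomials in `M[y]`. -/
noncomputable def cf (k : Type*) [Field k] (n : ℕ) (M : Type*) [AddCommGroup M] [Module k M]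
    [Module (MvPolynomial (Fin n) k) M] [IsScalarTower k (MvPolynomial (Fin n) k) M] (m : ℕ) :
    PolynomialModule (MvPolynomial (Fin n) k) M →ₗ[k] (Fin m → M) where
  toFun p j := p.coeff j
  map_add' x y := by ext; simp
  map_smul' c x := rfl

theorem cf_ker (m : ℕ) : (Ideal.span {(Polynomial.X : Polynomial (MvPolynomial (Fin n) k)) ^ m} •
      (⊤ : Submodule (Polynomial (MvPolynomial (Fin n) k))
        (PolynomialModule (MvPolynomial (Fin n) k) M))).restrictScalars k ≤
          LinearMap.ker (cf k n M m) := by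
  intro p hp
  rw [Submodule.restrictScalars_mem, Submodule.ideal_span_singleton_smul] at hp
  obtain ⟨q, -, rfl⟩ := hp
  rw [LinearMap.mem_ker]
  ext j
  change ((Polynomial.X : Polynomial (MvPolynomial (Fin n) k)) ^ m • q).coeff j = 0
  rw [Polynomial.X_pow_eq_monomial, PolynomialModule.monomial_smul_apply, if_neg]
  have := j.2
  omega

noncomputable def cfT (k : Type*) [Field k] (n : ℕ) (M : Type*) [AddCommGroup M] [Module k M]
    [Module (MvPolynomial (Fin n) k) M] [IsScalarTower k (MvPolynomial (Fin n) k) M] (m : ℕ) :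
    TruncExt k n M m →ₗ[k] (Fin m → M) :=
  (Submodule.liftQ _ (cf k n M m) (cf_ker m)) ∘ₗ
    (Submodule.Quotient.restrictScalarsEquiv k _).symm.toLinearMap

theorem cfT_sg (m i : ℕ) (x : M) (j : Fin m) :
    cfT k n M m (sg m i x) j = if i = j then x else 0 := by
  change (PolynomialModule.single (MvPolynomial (Fin n) k) i x).coeff j = _
  rw [PolynomialModule.coeff_single, Finsupp.single_apply]

/-- `TruncExt` as a finite power of `M`. -/
noncomputable def TE (k : Type*) [Field k] (n : ℕ) (M : Type*) [AddCommGroup M] [Module k M]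
    [Module (MvPolynomial (Fin n) k) M] [IsScalarTower k (MvPolynomial (Fin n) k) M] (m : ℕ) :
    TruncExt k n M m ≃ₗ[k] (Fin m → M) :=
  LinearEquiv.ofLinearMap (cfT k n M m) (∑ j : Fin m, sg m j ∘ₗ LinearMap.proj j)
    (by
      refine LinearMap.ext fun f => funext fun j => ?_
      simp [map_sum, Finset.sum_apply, cfT_sg, Fin.val_inj])
    (by
      refine LinearMap.ext fun t => ?_
      induction t using trunc_induction with
      | h0 => simp
      | hadd x y hx hy => rw [map_add, map_add, hx, hy]
      | hs i x =>
        simp only [LinearMap.comp_apply, LinearMap.sum_apply, LinearMap.proj_apply, cfT_sg,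
          LinearMap.id_apply]
        by_cases h : i < m
        · rw [Finset.sum_eq_single ⟨i, h⟩]
          · simp
          · intro j _ hj
            rw [if_neg, map_zero]
            intro h; exact hj (Fin.ext h.symm)
          · simp
        · rw [sg_ge (by omega)]
          refine Finset.sum_eq_zero fun j _ => ?_
          rw [if_neg, map_zero]
          have := j.2
          omega)

theorem TE_sg (m i : ℕ) (x : M) (j : Fin m) :
    TE k n M m (sg m i x) j = if i = j then x else 0 := cfT_sg m i x j

theorem TE_sg' (m : ℕ) (x : M) (j : Fin m) : TE k n M m (sg m j x) = Pi.single j x := by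
  ext i
  rw [TE_sg, Pi.single_apply]
  simp [Fin.ext_iff, eq_comm]

instance trunc_fd (m : ℕ) [FiniteDimensional k M] : FiniteDimensional k (TruncExt k n M m) :=
  Module.Finite.equiv (TE k n M m).symm

variable {gr : ℕ → Submodule k M}

theorem sg_mem {m j D : ℕ} {x : M} (hj : j ≤ D) (hx : x ∈ gr (D - j)) :
    (sg m j x : TruncExt k n M m) ∈ truncGr n gr m D :=
  Submodule.subset_span ⟨j, x, hj, hx, rfl⟩

theorem trunc_map {m D : ℕ} {r : MvPolynomial (Fin n) k} {c : k}
    (hr : ∀ i, ∀ x ∈ gr i, r • x ∈ gr (i + 1)) {t : TruncExt k n M m}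
    (ht : t ∈ truncGr n gr m D) :
    (Polynomial.C r + Polynomial.C (MvPolynomial.C c) * Polynomial.X) • t ∈
      truncGr n gr m (D + 1) := by
  induction ht using Submodule.span_induction with
  | mem t h =>
    obtain ⟨j, x, hj, hx, rfl⟩ := h
    rw [← sg_apply, add_smul, ← Polynomial.monomial_zero_left, Polynomial.C_mul_X_eq_monomial,
      monomial_smul_sg, monomial_smul_sg]
    refine Submodule.add_mem _ (sg_mem (by omega) ?_) (sg_mem (by omega) ?_)
    · rw [show D + 1 - (0 + j) = D - j + 1 by omega]
      exact hr _ _ hx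
    · rw [show D + 1 - (1 + j) = D - j by omega, ← MvPolynomial.algebraMap_eq, algebraMap_smul]
      exact Submodule.smul_mem _ _ hx
  | zero => rw [smul_zero]; exact Submodule.zero_mem _
  | add x y _ _ hx hy => rw [smul_add]; exact Submodule.add_mem _ hx hy
  | smul a x _ hx => 
    have h1 := smul_k_comm (k := k)
      (Polynomial.C r + Polynomial.C (MvPolynomial.C c) * Polynomial.X) a x
    rw [h1]; exact Submodule.smul_mem _ _ hx

theorem trunc_map_pow {m : ℕ} {r : MvPolynomial (Fin n) k} {c : k}
    (hr : ∀ i, ∀ x ∈ gr i, r • x ∈ gr (i + 1)) (a D : ℕ) {t : TruncExt k n M m}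
    (ht : t ∈ truncGr n gr m D) :
    (Polynomial.C r + Polynomial.C (MvPolynomial.C c) * Polynomial.X) ^ a • t ∈
      truncGr n gr m (D + a) := by
  induction a with
  | zero => simpa using ht
  | succ a ih =>
    rw [pow_succ', mul_smul, ← add_assoc]
    exact trunc_map hr ih

theorem truncGr_le {m D : ℕ} {t : TruncExt k n M m} (ht : t ∈ truncGr n gr m D) (j : Fin m) :
    (if (j : ℕ) ≤ D then TE k n M m t j ∈ gr (D - j) else TE k n M m t j = 0) := by
  induction ht using Submodule.span_induction with
  | mem t h =>
    obtain ⟨i, x, hi, hx, rfl⟩ := h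
    rw [← sg_apply, TE_sg]
    split_ifs with h1 h2 h2
    · rwa [← h2]
    · exact Submodule.zero_mem _
    · omega
    · rfl
  | zero => split_ifs <;> simp
  | add x y _ _ hx hy =>
    split_ifs at * with h
    · simpa using Submodule.add_mem _ hx hy
    · simp [hx, hy]
  | smul a x _ hx =>
    split_ifs at * with h
    · simpa using Submodule.smul_mem _ a hx
    · simp [hx]

theorem trunc_indep (hind : iSupIndep gr) (m : ℕ) :
    iSupIndep (truncGr n gr m : ℕ → Submodule k (TruncExt k n M m)) := by
  intro D
  rw [Submodule.disjoint_def]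
  intro t h1 h2
  apply (TE k n M m).injective
  rw [map_zero]
  ext j
  have h3 := truncGr_le h1 j
  split_ifs at h3 with h
  · refine (Submodule.disjoint_def.mp (hind (D - j))) _ h3 ?_
    have h4 : (⨆ i, ⨆ (_ : i ≠ D), (truncGr n gr m i : Submodule k (TruncExt k n M m))) ≤
        (⨆ i, ⨆ (_ : i ≠ D - j), gr i).comap (LinearMap.proj j ∘ₗ (TE k n M m).toLinearMap) := by
      refine iSup₂_le fun i hi x hx => ?_
      have h5 := truncGr_le hx j
      rw [Submodule.mem_comap]
      change TE k n M m x j ∈ _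
      split_ifs at h5 with h6
      · exact Submodule.mem_iSup_of_mem (i - j) (Submodule.mem_iSup_of_mem (by omega) h5)
      · rw [h5]; exact Submodule.zero_mem _
    exact h4 h2
  · exact h3

theorem mono_smul_sg (m i j : ℕ) (r : MvPolynomial (Fin n) k) (c : k) (x : M) :
    ((Polynomial.C r) ^ i * (Polynomial.C (MvPolynomial.C c) * Polynomial.X) ^ j) •
      (sg m 0 x : TruncExt k n M m) = sg m j (c ^ j • r ^ i • x) := by
  have : ((Polynomial.C r) ^ i * (Polynomial.C (MvPolynomial.C c) * Polynomial.X) ^ j) =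
      Polynomial.monomial j (MvPolynomial.C (c ^ j) * r ^ i) := by
    rw [← Polynomial.C_mul_X_pow_eq_monomial, mul_pow, Polynomial.C_mul, MvPolynomial.C_pow,
      Polynomial.C_pow, Polynomial.C_pow]
    ring
  rw [this, monomial_smul_sg, mul_smul, ← MvPolynomial.algebraMap_eq, algebraMap_smul, add_zero]

theorem trunc_decomp [CharZero k] (hind : iSupIndep gr) {r : MvPolynomial (Fin n) k} {c : k}
    (hc : c ≠ 0) {Λ : Type*} [Fintype Λ] {iv dv : Λ → ℕ} {e : Λ → M}
    (h : IsDecomp gr r iv dv e) (m : ℕ) :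
    ∃ g : (Σ α, Fin (min (dv α) m)) → TruncExt k n M m,
      IsDecomp (truncGr n gr m)
        (Polynomial.C r + Polynomial.C (MvPolynomial.C c) * Polynomial.X)
        (fun q => iv q.1 + q.2) (fun q => dv q.1 + m - 1 - 2 * (q.2 : ℕ)) g := by
  classical
  let b := Module.Basis.mk h.2.2.2.1 h.2.2.2.2.ge
  let B := ((Pi.basis (fun _ : Fin m => b)).unitsSMul
    (fun q => (Units.mk0 c hc) ^ (q.1 : ℕ))).map (TE k n M m).symm
  have hB : ∀ (α : Λ) (i : Fin (dv α)) (j : Fin m), B ⟨j, ⟨α, i⟩⟩ =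
      ((Polynomial.C r) ^ (i : ℕ) * (Polynomial.C (MvPolynomial.C c) * Polynomial.X) ^ (j : ℕ)) •
      (sg m 0 (e α) : TruncExt k n M m) := by
    intro α i j
    rw [mono_smul_sg]
    apply (TE k n M m).injective
    rw [TE_sg']
    simp only [B, Module.Basis.map_apply, LinearEquiv.apply_symm_apply,
      Module.Basis.unitsSMul_apply, Pi.basis_apply, b, Module.Basis.mk_apply]
    ext i
    simp [Pi.single_apply, Units.smul_def]
  let σ : (Σ _ : Fin m, Σ α : Λ, Fin (dv α)) ≃ Σ α : Λ, Fin (dv α) × Fin m :=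
    { toFun := fun q => ⟨q.2.1, q.2.2, q.1⟩
      invFun := fun q => ⟨q.2.2, q.1, q.2.1⟩
      left_inv := fun _ => rfl
      right_inv := fun _ => rfl }
  have hB' : ⇑(B.reindex σ) = fun q : Σ α : Λ, Fin (dv α) × Fin m =>
      ((Polynomial.C r) ^ (q.2.1 : ℕ) *
        (Polynomial.C (MvPolynomial.C c) * Polynomial.X) ^ (q.2.2 : ℕ)) •
      (sg m 0 (e q.1) : TruncExt k n M m) := by
    ext q
    rw [Module.Basis.reindex_apply]
    exact hB q.1 q.2.1 q.2.2
  refine tensor_decomp (trunc_indep hind m) (e := fun α => sg m 0 (e α)) h.1 ?_ ?_ ?_ ?_ ?_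
  · intro α
    have := mono_smul_sg m (dv α) 0 r c (e α)
    rw [pow_zero, mul_one] at this
    rw [this, h.2.2.1 α]
    simp
  · intro α
    rw [mul_pow, mul_smul, X_pow_smul_trunc, smul_zero]
  · intro α i j hi hj
    rw [mono_smul_sg]
    refine sg_mem (by omega) ?_
    rw [show iv α + i + j - j = iv α + i by omega]
    exact Submodule.smul_mem _ _ (h.2.1 α i hi)
  · rw [← hB']; exact (B.reindex σ).linearIndependent
  · rw [← hB']; exact (B.reindex σ).span_eq

end Trunc


theorem bad_pair {i1 d1 i2 d2 : ℕ} (h1 : 1 ≤ d1) (h2 : 1 ≤ d2) (h : i1 < i2)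
    (h' : i1 + d1 < i2 + d2) : ∃ a D : ℕ, i1 ≤ D ∧ D < i1 + d1 ∧ i1 + d1 ≤ D + a ∧
      D < i2 ∧ i2 ≤ D + a ∧ D + a < i2 + d2 := by
  refine ⟨max (i1 + d1) i2 - min (i1 + d1 - 1) (i2 - 1), min (i1 + d1 - 1) (i2 - 1), ?_⟩
  omega

theorem PF.affine {k E : Type*} [Field k] [AddCommGroup E] [Module k E] (a b : E) :
    (fun t : k => a + t • b) ∈ PF k E := by
  refine PF.add' (PF.const a) ?_
  simpa using PF.mono (k := k) 1 b

section Final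

variable {k : Type} [Field k] [CharZero k] {n : ℕ} {M : Type} [AddCommGroup M]
    [Module k M] [Module (MvPolynomial (Fin n) k) M]
    [IsScalarTower k (MvPolynomial (Fin n) k) M] [FiniteDimensional k M]

theorem no_bad {gr : ℕ → Submodule k M} (hgr : IsGrading k n gr)
    {l : MvPolynomial (Fin n) k} (hl : l ∈ homogeneousSubmodule (Fin n) k 1)
    (hSL : IsSLAction gr l)
    {Λ : Type} [Fintype Λ] {iv dv : Λ → ℕ} {e : Λ → M}
    (hdec : IsDecomp gr l iv dv e) (m : ℕ) {w : Polynomial (MvPolynomial (Fin n) k)}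
    (hw : IsLinearFormExt w) (hwSL : IsSLAction (truncGr n gr m) w)
    (p q : Σ α, Fin (min (dv α) m)) (h1 : iv p.1 + p.2 < iv q.1 + q.2)
    (h2 : iv p.1 + p.2 + (dv p.1 + m - 1 - 2 * p.2) <
      iv q.1 + q.2 + (dv q.1 + m - 1 - 2 * q.2)) : False := by
  obtain ⟨r, c, hr, rfl⟩ := hw
  have hp := p.2.2
  have hq := q.2.2
  obtain ⟨a, D, hb⟩ := bad_pair (by omega) (by omega) h1 h2
  have hind : iSupIndep gr := hgr.1.submodule_iSupIndep
  have hr1 : ∀ t : k, l + t • (r - l) ∈ homogeneousSubmodule (Fin n) k 1 := fun t =>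
    Submodule.add_mem _ hl (Submodule.smul_mem _ _ (Submodule.sub_mem _ hr hl))
  have hrm : ∀ t : k, ∀ i, ∀ x ∈ gr i, (l + t • (r - l)) • x ∈ gr (i + 1) := by
    intro t i x hx
    rw [add_comm i]
    exact hgr.2 1 i _ (hr1 t) x hx
  obtain ⟨P, hP, hPt⟩ := generic_decomp (s := r - l) (gr := gr) (l := l) (by
    intro t d i x hx
    induction d with
    | zero => simpa using hx
    | succ d ih =>
      rw [pow_succ', mul_smul, ← add_assoc]
      exact hrm t _ _ ih) hSL hdec
  let W : k → Polynomial (MvPolynomial (Fin n) k) := fun t =>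
    Polynomial.C (l + t • (r - l)) +
      Polynomial.C (MvPolynomial.C (1 + t * (c - 1))) * Polynomial.X
  have hW : ∀ t, W t = (Polynomial.C l + Polynomial.X) + t • (Polynomial.C (r - l) +
      Polynomial.C (MvPolynomial.C (c - 1)) * Polynomial.X) := by
    intro t
    simp only [W]
    rw [smul_add, ← smul_mul_assoc, Polynomial.smul_C, Polynomial.smul_C,
      MvPolynomial.smul_eq_C_mul, MvPolynomial.smul_eq_C_mul]
    simp only [map_add, map_mul, map_one]
    ring
  have hPF : W ∈ PF k (Polynomial (MvPolynomial (Fin n) k)) := by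
    have : W = fun t => (Polynomial.C l + Polynomial.X) + t • (Polynomial.C (r - l) +
      Polynomial.C (MvPolynomial.C (c - 1)) * Polynomial.X) := funext hW
    rw [this]
    exact PF.affine _ _
  have hpow : (fun t : k => Algebra.lsmul k k (TruncExt k n M m) (W t ^ a)) ∈
      PF k (Module.End k (TruncExt k n M m)) :=
    PF.lin (Algebra.lsmul k k (TruncExt k n M m)).toLinearMap (PF.pow hPF a)
  have hW1 : W 1 = Polynomial.C r + Polynomial.C (MvPolynomial.C c) * Polynomial.X := by
    simp [W]
  obtain ⟨Q, hQ, hQt⟩ := generic_inj_surj hpow (truncGr n gr m D) (truncGr n gr m (D + a))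
    (fun t x hx => trunc_map_pow (hrm t) a D hx) (t₀ := 1) (by
      simp only [hW1, Algebra.lsmul_coe]
      exact hwSL a D)
  let Z : Polynomial k := 1 + Polynomial.X * Polynomial.C (c - 1)
  have hZ : Z ≠ 0 := by
    intro h
    have : Z.eval 0 = 0 := by rw [h]; simp
    simp [Z] at this
  obtain ⟨t, ht⟩ := Polynomial.exists_eval_ne_zero_of_natDegree_lt_card (P * Q * Z)
    (mul_ne_zero (mul_ne_zero hP hQ) hZ) (by
      exact lt_of_lt_of_le (Cardinal.natCast_lt_aleph0) (Cardinal.aleph0_le_mk k))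
  rw [Polynomial.eval_mul, Polynomial.eval_mul] at ht
  have hPn := left_ne_zero_of_mul (left_ne_zero_of_mul ht)
  have hQn := right_ne_zero_of_mul (left_ne_zero_of_mul ht)
  have hZn : 1 + t * (c - 1) ≠ 0 := by
    have := right_ne_zero_of_mul ht
    simpa [Z] using this
  obtain ⟨e', he'⟩ := hPt t hPn
  obtain ⟨g, hg⟩ := trunc_decomp hind hZn he' m
  exact not_SL_of_strings hg (p := p) (q := q) hb.1 hb.2.1 hb.2.2.1 hb.2.2.2.1 hb.2.2.2.2.1
    hb.2.2.2.2.2 (hQt t hQn)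

end Final


/-- Let `l ∈ R_1` be a strong Lefschetz element for `M`, `S = k[l]`, with
decomposition `M ≅ ⊕_{α ∈ Λ} S(-i_α)/(l^{d_α})` as a graded `S`-module.  Then the graded
`R[y]`-module `M ⊗_k k[y]/(y^m)` has the strong Lefschetz property for all `m ≥ 0` if and
only if the decomposition of `M` is almost centered; and in this case `l + y` is a strong
Lefschetz element of `M ⊗_k k[y]/(y^m)` for every `m ≥ 0`. -/
theorem statement4 {k : Type} [Field k] [CharZero k] {n : ℕ} {M : Type} [AddCommGroup M]
    [Module k M] [Module (MvPolynomial (Fin n) k) M]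
    [IsScalarTower k (MvPolynomial (Fin n) k) M]
    [Module.Finite (MvPolynomial (Fin n) k) M] [FiniteDimensional k M]
    (gr : ℕ → Submodule k M) (hgr : IsGrading k n gr)
    (l : MvPolynomial (Fin n) k) (hl : l ∈ homogeneousSubmodule (Fin n) k 1)
    (hSL : IsSLAction gr l)
    {Λ : Type} [Fintype Λ] (iv dv : Λ → ℕ) (e : Λ → M)
    (hdec : IsDecomp gr l iv dv e) :
    ((∀ m : ℕ, ∃ w : Polynomial (MvPolynomial (Fin n) k),
        IsLinearFormExt w ∧ IsSLAction (truncGr n gr m) w) ↔ AlmostCentered iv dv) ∧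
      (AlmostCentered iv dv →
        ∀ m : ℕ, IsSLAction (truncGr n gr m) (Polynomial.C l + Polynomial.X)) := by
  have hlast : AlmostCentered iv dv →
        ∀ m : ℕ, IsSLAction (truncGr n gr m) (Polynomial.C l + Polynomial.X) := by
    intro hac m
    have hind : iSupIndep gr := hgr.1.submodule_iSupIndep
    obtain ⟨g, hg⟩ := trunc_decomp hind (one_ne_zero (α := k)) hdec m
    rw [map_one, map_one, one_mul] at hg
    refine SL_of_nested (trunc_indep hind m) hg ?_
    rintro ⟨α, i, hi⟩ ⟨β, j, hj⟩ h1 h2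
    simp only at h1 h2
    have hn : ∀ p q, ¬ (iv p < iv q ∧ iv p + dv p < iv q + dv q) := by
      rintro p q ⟨h1, h2⟩
      obtain ⟨a, D, hb⟩ := bad_pair (hdec.1 p) (hdec.1 q) h1 h2
      exact not_SL_of_strings hdec hb.1 hb.2.1 hb.2.2.1 hb.2.2.2.1 hb.2.2.2.2.1
        hb.2.2.2.2.2 (hSL a D)
    have n1 := hn α β
    have n2 := hn β α
    have a1 := hac α β
    have a2 := hac β α
    simp only [Prec, abs_le] at a1 a2
    omega
  refine ⟨⟨?_, fun hac m => ⟨Polynomial.C l + Polynomial.X, ⟨l, 1, hl, by simp⟩,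
    hlast hac m⟩⟩, hlast⟩
  intro h α β hprec
  obtain ⟨w, hw, hwSL⟩ := h (dv α)
  obtain ⟨hp1, hp2⟩ := hprec
  have hdα := hdec.1 α
  have hdβ := hdec.1 β
  by_contra hcon
  rw [abs_le, not_and_or] at hcon
  rcases hcon with hcon | hcon
  · refine no_bad hgr hl hSL hdec (dv α) hw hwSL ⟨β, ⟨0, by omega⟩⟩
      ⟨α, ⟨iv β - iv α + 1, by omega⟩⟩ ?_ ?_
    · simp only; omega
    · simp only; omega
  · refine no_bad hgr hl hSL hdec (dv α) hw hwSL
      ⟨α, ⟨(dv α + iv α) - (dv β + iv β) + 1, by omega⟩⟩ ⟨β, ⟨0, by omega⟩⟩ ?_ ?_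
    · simp only; omega
    · simp only; omega
end

section
/- Let l ∈ R_1 be a strong Lefschetz element for the R-module M and set S = k[l]. If the decomposition of M as a graded S-module is almost centered, then for every m ≥ 0 the decomposition of M ⊗_k k[y]/(y^m) as a graded k[l+y]-module is almost centered. -/
open MvPolynomial TensorProduct

section
variable {k : Type} [Field k] [CharZero k] {V : Type} [AddCommGroup V] [Module k V]

theorem aux_low (E F H : Module.End k V) (hEF : ∀ v, E (F v) - F (E v) = H v)
    (hHE : ∀ v, H (E v) = E (H v) + (2:k) • E v) (hHF : ∀ v, H (F v) = F (H v) - (2:k) • F v) :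
    ∀ (N : ℕ) (v : V) (w a : ℕ), H v = (-(w:k)) • v → (F ^ N) v = 0 → (E ^ a) v = 0 → a ≤ w →
      v = 0 := by
  have hHEp : ∀ (b : ℕ) (v : V) (c : k), H v = c • v → H ((E ^ b) v) = (c + 2 * b) • (E ^ b) v := by
    intro b v c hv
    induction b with
    | zero => simpa using hv
    | succ b ih =>
      rw [pow_succ', Module.End.mul_apply, hHE, ih, map_smul, ← add_smul]
      congr 1; push_cast; ring
  have hFE : ∀ (b : ℕ) (v : V) (c : k), H v = c • v →
      (E ^ b) (F v) = F ((E ^ b) v) + ((b:k) * (c + b - 1)) • (E ^ (b-1)) v := by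
    intro b v c hv
    induction b with
    | zero => simp
    | succ b ih =>
      rw [pow_succ', Module.End.mul_apply, ih, map_add, map_smul]
      have h1 := hEF ((E ^ b) v)
      rw [hHEp b v c hv] at h1
      rw [sub_eq_iff_eq_add] at h1
      rw [h1, Module.End.mul_apply]
      rcases b with _ | b
      · simp; abel
      · have : E ((E ^ (b+1-1)) v) = (E ^ (b+1)) v := by
          rw [Nat.add_sub_cancel, pow_succ', Module.End.mul_apply]
        rw [this]
        simp only [Nat.add_sub_cancel]
        push_cast
        module
  intro N
  induction N with
  | zero => intro v w a _ h _ _; simpa using h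
  | succ N ih =>
    intro v w a hv hF hE haw
    have hFv : F v = 0 := by
      refine ih (F v) (w + 2) (a + 1) ?_ ?_ ?_ (by omega)
      · rw [hHF, hv, map_smul]; push_cast; module
      · rw [pow_succ, Module.End.mul_apply] at hF; exact hF
      · rw [hFE (a+1) v _ hv, Nat.add_sub_cancel, hE, pow_succ', Module.End.mul_apply, hE]; simp
    clear hF
    induction a with
    | zero => simpa using hE
    | succ a iha =>
      refine iha ?_ (by omega)
      have h := hFE (a+1) v _ hv
      rw [hE, hFv, map_zero, map_zero, zero_add, Nat.add_sub_cancel] at h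
      rcases smul_eq_zero.mp h.symm with h | h
      · exfalso
        rcases mul_eq_zero.mp h with h | h
        · exact Nat.cast_ne_zero.mpr (Nat.succ_ne_zero a) h
        · have : (a:k) = w := by push_cast at h; linear_combination h
          have := Nat.cast_injective this
          omega
      · exact h

theorem aux_up (E F H : Module.End k V) (hEF : ∀ v, E (F v) - F (E v) = H v)
    (hHF : ∀ v, H (F v) = F (H v) - (2:k) • F v)
    (u : V) (w a : ℕ) (hu : H u = (w:k) • u) (hE : E u = 0) (haw : a ≤ w) :
    ∃ x, (E ^ a) x = u := by
  have hHFp : ∀ b : ℕ, H ((F ^ b) u) = ((w:k) - 2 * b) • (F ^ b) u := by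
    intro b
    induction b with
    | zero => simpa using hu
    | succ b ih =>
      rw [pow_succ', Module.End.mul_apply, hHF, ih, map_smul]
      push_cast; module
  have hEFp : ∀ b : ℕ, E ((F ^ (b+1)) u) = (((b:k)+1) * (w - b)) • (F ^ b) u := by
    intro b
    induction b with
    | zero =>
      have := hEF u
      rw [hE, map_zero, sub_zero, hu] at this
      simpa using this
    | succ b ih =>
      have h := hEF ((F ^ (b+1)) u)
      rw [ih, hHFp, sub_eq_iff_eq_add, map_smul] at h
      rw [pow_succ' F (b+1), Module.End.mul_apply, h]
      rw [← Module.End.mul_apply, ← pow_succ']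
      push_cast; module
  have : ∃ c : k, c ≠ 0 ∧ (E ^ a) ((F ^ a) u) = c • u := by
    induction a with
    | zero => exact ⟨1, one_ne_zero, by simp⟩
    | succ a ih =>
      obtain ⟨c, hc, h⟩ := ih (by omega)
      refine ⟨((a:k)+1) * (w - a) * c, mul_ne_zero (mul_ne_zero (Nat.cast_add_one_ne_zero a) ?_) hc, ?_⟩
      · rw [sub_ne_zero]
        intro h; have := Nat.cast_injective h; omega
      · rw [pow_succ E, Module.End.mul_apply, hEFp, map_smul, h, smul_smul]
  obtain ⟨c, hc, h⟩ := this
  exact ⟨c⁻¹ • (F ^ a) u, by rw [map_smul, h, smul_smul, inv_mul_cancel₀ hc, one_smul]⟩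

theorem aux_nilp [FiniteDimensional k V] (D F : Module.End k V)
    (hDF : ∀ v, D (F v) = F (D v) - F v) (v : V) (i : k) (hv : D v = i • v) :
    ∃ N, (F ^ N) v = 0 := by
  by_contra! hne
  have hp : ∀ N : ℕ, D ((F ^ N) v) = (i - N) • (F ^ N) v := by
    intro N
    induction N with
    | zero => simpa using hv
    | succ N ih =>
      rw [pow_succ', Module.End.mul_apply, hDF, ih, map_smul]; push_cast; module
  have hfin := Module.End.finite_hasEigenvalue D
  have hinj : Function.Injective (fun N : ℕ => i - (N:k)) := by
    intro a b h; simpa using h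
  refine Set.infinite_of_injective_forall_mem hinj (fun N => ?_) hfin
  exact Module.End.hasEigenvalue_of_hasEigenvector (x := (F ^ N) v)
    ⟨Module.End.mem_eigenspace_iff.mpr (hp N), hne N⟩
end

theorem decomp_not_range {k A T : Type} [Field k] [CommRing A] [AddCommGroup T] [Module k T]
    [Module A T] [SMulCommClass A k T] (gr : ℕ → Submodule k T) (z : A) {Λ : Type} (iv dv : Λ → ℕ)
    (e : Λ → T) (h : IsDecomp gr z iv dv e) (α : Λ) (a : ℕ) (ha : dv α ≤ a) (x : T) :
    z ^ a • x ≠ z ^ (dv α - 1) • e α := by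
  obtain ⟨h1, h2, h3, h4, h5⟩ := h
  let b := Module.Basis.mk h4 h5.ge
  have hb : ∀ q, b q = z ^ (q.2 : ℕ) • e q.1 := fun q => by simp [b]
  classical
  have hd := h1 α
  let q0 : Σ α : Λ, Fin (dv α) := ⟨α, ⟨dv α - 1, by omega⟩⟩
  have key : (b.coord q0) ∘ₗ (DistribSMul.toLinearMap k T (z ^ a)) = 0 := by
    apply b.ext
    rintro ⟨β, j⟩
    simp only [LinearMap.comp_apply, DistribSMul.toLinearMap_apply, LinearMap.zero_apply, hb]
    rw [smul_smul, ← pow_add]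
    by_cases hlt : a + j < dv β
    · have : z ^ (a + (j:ℕ)) • e β = b ⟨β, ⟨a + j, hlt⟩⟩ := by rw [hb]
      rw [this, Module.Basis.coord_apply, Module.Basis.repr_self, Finsupp.single_apply, if_neg]
      intro heq
      simp only [q0, Sigma.mk.injEq] at heq
      obtain ⟨rfl, heq⟩ := heq
      have := congrArg Fin.val (eq_of_heq heq)
      simp at this
      omega
    · have : z ^ (a + (j:ℕ)) • e β = 0 := by
        obtain ⟨c, hc⟩ := Nat.exists_eq_add_of_le (not_lt.mp hlt)
        rw [hc, add_comm, pow_add, mul_smul, h3, smul_zero]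
      rw [this, map_zero]
  intro hx
  have h6 := LinearMap.congr_fun key x
  simp only [LinearMap.comp_apply, DistribSMul.toLinearMap_apply, LinearMap.zero_apply] at h6
  have : z ^ (dv α - 1) • e α = b q0 := by rw [hb]
  rw [hx, this, Module.Basis.coord_apply, Module.Basis.repr_self, Finsupp.single_eq_same] at h6
  exact one_ne_zero h6

theorem decomp_top_ne {k A T : Type} [Field k] [CommRing A] [AddCommGroup T] [Module k T]
    [Module A T] (gr : ℕ → Submodule k T) (z : A) {Λ : Type} (iv dv : Λ → ℕ)
    (e : Λ → T) (h : IsDecomp gr z iv dv e) (α : Λ) : e α ≠ 0 := by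
  have := h.2.2.2.1.ne_zero ⟨α, ⟨0, h.1 α⟩⟩
  simpa using this

theorem decomp_center {k A T : Type} [Field k] [CommRing A] [AddCommGroup T] [Module k T]
    [Module A T] [SMulCommClass A k T] (gr : ℕ → Submodule k T) (z : A) {Λ : Type} [Fintype Λ]
    (iv dv : Λ → ℕ)
    (e : Λ → T) (h : IsDecomp gr z iv dv e) (hSL : IsSLAction gr z) (hac : AlmostCentered iv dv) :
    ∃ C : ℕ, ∀ α, 2 * iv α + dv α = C ∨ 2 * iv α + dv α = C + 1 := by
  have hcomp : ∀ α β, ¬ (iv α < iv β ∧ iv α + dv α < iv β + dv β) := by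
    rintro α β ⟨h1, h2⟩
    have hdb := h.1 β
    rcases hSL (iv β + dv β - 1 - iv α) (iv α) with hi | hs
    · refine decomp_top_ne gr z iv dv e h α (hi _ (by simpa using h.2.1 α 0 (h.1 α)) ?_)
      obtain ⟨c, hc⟩ := Nat.exists_eq_add_of_le
        (show dv α ≤ iv β + dv β - 1 - iv α by omega)
      rw [hc, add_comm, pow_add, mul_smul, h.2.2.1, smul_zero]
    · have hm := h.2.1 β (dv β - 1) (by omega)
      rw [show iv β + (dv β - 1) = iv α + (iv β + dv β - 1 - iv α) by omega] at hm
      obtain ⟨x, -, hx⟩ := hs _ hm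
      exact decomp_not_range gr z iv dv e h β _ (by omega) x hx
  have hpair : ∀ α β, 2 * iv α + dv α ≤ 2 * iv β + dv β + 1 := by
    intro α β
    have h1 := hcomp α β
    have h2 := hcomp β α
    have h3 := hac α β
    have h4 := hac β α
    simp only [Prec, abs_le] at h3 h4
    omega
  by_cases hne : Nonempty Λ
  · obtain ⟨α₀, hα⟩ := Finite.exists_min (fun α => 2 * iv α + dv α)
    refine ⟨2 * iv α₀ + dv α₀, fun α => ?_⟩
    have := hα α
    have := hpair α α₀
    omega
  · exact ⟨0, fun α => (hne ⟨α⟩).elim⟩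

section
variable {k : Type} [Field k] {n : ℕ} {M : Type} [AddCommGroup M]
    [Module k M] [Module (MvPolynomial (Fin n) k) M]
    [IsScalarTower k (MvPolynomial (Fin n) k) M]

/-- The class of `x y^s` as a linear map in `x`. -/
noncomputable def iotaT (m s : ℕ) : M →ₗ[k] TruncExt k n M m where
  toFun x := Submodule.Quotient.mk (PolynomialModule.single (MvPolynomial (Fin n) k) s x)
  map_add' x y := by rw [PolynomialModule.single_add, Submodule.Quotient.mk_add]
  map_smul' c x := by
    rw [RingHom.id_apply, ← Submodule.Quotient.mk_smul]
    congr 1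
    ext t
    exact DFunLike.congr_fun (Finsupp.smul_single c s x).symm t

theorem iotaT_zero (m s : ℕ) (hs : m ≤ s) (x : M) : iotaT (k := k) (n := n) m s x = 0 := by
  change Submodule.Quotient.mk _ = _
  rw [Submodule.Quotient.mk_eq_zero]
  have : PolynomialModule.single (MvPolynomial (Fin n) k) s x =
      (Polynomial.X ^ m : Polynomial (MvPolynomial (Fin n) k)) •
        PolynomialModule.single (MvPolynomial (Fin n) k) (s - m) x := by
    rw [← Polynomial.monomial_one_right_eq_X_pow, PolynomialModule.monomial_smul_single, one_smul]
    congr 1; omega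
  rw [this]
  exact Submodule.smul_mem_smul (Ideal.subset_span rfl) trivial

theorem iotaT_induction {m : ℕ} {P : TruncExt k n M m → Prop} (h0 : P 0)
    (hadd : ∀ a b, P a → P b → P (a + b)) (hs : ∀ s x, P (iotaT m s x)) (v) : P v := by
  obtain ⟨p, rfl⟩ := Submodule.Quotient.mk_surjective _ v
  induction p using PolynomialModule.induction_linear with
  | zero => exact h0
  | add x y hx hy => exact hadd _ _ hx hy
  | single s x => exact hs s x

theorem iotaT_E (m s : ℕ) (l : MvPolynomial (Fin n) k) (x : M) :
    (Polynomial.C l + Polynomial.X : Polynomial (MvPolynomial (Fin n) k)) •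
      iotaT (k := k) (n := n) m s x
      = iotaT (k := k) (n := n) m s (l • x) + iotaT m (s+1) x := by
  change Submodule.Quotient.mk (_ • _) = Submodule.Quotient.mk (_ + _)
  congr 1
  rw [add_smul, ← Polynomial.monomial_zero_left, ← Polynomial.monomial_one_one_eq_X,
    PolynomialModule.monomial_smul_single, PolynomialModule.monomial_smul_single, one_smul,
    zero_add, add_comm 1]

theorem exists_lift (m : ℕ) (φ : ℕ → M →ₗ[k] TruncExt k n M m) (hφ : ∀ s, m ≤ s → φ s = 0) :
    ∃ Φ : Module.End k (TruncExt k n M m), ∀ s x, Φ (iotaT m s x) = φ s x := by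
  let N := (Ideal.span {(Polynomial.X : Polynomial (MvPolynomial (Fin n) k)) ^ m} •
      (⊤ : Submodule (Polynomial (MvPolynomial (Fin n) k))
        (PolynomialModule (MvPolynomial (Fin n) k) M)))
  let Ψ : PolynomialModule (MvPolynomial (Fin n) k) M →ₗ[k] TruncExt k n M m :=
    (Finsupp.lsum k φ) ∘ₗ (PolynomialModule.coeffLinearEquiv (MvPolynomial (Fin n) k) k).toLinearMap
  have hΨ : ∀ s x, Ψ (PolynomialModule.single _ s x) = φ s x := by
    intro s x
    simp [Ψ]
  have hN : N.restrictScalars k ≤ LinearMap.ker Ψ := by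
    intro p hp
    have hX : ∀ q : PolynomialModule (MvPolynomial (Fin n) k) M,
        Ψ ((Polynomial.X ^ m : Polynomial (MvPolynomial (Fin n) k)) • q) = 0 := by
      intro q
      induction q using PolynomialModule.induction_linear with
      | zero => rw [smul_zero, map_zero]
      | add x y hx hy => rw [smul_add, map_add, hx, hy, add_zero]
      | single s x =>
        have h1 : (Polynomial.X ^ m : Polynomial (MvPolynomial (Fin n) k)) •
            PolynomialModule.single (MvPolynomial (Fin n) k) s x =
            PolynomialModule.single (MvPolynomial (Fin n) k) (m + s) x := by
          rw [← Polynomial.monomial_one_right_eq_X_pow, PolynomialModule.monomial_smul_single,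
            one_smul]
        rw [h1, hΨ, hφ _ (by omega), LinearMap.zero_apply]
    have hp' : p ∈ N := hp
    rw [LinearMap.mem_ker]
    refine Submodule.smul_induction_on (p := fun p => Ψ p = 0) hp' ?_ ?_
    · intro r hr q _
      obtain ⟨c, rfl⟩ := Ideal.mem_span_singleton.mp hr
      rw [mul_smul]
      exact hX _
    · intro x y hx hy
      rw [map_add, hx, hy, add_zero]
  refine ⟨((N.restrictScalars k).liftQ Ψ hN) ∘ₗ
    (Submodule.Quotient.restrictScalarsEquiv k N).symm.toLinearMap, fun s x => ?_⟩
  rw [← hΨ]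
  rfl
end

theorem exists_M_ops {k : Type} [Field k] {n : ℕ} {M : Type} [AddCommGroup M]
    [Module k M] [Module (MvPolynomial (Fin n) k) M]
    [IsScalarTower k (MvPolynomial (Fin n) k) M]
    (gr : ℕ → Submodule k M) (hgr : IsGrading k n gr)
    (l : MvPolynomial (Fin n) k)
    {Λ : Type} (iv dv : Λ → ℕ) (e : Λ → M)
    (hdec : IsDecomp gr l iv dv e) (C : ℕ)
    (hC : ∀ α, 2 * iv α + dv α = C ∨ 2 * iv α + dv α = C + 1) :
    ∃ F D Z : Module.End k M,
      (∀ x, l • F x - F (l • x) = (2:k) • D x - Z x - ((C:k) - 1) • x) ∧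
      (∀ x, D (l • x) = l • D x + l • x) ∧ (∀ x, D (F x) = F (D x) - F x) ∧
      (∀ x, Z (l • x) = l • Z x) ∧ (∀ x, Z (F x) = F (Z x)) ∧ (∀ x, Z (D x) = D (Z x)) ∧
      (∀ x, Z (Z x) = Z x) ∧ (∀ d, ∀ x ∈ gr d, D x = (d:k) • x) := by
  obtain ⟨h1, h2, h3, h4, h5⟩ := hdec
  have hint : Function.Bijective (DirectSum.coeLinearMap gr) := hgr.1
  let b := Module.Basis.mk h4 h5.ge
  have hb : ∀ q, b q = l ^ (q.2 : ℕ) • e q.1 := fun q => by simp [b]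
  let g : Λ → ℕ → M := fun α j => l ^ j • e α
  have hg : ∀ α j, l • g α j = g α (j+1) := fun α j => by
    simp only [g]; rw [smul_smul, ← pow_succ']
  have hgd : ∀ α, g α (dv α) = 0 := h3
  have hbg : ∀ α (j : Fin (dv α)), b ⟨α, j⟩ = g α j := fun α j => hb _
  let z : Λ → k := fun α => 2 * iv α + dv α - C
  have hz : ∀ α, z α * z α = z α := by
    intro α
    rcases hC α with h | h
    · have : z α = 0 := by
        simp only [z]; rw [← h]; push_cast; ring
      rw [this, zero_mul]
    · have : z α = 1 := by
        have h' : (2 * iv α + dv α : k) = C + 1 := by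
          have := congrArg (Nat.cast : ℕ → k) h
          push_cast at this; exact this
        simp only [z]; rw [h']; ring
      rw [this, one_mul]
  let F : Module.End k M := b.constr k (fun q => ((q.2 : ℕ) * (dv q.1 - (q.2 : ℕ)) : k) • g q.1 (q.2 - 1))
  have hF : ∀ α j, j ≤ dv α → F (g α j) = ((j:k) * (dv α - j)) • g α (j - 1) := by
    intro α j hj
    rcases hj.lt_or_eq with hj | rfl
    · rw [← hbg α ⟨j, hj⟩]
      simp only [F]
      rw [Module.Basis.constr_basis]
    · rw [hgd, map_zero, sub_self, mul_zero, zero_smul]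
  let Z : Module.End k M := b.constr k (fun q => z q.1 • g q.1 q.2)
  have hZ : ∀ α j, j ≤ dv α → Z (g α j) = z α • g α j := by
    intro α j hj
    rcases hj.lt_or_eq with hj | rfl
    · rw [← hbg α ⟨j, hj⟩]
      simp only [Z]
      rw [Module.Basis.constr_basis, hbg]
    · rw [hgd, map_zero, smul_zero]
  let D : Module.End k M := (DirectSum.toModule k ℕ M (fun i => (i:k) • (gr i).subtype)) ∘ₗ
    (LinearEquiv.ofBijective (DirectSum.coeLinearMap gr) hint).symm.toLinearMap
  have hD : ∀ d, ∀ x ∈ gr d, D x = (d:k) • x := by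
    intro d x hx
    have : (LinearEquiv.ofBijective (DirectSum.coeLinearMap gr) hint).symm x =
        DirectSum.lof k ℕ (fun i => gr i) d ⟨x, hx⟩ := by
      rw [LinearEquiv.symm_apply_eq]
      simp
    simp only [D, LinearMap.comp_apply, LinearEquiv.coe_coe, this, DirectSum.toModule_lof]
    simp
  have hDg : ∀ α j, j ≤ dv α → D (g α j) = ((iv α : k) + j) • g α j := by
    intro α j hj
    rcases hj.lt_or_eq with hj | rfl
    · rw [hD _ _ (h2 α j hj)]; push_cast; rfl
    · rw [hgd, map_zero, smul_zero]
  let Lm : Module.End k M := DistribSMul.toLinearMap k M l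
  have hL : ∀ x, l • x = Lm x := fun x => rfl
  have hLg : ∀ α j, Lm (g α j) = g α (j+1) := hg
  have ext' : ∀ A B : Module.End k M, (∀ α j, j < dv α → A (g α j) = B (g α j)) → ∀ x, A x = B x := by
    intro A B hAB x
    have : A = B := b.ext (fun ⟨α, j⟩ => by rw [hbg]; exact hAB α j j.2)
    rw [this]
  simp only [hL]
  clear_value F Z D Lm g
  refine ⟨F, D, Z, ?_, ?_, ?_, ?_, ?_, ?_, ?_, hD⟩
  · refine ext' (Lm * F - F * Lm) ((2:k) • D - Z - ((C:k) - 1) • 1) fun α j hj => ?_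
    simp only [LinearMap.sub_apply, Module.End.mul_apply, LinearMap.smul_apply, Module.End.one_apply]
    rw [hF _ _ hj.le, hDg _ _ hj.le, hZ _ _ hj.le, hLg, hF _ _ hj, map_smul, hLg]
    simp only [z]
    rcases j with _ | j
    · simp only [Nat.cast_zero, zero_mul, zero_smul]
      push_cast; module
    · simp only [Nat.add_sub_cancel]
      push_cast; module
  · refine ext' (D * Lm) (Lm * D + Lm) fun α j hj => ?_
    simp only [LinearMap.add_apply, Module.End.mul_apply]
    rw [hLg, hDg _ _ hj, hDg _ _ hj.le, map_smul, hLg]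
    push_cast; module
  · refine ext' (D * F) (F * D - F) fun α j hj => ?_
    simp only [LinearMap.sub_apply, Module.End.mul_apply]
    rw [hF _ _ hj.le, hDg _ _ hj.le, map_smul, map_smul, hDg _ _ (by omega), hF _ _ hj.le]
    rcases j with _ | j
    · simp
    · simp only [Nat.add_sub_cancel]
      push_cast; module
  · refine ext' (Z * Lm) (Lm * Z) fun α j hj => ?_
    simp only [Module.End.mul_apply]
    rw [hLg, hZ _ _ hj, hZ _ _ hj.le, map_smul, hLg]
  · refine ext' (Z * F) (F * Z) fun α j hj => ?_
    simp only [Module.End.mul_apply]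
    rw [hF _ _ hj.le, hZ _ _ hj.le, map_smul, map_smul, hZ _ _ (by omega), hF _ _ hj.le, smul_comm]
  · refine ext' (Z * D) (D * Z) fun α j hj => ?_
    simp only [Module.End.mul_apply]
    rw [hDg _ _ hj.le, hZ _ _ hj.le, map_smul, map_smul, hZ _ _ hj.le, hDg _ _ hj.le, smul_comm]
  · refine ext' (Z * Z) Z fun α j hj => ?_
    simp only [Module.End.mul_apply]
    rw [hZ _ _ hj.le, map_smul, hZ _ _ hj.le, smul_smul, hz]

theorem exists_T_ops {k : Type} [Field k] {n : ℕ} {M : Type} [AddCommGroup M]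
    [Module k M] [Module (MvPolynomial (Fin n) k) M]
    [IsScalarTower k (MvPolynomial (Fin n) k) M]
    (gr : ℕ → Submodule k M) (hgr : IsGrading k n gr)
    (l : MvPolynomial (Fin n) k)
    {Λ : Type} (iv dv : Λ → ℕ) (e : Λ → M)
    (hdec : IsDecomp gr l iv dv e) (C : ℕ)
    (hC : ∀ α, 2 * iv α + dv α = C ∨ 2 * iv α + dv α = C + 1) (m : ℕ) :
    ∃ E F D Z : Module.End k (TruncExt k n M m),
      (∀ x, E x = (Polynomial.C l + Polynomial.X : Polynomial (MvPolynomial (Fin n) k)) • x) ∧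
      (∀ x, E (F x) - F (E x) = (2:k) • D x - Z x - ((C:k) + m - 2) • x) ∧
      (∀ x, D (E x) = E (D x) + E x) ∧ (∀ x, D (F x) = F (D x) - F x) ∧
      (∀ x, Z (E x) = E (Z x)) ∧ (∀ x, Z (F x) = F (Z x)) ∧ (∀ x, Z (D x) = D (Z x)) ∧
      (∀ x, Z (Z x) = Z x) ∧ (∀ d, ∀ x ∈ truncGr n gr m d, D x = (d:k) • x) := by
  obtain ⟨F, D, Z, h1, h2, h3, h4, h5, h6, h7, h8⟩ := exists_M_ops gr hgr l iv dv e hdec C hC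
  let ι : ℕ → M →ₗ[k] TruncExt k n M m := fun s => iotaT m s
  have hι : ∀ s x, m ≤ s → ι s x = 0 := fun s x hs => iotaT_zero m s hs x
  obtain ⟨F', hF'⟩ := exists_lift m
    (fun s => ι s ∘ₗ F + ((s:k) * (m - s)) • ι (s - 1)) (by
      intro s hs
      ext x
      simp only [LinearMap.add_apply, LinearMap.comp_apply, LinearMap.smul_apply,
        LinearMap.zero_apply]
      rw [hι _ _ hs]
      rcases hs.lt_or_eq with h | rfl
      · rw [hι _ _ (by omega), smul_zero, add_zero]
      · simp)
  obtain ⟨D', hD'⟩ := exists_lift m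
    (fun s => ι s ∘ₗ D + (s:k) • ι s) (by
      intro s hs
      ext x
      simp [hι _ _ hs])
  obtain ⟨Z', hZ'⟩ := exists_lift m
    (fun s => ι s ∘ₗ Z) (by
      intro s hs
      ext x
      simp [hι _ _ hs])
  obtain ⟨E', hE''⟩ : ∃ E' : Module.End k (TruncExt k n M m), ∀ x, E' x =
      (Polynomial.C l + Polynomial.X : Polynomial (MvPolynomial (Fin n) k)) • x :=
    ⟨DistribSMul.toLinearMap k _ _, fun x => rfl⟩
  have hE' : ∀ s x, E' (ι s x) = ι s (l • x) + ι (s+1) x := by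
    intro s x; rw [hE'']; exact iotaT_E m s l x
  replace hF' : ∀ s x, F' (ι s x) = ι s (F x) + ((s:k) * (m - s)) • ι (s - 1) x := hF'
  replace hD' : ∀ s x, D' (ι s x) = ι s (D x) + (s:k) • ι s x := hD'
  replace hZ' : ∀ s x, Z' (ι s x) = ι s (Z x) := hZ'
  have ext' : ∀ A B : Module.End k (TruncExt k n M m),
      (∀ s x, A (ι s x) = B (ι s x)) → ∀ x, A x = B x := by
    intro A B hAB x
    induction x using iotaT_induction with
    | h0 => rw [map_zero, map_zero]
    | hadd a b ha hb => rw [map_add, map_add, ha, hb]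
    | hs s x => exact hAB s x
  have hDgr : ∀ d, ∀ x ∈ truncGr n gr m d, D' x = (d:k) • x := by
    intro d x hx
    refine Submodule.span_induction (p := fun x _ => D' x = (d:k) • x) ?_ ?_ ?_ ?_ hx
    · rintro _ ⟨j, y, hj, hy, rfl⟩
      change D' (ι j y) = (d:k) • ι j y
      rw [hD', h8 _ _ hy, map_smul, ← add_smul, ← Nat.cast_add, Nat.sub_add_cancel hj]
    · simp
    · intro a b _ _ ha hb
      rw [map_add, ha, hb, smul_add]
    · intro c a _ ha
      rw [map_smul, ha, smul_comm]
  clear_value ι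
  refine ⟨E', F', D', Z', hE'', ?_, ?_, ?_, ?_, ?_, ?_, ?_, ?_⟩
  · refine ext' (E' * F' - F' * E') ((2:k) • D' - Z' - ((C:k) + m - 2) • 1) fun s x => ?_
    simp only [LinearMap.sub_apply, Module.End.mul_apply, LinearMap.smul_apply, Module.End.one_apply]
    have h := congrArg (ι s) (h1 x)
    simp only [map_sub, map_smul] at h
    simp only [hE', hF', hD', hZ', map_add, map_smul, Nat.add_sub_cancel]
    rw [sub_eq_iff_eq_add] at h
    rw [h]
    rcases s with _ | s
    · simp only [Nat.cast_zero, zero_mul, zero_smul]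
      push_cast; module
    · simp only [Nat.add_sub_cancel]
      push_cast; module
  · refine ext' (D' * E') (E' * D' + E') fun s x => ?_
    simp only [LinearMap.add_apply, Module.End.mul_apply, hE', hD', map_add, map_smul, h2]
    push_cast; module
  · refine ext' (D' * F') (F' * D' - F') fun s x => ?_
    simp only [LinearMap.sub_apply, Module.End.mul_apply, hF', hD', map_add, map_smul, h3, map_sub]
    rcases s with _ | s
    · simp
    · simp only [Nat.add_sub_cancel]
      push_cast; module
  · refine ext' (Z' * E') (E' * Z') fun s x => ?_
    simp only [Module.End.mul_apply, hE', hZ', map_add, h4]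
  · refine ext' (Z' * F') (F' * Z') fun s x => ?_
    simp only [Module.End.mul_apply, hF', hZ', map_add, map_smul, h5]
  · refine ext' (Z' * D') (D' * Z') fun s x => ?_
    simp only [Module.End.mul_apply, hD', hZ', map_add, map_smul, h6]
  · refine ext' (Z' * Z') Z' fun s x => ?_
    simp only [Module.End.mul_apply, hZ', h7]
  · exact hDgr

theorem T_center {k : Type} [Field k] [CharZero k] {V : Type} [AddCommGroup V] [Module k V]
    [FiniteDimensional k V] (E F D Z : Module.End k V) (C : ℤ)
    (h1 : ∀ x, E (F x) - F (E x) = (2:k) • D x - Z x - (C:k) • x)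
    (h2 : ∀ x, D (E x) = E (D x) + E x) (h3 : ∀ x, D (F x) = F (D x) - F x)
    (h4 : ∀ x, Z (E x) = E (Z x)) (h5 : ∀ x, Z (F x) = F (Z x)) (h6 : ∀ x, Z (D x) = D (Z x))
    (h7 : ∀ x, Z (Z x) = Z x) (v : V) (hv : v ≠ 0) (i d : ℕ) (hd : 1 ≤ d)
    (hDv : D v = (i:k) • v) (hDu : D ((E ^ (d-1)) v) = ((i + (d - 1 : ℕ) : ℕ) : k) • (E ^ (d-1)) v)
    (hEv : (E ^ d) v = 0) (hnr : ∀ x, (E ^ d) x ≠ (E ^ (d-1)) v) :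
    C + 1 ≤ 2 * i + d ∧ 2 * i + d ≤ C + 2 := by
  let H : Module.End k V := (2:k) • D - Z - (C:k) • 1
  have hH : ∀ x, H x = (2:k) • D x - Z x - (C:k) • x := fun x => rfl
  have hEF : ∀ v, E (F v) - F (E v) = H v := h1
  have hHE : ∀ v, H (E v) = E (H v) + (2:k) • E v := by
    intro v
    simp only [hH, h2, h4, map_sub, map_smul]; module
  have hHF : ∀ v, H (F v) = F (H v) - (2:k) • F v := by
    intro v
    simp only [hH, h3, h5, map_sub, map_smul]; module
  -- a vector is a sum of its two components
  have hDZ : ∀ x (c : k), D x = c • x → D (Z x) = c • Z x := by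
    intro x c h; rw [← h6, h, map_smul]
  have hZE : ∀ a x, (E ^ a) (Z x) = Z ((E ^ a) x) := by
    intro a x
    induction a with
    | zero => rfl
    | succ a ih => rw [pow_succ', Module.End.mul_apply, ih, ← h4, Module.End.mul_apply]
  constructor
  · by_contra! hlt
    have key : ∀ (x : V) (ζ : ℕ), Z x = (ζ:k) • x → D x = (i:k) • x → (E ^ d) x = 0 → x = 0 := by
      intro x ζ hx hDx hEx
      obtain ⟨N, hN⟩ := aux_nilp D F h3 x i hDx
      obtain ⟨w, hw⟩ := Int.eq_ofNat_of_zero_le (show 0 ≤ C + ζ - 2 * i by omega)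
      refine aux_low E F H hEF hHE hHF N x w d ?_ hN hEx (by omega)
      have hw' : (C:k) + ζ - 2 * i = w := by exact_mod_cast congrArg (Int.cast : ℤ → k) hw
      rw [hH, hx, hDx, ← hw']; module
    have hZv : Z v = 0 := by
      refine key (Z v) 1 ?_ (hDZ _ _ hDv) ?_
      · rw [h7]; simp
      · rw [hZE, hEv, map_zero]
    exact hv (key v 0 (by simpa using hZv) hDv hEv)
  · by_contra! hlt
    set u := (E ^ (d-1)) v with hu
    have hEu : E u = 0 := by
      rw [hu, ← Module.End.mul_apply, ← pow_succ', Nat.sub_add_cancel hd, hEv]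
    have key : ∀ (x : V) (ζ : ℕ), ζ ≤ 1 → Z x = (ζ:k) • x →
        D x = ((i + (d - 1 : ℕ) : ℕ) : k) • x → E x = 0 → ∃ y, (E ^ d) y = x := by
      intro x ζ hζ hx hDx hEx
      obtain ⟨w, hw⟩ := Int.eq_ofNat_of_zero_le
        (show 0 ≤ 2 * (i + (d - 1 : ℕ) : ℕ) - ζ - C by omega)
      refine aux_up E F H hEF hHF x w d ?_ hEx (by omega)
      have hw' : 2 * ((i + (d - 1 : ℕ) : ℕ) : k) - ζ - C = w := by
        exact_mod_cast congrArg (Int.cast : ℤ → k) hw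
      rw [hH, hx, hDx, ← hw']; module
    obtain ⟨y1, hy1⟩ := key (Z u) 1 le_rfl (by rw [h7]; simp) (hDZ _ _ hDu)
      (by rw [← h4, hEu, map_zero])
    obtain ⟨y2, hy2⟩ := key (u - Z u) 0 (by omega) (by rw [map_sub, h7]; simp)
      (by rw [map_sub, hDZ _ _ hDu, hDu, smul_sub]) (by rw [map_sub, ← h4, hEu, map_zero, sub_zero])
    exact hnr (y1 + y2) (by rw [map_add, hy1, hy2]; abel)

/-- Let `l ∈ R_1` be a strong Lefschetz element for `M`, `S = k[l]`.  If the
decomposition of `M` as a graded `S`-module is almost centered, then for every `m ≥ 0` the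
decomposition of `M ⊗_k k[y]/(y^m)` as a graded `k[l+y]`-module is almost centered. -/
theorem statement5 {k : Type} [Field k] [CharZero k] {n : ℕ} {M : Type} [AddCommGroup M]
    [Module k M] [Module (MvPolynomial (Fin n) k) M]
    [IsScalarTower k (MvPolynomial (Fin n) k) M]
    [Module.Finite (MvPolynomial (Fin n) k) M] [FiniteDimensional k M]
    (gr : ℕ → Submodule k M) (hgr : IsGrading k n gr)
    (l : MvPolynomial (Fin n) k) (hl : l ∈ homogeneousSubmodule (Fin n) k 1)
    (hSL : IsSLAction gr l)
    {Λ : Type} [Fintype Λ] (iv dv : Λ → ℕ) (e : Λ → M)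
    (hdec : IsDecomp gr l iv dv e) (hac : AlmostCentered iv dv) :
    ∀ (m : ℕ) (Λ' : Type) (_ : Fintype Λ') (iv' dv' : Λ' → ℕ)
      (e' : Λ' → TruncExt k n M m),
      IsDecomp (truncGr n gr m) (Polynomial.C l + Polynomial.X) iv' dv' e' →
        AlmostCentered iv' dv' := by
  obtain ⟨C, hC⟩ := decomp_center gr l iv dv e hdec hSL hac
  intro m Λ' _ iv' dv' e' hdec'
  obtain ⟨E, F, D, Z, hE, h1, h2, h3, h4, h5, h6, h7, h8⟩ :=
    exists_T_ops gr hgr l iv dv e hdec C hC m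
  have hEp : ∀ (a : ℕ) x, (E ^ a) x =
      ((Polynomial.C l + Polynomial.X : Polynomial (MvPolynomial (Fin n) k)) ^ a) • x := by
    intro a x
    induction a with
    | zero => simp
    | succ a ih => rw [pow_succ', Module.End.mul_apply, ih, hE, smul_smul, ← pow_succ']
  have : FiniteDimensional k (TruncExt k n M m) :=
    Module.Finite.of_basis (Module.Basis.mk hdec'.2.2.2.1 hdec'.2.2.2.2.ge)
  have key : ∀ α, ((C:ℤ) + m - 2) + 1 ≤ 2 * iv' α + dv' α ∧
      2 * iv' α + dv' α ≤ ((C:ℤ) + m - 2) + 2 := by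
    intro α
    have hd := hdec'.1 α
    refine T_center E F D Z ((C:ℤ) + m - 2) ?_ h2 h3 h4 h5 h6 h7 (e' α)
      (decomp_top_ne _ _ iv' dv' e' hdec' α) (iv' α) (dv' α) hd ?_ ?_ ?_ ?_
    · intro x; rw [h1]; push_cast; rfl
    · exact h8 _ _ (by simpa using hdec'.2.1 α 0 hd)
    · refine h8 _ _ ?_
      rw [hEp]
      exact hdec'.2.1 α _ (by omega)
    · rw [hEp]; exact hdec'.2.2.1 α
    · intro x
      rw [hEp, hEp]
      exact decomp_not_range _ _ iv' dv' e' hdec' α _ le_rfl x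
  intro α β _
  have ha := key α
  have hb := key β
  rw [abs_le]
  omega
end

section
/- Let l ∈ R_1 and y ∈ R_1 be strong Lefschetz elements for the finite length graded R-modules M and N respectively. If the Hilbert function of M is symmetric (h_d(M) = h_{p−d}(M) for all d, where p is the socle degree of M) and the decomposition of N as a graded k[y]-module is almost centered, then M ⊗_k N has the strong Lefschetz property and the decomposition of M ⊗_k N as a graded k[l+y]-module is almost centered. -/
open MvPolynomial TensorProduct

/-- The strong Lefschetz condition for an endomorphism `f` (the action of a scalar on a module
realized as an endomorphism): for all nonnegative `a` and `d`, the map `f ^ a` sends `gr d`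
to `gr (d + a)` injectively or surjectively. -/
def IsSLEnd {k T : Type*} [Field k] [AddCommGroup T] [Module k T]
    (gr : ℕ → Submodule k T) (f : Module.End k T) : Prop :=
  ∀ a d : ℕ, (∀ x ∈ gr d, (f ^ a) x = 0 → x = 0) ∨
    (∀ w ∈ gr (d + a), ∃ x ∈ gr d, (f ^ a) x = w)

/-- A degree-zero decomposition `T ≅ ⊕_α k[z](-(iv α))/(z^(dv α))` of `T` as a graded
`k[z]`-module, where `z` acts via the endomorphism `f`. -/
def IsDecompEnd {k T : Type*} [Field k] [AddCommGroup T] [Module k T]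
    (gr : ℕ → Submodule k T) (f : Module.End k T) {Λ : Type*} (iv dv : Λ → ℕ)
    (e : Λ → T) : Prop :=
  (∀ α, 1 ≤ dv α) ∧ (∀ (α : Λ) (j : ℕ), j < dv α → (f ^ j) (e α) ∈ gr (iv α + j)) ∧
    (∀ α, (f ^ dv α) (e α) = 0) ∧
    LinearIndependent k (fun q : Σ α : Λ, Fin (dv α) => (f ^ (q.2 : ℕ)) (e q.1)) ∧
    Submodule.span k (Set.range (fun q : Σ α : Λ, Fin (dv α) => (f ^ (q.2 : ℕ)) (e q.1))) = ⊤

/-- The total-degree grading on `M ⊗_k N`: the degree `e` piece is spanned by the tensors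
`x ⊗ y` with `x, y` homogeneous of degrees summing to `e`. -/
def tensorGr {k : Type*} [Field k] {M N : Type*} [AddCommGroup M] [Module k M]
    [AddCommGroup N] [Module k N] (grM : ℕ → Submodule k M) (grN : ℕ → Submodule k N)
    (e : ℕ) : Submodule k (M ⊗[k] N) :=
  Submodule.span k {t | ∃ (d₁ d₂ : ℕ) (x : M) (y : N), d₁ + d₂ = e ∧ x ∈ grM d₁ ∧
    y ∈ grN d₂ ∧ t = x ⊗ₜ[k] y}

/-- The action of the ring `R ⊗_k R` on `M ⊗_k N`, where the first factor acts on `M` and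
the second on `N`, realized as a `k`-algebra homomorphism into the endomorphisms. -/
noncomputable def tensorAct (k : Type*) [Field k] {n : ℕ} (M N : Type*) [AddCommGroup M]
    [Module k M] [Module (MvPolynomial (Fin n) k) M]
    [IsScalarTower k (MvPolynomial (Fin n) k) M]
    [AddCommGroup N] [Module k N] [Module (MvPolynomial (Fin n) k) N]
    [IsScalarTower k (MvPolynomial (Fin n) k) N] :
    (MvPolynomial (Fin n) k) ⊗[k] (MvPolynomial (Fin n) k) →ₐ[k]
      Module.End k (M ⊗[k] N) :=
  (Module.endTensorEndAlgHom (R := k) (S := k) (A := k)).comp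
    (Algebra.TensorProduct.map (Algebra.lsmul k k M (A := MvPolynomial (Fin n) k))
      (Algebra.lsmul k k N (A := MvPolynomial (Fin n) k)))

/-- Linear forms of `R ⊗_k R`: elements `r ⊗ 1 + 1 ⊗ s` with `r, s` linear forms of `R`. -/
def IsLinearForm2 {k : Type*} [Field k] {n : ℕ}
    (w : (MvPolynomial (Fin n) k) ⊗[k] (MvPolynomial (Fin n) k)) : Prop :=
  ∃ r s : MvPolynomial (Fin n) k, r ∈ homogeneousSubmodule (Fin n) k 1 ∧
    s ∈ homogeneousSubmodule (Fin n) k 1 ∧ w = r ⊗ₜ[k] (1 : MvPolynomial (Fin n) k) +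
      (1 : MvPolynomial (Fin n) k) ⊗ₜ[k] s

/-! ### Abstract `sl₂` computations -/

/-- Raising and lowering operators `E`, `F` on graded pieces with weights `2 d - C`. -/
structure Sl2Data {k T : Type*} [Field k] [AddCommGroup T] [Module k T]
    (gr : ℕ → Submodule k T) (E F : Module.End k T) (C : ℕ) : Prop where
  hE : ∀ d, ∀ x ∈ gr d, E x ∈ gr (d + 1)
  hF : ∀ d, ∀ x ∈ gr (d + 1), F x ∈ gr d
  hF0 : ∀ x ∈ gr 0, F x = 0
  hH : ∀ d, ∀ x ∈ gr d, E (F x) = F (E x) + (2 * (d : k) - (C : k)) • x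

namespace Sl2Data

variable {k T : Type*} [Field k] [AddCommGroup T] [Module k T]
    {gr : ℕ → Submodule k T} {E F : Module.End k T} {C : ℕ}

theorem pow_mem (h : Sl2Data gr E F C) (a d : ℕ) (x : T) (hx : x ∈ gr d) :
    (E ^ a) x ∈ gr (d + a) := by
  induction a with
  | zero => simpa using hx
  | succ a ih =>
    rw [pow_succ', Module.End.mul_apply]
    exact h.hE _ _ ih

theorem comm (h : Sl2Data gr E F C) (a d : ℕ) (x : T) (hx : x ∈ gr d) :
    (E ^ (a + 1)) (F x) = F ((E ^ (a + 1)) x) +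
      (((a : k) + 1) * (2 * (d : k) - (C : k) + (a : k))) • (E ^ a) x := by
  induction a with
  | zero => simpa using h.hH d x hx
  | succ a ih =>
    rw [pow_succ', Module.End.mul_apply, ih, map_add, map_smul,
      h.hH _ _ (h.pow_mem (a + 1) d x hx), ← Module.End.mul_apply E, ← pow_succ',
      ← Module.End.mul_apply E, ← pow_succ', add_assoc, ← add_smul]
    congr 2
    push_cast
    ring

theorem inj [CharZero k] (h : Sl2Data gr E F C) (d : ℕ) :
    ∀ a : ℕ, 2 * d + a ≤ C → ∀ x ∈ gr d, (E ^ a) x = 0 → x = 0 := by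
  induction d with
  | zero =>
    intro a
    induction a with
    | zero => intro _ x _ h0; simpa using h0
    | succ a ih =>
      intro hC x hx h0
      have h1 := h.comm a 0 x hx
      rw [h.hF0 x hx, h0] at h1
      simp only [map_zero, zero_add] at h1
      have h2 : (((a : k) + 1) * (2 * ((0 : ℕ) : k) - (C : k) + (a : k))) ≠ 0 := by
        apply mul_ne_zero
        · exact_mod_cast Nat.succ_ne_zero a
        · intro h3
          have : (a : k) = (C : k) := by push_cast at h3; linear_combination h3
          have : a = C := by exact_mod_cast this
          omega
      exact ih (by omega) x hx ((smul_eq_zero.mp h1.symm).resolve_left h2)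
  | succ d ihd =>
    intro a
    induction a with
    | zero => intro _ x _ h0; simpa using h0
    | succ a ih =>
      intro hC x hx h0
      have h1 := h.comm a (d + 1) x hx
      have h3 : F x = 0 := by
        apply ihd (a + 2) (by omega) _ (h.hF d x hx)
        rw [pow_succ', Module.End.mul_apply, h1, h0]
        simp only [map_zero, zero_add, map_smul]
        rw [← Module.End.mul_apply E, ← pow_succ', h0, smul_zero]
      rw [h3, h0] at h1
      simp only [map_zero, zero_add] at h1
      have h2 : (((a : k) + 1) * (2 * ((d + 1 : ℕ) : k) - (C : k) + (a : k))) ≠ 0 := by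
        apply mul_ne_zero
        · exact_mod_cast Nat.succ_ne_zero a
        · intro h3
          have : ((2 * (d + 1) + a : ℕ) : k) = (C : k) := by
            push_cast at h3 ⊢; linear_combination h3
          have : 2 * (d + 1) + a = C := by exact_mod_cast this
          omega
      exact ih (by omega) x hx ((smul_eq_zero.mp h1.symm).resolve_left h2)

theorem surj_aux [CharZero k] (h : Sl2Data gr E F C) (D : ℕ) (hD : ∀ d, D < d → gr d = ⊥)
    (r : ℕ) : ∀ a d : ℕ, D + 1 ≤ d + a + r → C ≤ 2 * d + a →
      ∀ w ∈ gr (d + a), ∃ x ∈ gr d, (E ^ a) x = w := by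
  induction r with
  | zero =>
    intro a d h1 _ w hw
    rw [hD _ (by omega), Submodule.mem_bot] at hw
    exact ⟨0, zero_mem _, by simp [hw]⟩
  | succ r ihr =>
    intro a
    induction a with
    | zero => intro d _ _ w hw; exact ⟨w, hw, by simp⟩
    | succ a iha =>
      intro d h1 h2 w hw
      obtain ⟨u, hu, rfl⟩ := iha (d + 1) (by omega) (by omega) w
        (by rwa [show d + 1 + a = d + (a + 1) by ring])
      obtain ⟨u', hu', he⟩ := ihr (a + 2) d (by omega) (by omega) (E ((E ^ a) u))
        (by simpa [add_assoc] using h.hE _ _ hw)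
      rw [← Module.End.mul_apply E, ← pow_succ'] at he
      have c1 := h.comm a (d + 1) u hu
      have c2 := h.comm (a + 1) d u' hu'
      rw [← he] at c1
      have hEF : E (F u') ∈ gr d := by
        cases d with
        | zero => rw [h.hF0 _ hu']; simp
        | succ d => exact h.hE _ _ (h.hF _ _ hu')
      set s : k := ((a : k) + 1) * (2 * ((d + 1 : ℕ) : k) - (C : k) + (a : k)) with hs
      have h2 : s ≠ 0 := by
        apply mul_ne_zero
        · exact_mod_cast Nat.succ_ne_zero a
        · intro h3
          have : ((2 * (d + 1) + a : ℕ) : k) = (C : k) := by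
            push_cast at h3 ⊢; linear_combination h3
          have : 2 * (d + 1) + a = C := by exact_mod_cast this
          omega
      set t : k := (((a + 1 : ℕ) : k) + 1) * (2 * (d : k) - (C : k) + ((a + 1 : ℕ) : k)) with ht
      refine ⟨s⁻¹ • (F u - E (F u') + t • u'), ?_, ?_⟩
      · exact Submodule.smul_mem _ _ (Submodule.add_mem _ (Submodule.sub_mem _ (h.hF _ _ hu) hEF)
          (Submodule.smul_mem _ _ hu'))
      · have h5 : (E ^ (a + 1)) (E (F u')) = (E ^ (a + 1 + 1)) (F u') := by
          rw [pow_succ _ (a + 1), Module.End.mul_apply]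
        rw [map_smul, map_add, map_sub, h5, c1, c2, map_smul]
        have : F ((E ^ (a + 2)) u') + s • (E ^ a) u -
            (F ((E ^ (a + 1 + 1)) u') + t • (E ^ (a + 1)) u') + t • (E ^ (a + 1)) u' =
            s • (E ^ a) u := by abel
        rw [this, smul_smul, inv_mul_cancel₀ h2, one_smul]

theorem surj [CharZero k] (h : Sl2Data gr E F C) (D : ℕ) (hD : ∀ d, D < d → gr d = ⊥)
    (a d : ℕ) (hC : C ≤ 2 * d + a) (w : T) (hw : w ∈ gr (d + a)) :
    ∃ x ∈ gr d, (E ^ a) x = w :=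
  h.surj_aux D hD (D + 1) a d (by omega) hC w hw

/-- Tensor product of two `sl₂`-data. -/
theorem tensor {M N : Type*} [AddCommGroup M] [Module k M] [AddCommGroup N] [Module k N]
    {A : ℕ → Submodule k M} {B : ℕ → Submodule k N} {E₁ F₁ : Module.End k M}
    {E₂ F₂ : Module.End k N} {p q : ℕ} (h₁ : Sl2Data A E₁ F₁ p) (h₂ : Sl2Data B E₂ F₂ q) :
    Sl2Data (tensorGr A B) (TensorProduct.map E₁ 1 + TensorProduct.map 1 E₂)
      (TensorProduct.map F₁ 1 + TensorProduct.map 1 F₂) (p + q) := by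
  have gen : ∀ (d₁ d₂ e : ℕ) (x : M) (y : N), d₁ + d₂ = e → x ∈ A d₁ → y ∈ B d₂ →
      x ⊗ₜ[k] y ∈ tensorGr A B e := fun d₁ d₂ e x y he hx hy =>
    Submodule.subset_span ⟨d₁, d₂, x, y, he, hx, hy, rfl⟩
  constructor
  · intro d x hx
    have : tensorGr A B d ≤ (tensorGr A B (d + 1)).comap
        (TensorProduct.map E₁ 1 + TensorProduct.map 1 E₂) := by
      refine Submodule.span_le.mpr ?_
      rintro _ ⟨d₁, d₂, x, y, he, hx, hy, rfl⟩
      simp only [Submodule.comap_coe, Set.mem_preimage, LinearMap.add_apply,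
        TensorProduct.map_tmul, Module.End.one_apply, SetLike.mem_coe]
      exact Submodule.add_mem _ (gen (d₁ + 1) d₂ _ _ _ (by omega) (h₁.hE _ _ hx) hy)
        (gen d₁ (d₂ + 1) _ _ _ (by omega) hx (h₂.hE _ _ hy))
    exact this hx
  · intro d x hx
    have : tensorGr A B (d + 1) ≤ (tensorGr A B d).comap
        (TensorProduct.map F₁ 1 + TensorProduct.map 1 F₂) := by
      refine Submodule.span_le.mpr ?_
      rintro _ ⟨d₁, d₂, x, y, he, hx, hy, rfl⟩
      simp only [Submodule.comap_coe, Set.mem_preimage, LinearMap.add_apply,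
        TensorProduct.map_tmul, Module.End.one_apply, SetLike.mem_coe]
      refine Submodule.add_mem _ ?_ ?_
      · cases d₁ with
        | zero => rw [h₁.hF0 _ hx, zero_tmul]; exact zero_mem _
        | succ d₁ => exact gen d₁ d₂ _ _ _ (by omega) (h₁.hF _ _ hx) hy
      · cases d₂ with
        | zero => rw [h₂.hF0 _ hy, tmul_zero]; exact zero_mem _
        | succ d₂ => exact gen d₁ d₂ _ _ _ (by omega) hx (h₂.hF _ _ hy)
    exact this hx
  · intro x hx
    have : tensorGr A B 0 ≤ LinearMap.ker
        (TensorProduct.map F₁ 1 + TensorProduct.map 1 F₂) := by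
      refine Submodule.span_le.mpr ?_
      rintro _ ⟨d₁, d₂, x, y, he, hx, hy, rfl⟩
      obtain ⟨rfl, rfl⟩ : d₁ = 0 ∧ d₂ = 0 := by omega
      simp [h₁.hF0 _ hx, h₂.hF0 _ hy]
    exact this hx
  · intro d x hx
    induction hx using Submodule.span_induction with
    | mem x hx =>
      obtain ⟨d₁, d₂, x, y, he, hx, hy, rfl⟩ := hx
      simp only [LinearMap.add_apply, TensorProduct.map_tmul, Module.End.one_apply, map_add,
        h₁.hH _ _ hx, h₂.hH _ _ hy, add_tmul, tmul_add, smul_tmul', tmul_smul]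
      have : (2 * (d : k) - ((p + q : ℕ) : k)) • x ⊗ₜ[k] y =
          (2 * (d₁ : k) - (p : k)) • x ⊗ₜ[k] y + (2 * (d₂ : k) - (q : k)) • x ⊗ₜ[k] y := by
        rw [← add_smul, ← he]; congr 1; push_cast; ring
      simp only [← smul_tmul'] at this ⊢
      rw [this]
      abel
    | zero => simp
    | add x y _ _ hx hy => simp only [map_add] at hx hy ⊢; rw [smul_add, hx, hy]; abel
    | smul c x _ hx => rw [map_smul, map_smul, map_smul, map_smul, hx, smul_add, smul_comm]

end Sl2Data

/-! ### String decompositions -/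

section strings

variable {k V : Type*} [Field k] [AddCommGroup V] [Module k V]
  {gr : ℕ → Submodule k V} {f : Module.End k V} {Λ : Type*} {iv dv : Λ → ℕ} {e : Λ → V}

/-- The degree `d` part of the strings with sum of end points `s`. -/
def strPiece (f : Module.End k V) (iv dv : Λ → ℕ) (e : Λ → V) (s d : ℕ) : Submodule k V :=
  Submodule.span k {x | ∃ α j, j < dv α ∧ iv α + j = d ∧ 2 * iv α + dv α = s + 1 ∧
    x = (f ^ j) (e α)}

/-- The string basis. -/
noncomputable def strBasis (h : IsDecompEnd gr f iv dv e) :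
    Module.Basis (Σ α : Λ, Fin (dv α)) k V :=
  Module.Basis.mk h.2.2.2.1 h.2.2.2.2.ge

theorem strBasis_apply (h : IsDecompEnd gr f iv dv e) (α : Λ) (j : Fin (dv α)) :
    strBasis h ⟨α, j⟩ = (f ^ (j : ℕ)) (e α) := by
  simp [strBasis]

theorem exists_ops (h : IsDecompEnd gr f iv dv e) :
    ∃ F : Module.End k V, ∀ s, Sl2Data (strPiece f iv dv e s) f F s := by
  let F : Module.End k V := (strBasis h).constr k
    (fun q => (((q.2 : ℕ) : k) * ((dv q.1 : k) - ((q.2 : ℕ) : k))) • (f ^ ((q.2 : ℕ) - 1)) (e q.1))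
  have hF : ∀ α j, j < dv α → F ((f ^ j) (e α)) =
      ((j : k) * ((dv α : k) - (j : k))) • (f ^ (j - 1)) (e α) := by
    intro α j hj
    have := (strBasis h).constr_basis k (fun q : Σ α : Λ, Fin (dv α) =>
      (((q.2 : ℕ) : k) * ((dv q.1 : k) - ((q.2 : ℕ) : k))) • (f ^ ((q.2 : ℕ) - 1)) (e q.1))
      ⟨α, ⟨j, hj⟩⟩
    rw [strBasis_apply] at this
    exact this
  refine ⟨F, fun s => ⟨?_, ?_, ?_, ?_⟩⟩
  · intro d x hx
    have : strPiece f iv dv e s d ≤ (strPiece f iv dv e s (d + 1)).comap f := by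
      refine Submodule.span_le.mpr ?_
      rintro _ ⟨α, j, hj, hd, hs, rfl⟩
      simp only [Submodule.comap_coe, Set.mem_preimage, SetLike.mem_coe]
      rw [← Module.End.mul_apply, ← pow_succ']
      by_cases hj' : j + 1 < dv α
      · exact Submodule.subset_span ⟨α, j + 1, hj', by omega, hs, rfl⟩
      · rw [show j + 1 = dv α by omega, h.2.2.1]; exact zero_mem _
    exact this hx
  · intro d x hx
    have : strPiece f iv dv e s (d + 1) ≤ (strPiece f iv dv e s d).comap F := by
      refine Submodule.span_le.mpr ?_
      rintro _ ⟨α, j, hj, hd, hs, rfl⟩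
      simp only [Submodule.comap_coe, Set.mem_preimage, SetLike.mem_coe]
      rw [hF α j hj]
      cases j with
      | zero => simp
      | succ j =>
        exact Submodule.smul_mem _ _ (Submodule.subset_span ⟨α, j, by omega, by omega, hs, rfl⟩)
    exact this hx
  · intro x hx
    have : strPiece f iv dv e s 0 ≤ LinearMap.ker F := by
      refine Submodule.span_le.mpr ?_
      rintro _ ⟨α, j, hj, hd, hs, rfl⟩
      obtain rfl : j = 0 := by omega
      rw [SetLike.mem_coe, LinearMap.mem_ker, hF α 0 hj]
      simp
    exact this hx
  · intro d x hx
    induction hx using Submodule.span_induction with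
    | mem x hx =>
      obtain ⟨α, j, hj, hd, hs, rfl⟩ := hx
      have h1 : f (F ((f ^ j) (e α))) = ((j : k) * ((dv α : k) - (j : k))) • (f ^ j) (e α) := by
        rw [hF α j hj]
        cases j with
        | zero => simp
        | succ j =>
          rw [map_smul, ← Module.End.mul_apply, ← pow_succ']; rfl
      have h2 : F (f ((f ^ j) (e α))) =
          (((j + 1 : ℕ) : k) * ((dv α : k) - ((j + 1 : ℕ) : k))) • (f ^ j) (e α) := by
        rw [← Module.End.mul_apply f, ← pow_succ']
        by_cases hj' : j + 1 < dv α
        · rw [hF α _ hj']; rfl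
        · rw [show j + 1 = dv α by omega, h.2.2.1]; simp
      rw [h1, h2, ← add_smul]
      congr 1
      have hs' : (2 * (iv α : k) + (dv α : k)) = (s : k) + 1 := by
        have := congrArg (Nat.cast (R := k)) hs; push_cast at this; exact this
      have hd' : (iv α : k) + (j : k) = (d : k) := by
        have := congrArg (Nat.cast (R := k)) hd; push_cast at this; exact this
      push_cast
      linear_combination 2 * hd' - hs'
    | zero => simp
    | add x y _ _ hx hy => simp only [map_add] at hx hy ⊢; rw [smul_add, hx, hy]; abel
    | smul c x _ hx => rw [map_smul, map_smul, map_smul, map_smul, hx, smul_add, smul_comm]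

theorem exists_proj (h : IsDecompEnd gr f iv dv e) (s : ℕ) :
    ∃ π : Module.End k V, (∀ d, ∀ x ∈ strPiece f iv dv e s d, π x = x) ∧
      ∀ t, t ≠ s → ∀ d, ∀ x ∈ strPiece f iv dv e t d, π x = 0 := by
  classical
  let g : (Σ α : Λ, Fin (dv α)) → V := fun q =>
    if 2 * iv q.1 + dv q.1 = s + 1 then (f ^ (q.2 : ℕ)) (e q.1) else 0
  have hg : ∀ α j, j < dv α → (strBasis h).constr k g ((f ^ j) (e α)) =
      if 2 * iv α + dv α = s + 1 then (f ^ j) (e α) else 0 := by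
    intro α j hj
    have := (strBasis h).constr_basis k g ⟨α, ⟨j, hj⟩⟩
    rw [strBasis_apply] at this
    exact this
  refine ⟨(strBasis h).constr k g, ?_, ?_⟩
  · intro d x hx
    induction hx using Submodule.span_induction with
    | mem x hx =>
      obtain ⟨α, j, hj, hd, hs, rfl⟩ := hx
      rw [hg α j hj, if_pos hs]
    | zero => simp
    | add x y _ _ hx hy => rw [map_add, hx, hy]
    | smul c x _ hx => rw [map_smul, hx]
  · intro t ht d x hx
    induction hx using Submodule.span_induction with
    | mem x hx =>
      obtain ⟨α, j, hj, hd, hs, rfl⟩ := hx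
      rw [hg α j hj, if_neg (by omega)]
    | zero => simp
    | add x y _ _ hx hy => rw [map_add, hx, hy, add_zero]
    | smul c x _ hx => rw [map_smul, hx, smul_zero]

/-- The degree `d` part equals the span of the string elements of degree `d`. -/
theorem gr_le (hi : DirectSum.IsInternal gr) (h : IsDecompEnd gr f iv dv e)
    (B : ℕ → Submodule k V) (hB : ∀ d, B d ≤ gr d)
    (hs : ∀ α j, j < dv α → (f ^ j) (e α) ∈ B (iv α + j)) (d : ℕ) : gr d ≤ B d := by
  have htop : (⨆ d, B d) = ⊤ := by
    rw [eq_top_iff, ← h.2.2.2.2]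
    refine Submodule.span_le.mpr ?_
    rintro _ ⟨⟨α, j⟩, rfl⟩
    exact le_iSup B (iv α + j) (hs α j j.2)
  have hind := hi.submodule_iSupIndep d
  have h1 : (⨆ d, B d) ≤ B d ⊔ ⨆ (j : ℕ) (_ : j ≠ d), gr j := by
    refine iSup_le fun j => ?_
    by_cases hj : j = d
    · subst hj; exact le_sup_left
    · exact le_sup_of_le_right ((hB j).trans (le_iSup₂_of_le j hj le_rfl))
  intro x hx
  have hx' : x ∈ B d ⊔ ⨆ (j : ℕ) (_ : j ≠ d), gr j := h1 (htop ▸ Submodule.mem_top)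
  obtain ⟨b, hb, c, hc, rfl⟩ := Submodule.mem_sup.mp hx'
  have hc' : c ∈ gr d := by
    have := Submodule.sub_mem _ hx (hB d hb)
    simpa using this
  have : c = 0 := Submodule.disjoint_def.mp hind c hc' hc
  rw [this, add_zero]; exact hb

theorem strPiece_le (h : IsDecompEnd gr f iv dv e) (s d : ℕ) :
    strPiece f iv dv e s d ≤ gr d := by
  refine Submodule.span_le.mpr ?_
  rintro _ ⟨α, j, hj, hd, hs, rfl⟩
  rw [← hd]
  exact h.2.1 α j hj

/-- The top of a string of length `dv β` is not in the image of `f ^ a` for `a ≥ dv β`. -/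
theorem top_ne (h : IsDecompEnd gr f iv dv e) (β : Λ) (a : ℕ) (ha : dv β ≤ a) (u : V) :
    (f ^ a) u ≠ (f ^ (dv β - 1)) (e β) := by
  classical
  have hpos := h.1 β
  let q : Σ α : Λ, Fin (dv α) := ⟨β, ⟨dv β - 1, by omega⟩⟩
  have hz : (strBasis h).coord q ∘ₗ (f ^ a) = 0 := by
    refine (strBasis h).ext ?_
    rintro ⟨α, j⟩
    rw [LinearMap.comp_apply, strBasis_apply, ← Module.End.mul_apply, ← pow_add]
    by_cases hj : a + j < dv α
    · have := strBasis_apply h α ⟨a + j, hj⟩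
      simp only at this
      rw [← this, Module.Basis.coord_apply, Module.Basis.repr_self, Finsupp.single_apply, if_neg]
      · simp
      · intro hq
        have h1 : α = β := congrArg Sigma.fst hq
        subst h1
        have h2 := eq_of_heq (Sigma.mk.inj hq).2
        have := congrArg Fin.val h2
        simp only at this
        omega
    · rw [show a + (j : ℕ) = (a + j - dv α) + dv α by omega, pow_add, Module.End.mul_apply,
        h.2.2.1]
      simp
  intro hu
  have h1 := LinearMap.congr_fun hz u
  rw [LinearMap.comp_apply, hu] at h1
  have h2 := strBasis_apply h β ⟨dv β - 1, by omega⟩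
  simp only at h2
  rw [← h2, Module.Basis.coord_apply, Module.Basis.repr_self] at h1
  simp [q] at h1

theorem str_ne_zero (h : IsDecompEnd gr f iv dv e) (β : Λ) (j : ℕ) (hj : j < dv β) :
    (f ^ j) (e β) ≠ 0 :=
  h.2.2.2.1.ne_zero (⟨β, ⟨j, hj⟩⟩ : Σ α : Λ, Fin (dv α))

/-- A strong Lefschetz, almost centered decomposition has all centers within `1`. -/
theorem exists_center (hSL : IsSLEnd gr f) (h : IsDecompEnd gr f iv dv e)
    (hac : AlmostCentered iv dv) :
    ∃ C : ℕ, ∀ α, 2 * iv α + dv α = C + 1 ∨ 2 * iv α + dv α = C + 1 + 1 := by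
  have nest : ∀ α β, ¬ (iv α < iv β ∧ dv α + iv α < dv β + iv β) := by
    rintro α β ⟨h1, h2⟩
    have ha := h.1 α
    have hb := h.1 β
    obtain ⟨a, haeq⟩ : ∃ a, iv α + a = iv β + (dv β - 1) := ⟨iv β + (dv β - 1) - iv α, by omega⟩
    rcases hSL a (iv α) with hi | hs
    · have h3 : (f ^ 0) (e α) ∈ gr (iv α + 0) := h.2.1 α 0 ha
      refine str_ne_zero h α 0 ha (hi _ h3 ?_)
      rw [show a = (a - dv α) + dv α by omega, pow_add, Module.End.mul_apply]
      simp [h.2.2.1]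
    · obtain ⟨x, -, hx⟩ := hs ((f ^ (dv β - 1)) (e β))
        (by rw [haeq]; exact h.2.1 β _ (by omega))
      exact top_ne h β a (by omega) x hx
  have close : ∀ α β, 2 * iv α + dv α ≤ 2 * iv β + dv β + 1 := by
    intro α β
    have n1 := nest α β
    have n2 := nest β α
    by_cases hp : Prec iv dv β α
    · have := abs_le.mp (hac α β hp)
      omega
    · by_cases hq : Prec iv dv α β
      · have := abs_le.mp (hac β α hq)
        omega
      · unfold Prec at hp hq
        omega
  by_cases hne : Nonempty Λ
  · obtain ⟨β, hβ⟩ : ∃ β, ∀ α, 2 * iv β + dv β ≤ 2 * iv α + dv α :=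
      ⟨Function.argmin (fun α => 2 * iv α + dv α),
        fun α => Function.argmin_le (fun α => 2 * iv α + dv α) α⟩
    have hb := h.1 β
    refine ⟨2 * iv β + dv β - 1, fun α => ?_⟩
    have h1 := close α β
    have h2 := hβ α
    omega
  · exact ⟨0, fun α => (hne ⟨α⟩).elim⟩

end strings

/-! ### Consequences of the two-sided estimate -/

section final

variable {k V : Type*} [Field k] [AddCommGroup V] [Module k V]
  {gr : ℕ → Submodule k V} {f : Module.End k V}

theorem almostCentered_of_bounds {Λ : Type*} {iv dv : Λ → ℕ} {e : Λ → V} (K : ℕ)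
    (hinj : ∀ a d, 2 * d + a ≤ K → ∀ x ∈ gr d, (f ^ a) x = 0 → x = 0)
    (hsurj : ∀ a d, K + 1 ≤ 2 * d + a → ∀ w ∈ gr (d + a), ∃ x ∈ gr d, (f ^ a) x = w)
    (hzero : ∀ d, K + 1 < d → gr d = ⊥)
    (h : IsDecompEnd gr f iv dv e) : AlmostCentered iv dv := by
  have low : ∀ α, K + 1 ≤ 2 * iv α + dv α := by
    intro α
    by_contra hc
    have h3 : (f ^ 0) (e α) ∈ gr (iv α + 0) := h.2.1 α 0 (h.1 α)
    refine str_ne_zero h α 0 (h.1 α) (hinj (dv α) (iv α) (by omega) _ h3 ?_)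
    simp [h.2.2.1]
  have high : ∀ α, 2 * iv α + dv α ≤ K + 2 := by
    intro α
    have hpos := h.1 α
    have htop := h.2.1 α (dv α - 1) (by omega)
    by_contra hc
    by_cases h0 : iv α = 0
    · rw [hzero _ (by omega), Submodule.mem_bot] at htop
      exact str_ne_zero h α (dv α - 1) (by omega) htop
    · obtain ⟨x, -, hx⟩ := hsurj (dv α) (iv α - 1) (by omega) ((f ^ (dv α - 1)) (e α))
        (by rwa [show iv α - 1 + dv α = iv α + (dv α - 1) by omega])
      exact top_ne h α _ le_rfl x hx
  intro α β _
  have a1 := low α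
  have a2 := low β
  have a3 := high α
  have a4 := high β
  rw [abs_le]
  constructor <;> omega

theorem exists_degree_proj (hi : DirectSum.IsInternal gr) (d : ℕ) :
    ∃ π : Module.End k V, (∀ x ∈ gr d, π x = x) ∧ ∀ c, c ≠ d → ∀ x ∈ gr c, π x = 0 := by
  classical
  let _ := hi.chooseDecomposition
  refine ⟨(gr d).subtype ∘ₗ DirectSum.component k ℕ (fun i => gr i) d ∘ₗ
    (DirectSum.decomposeLinearEquiv gr).toLinearMap, ?_, ?_⟩
  · intro x hx
    have := DirectSum.decompose_of_mem_same gr hx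
    exact this
  · intro c hc x hx
    have := DirectSum.decompose_of_mem_ne gr hx hc
    exact this

/-- Lefschetz decomposition of a centered graded space. -/
theorem exists_decomp [FiniteDimensional k V] (hi : DirectSum.IsInternal gr)
    (hf : ∀ d, ∀ x ∈ gr d, f x ∈ gr (d + 1)) (p : ℕ) (hp : ∀ d, p < d → gr d = ⊥)
    (hinj : ∀ d, 2 * d ≤ p → ∀ x ∈ gr d, (f ^ (p - 2 * d)) x = 0 → x = 0)
    (hsurj : ∀ d, 2 * d ≤ p → ∀ w ∈ gr (p - d), ∃ x ∈ gr d, (f ^ (p - 2 * d)) x = w) :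
    ∃ (Λ : Type) (iv dv : Λ → ℕ) (e : Λ → V), IsDecompEnd gr f iv dv e ∧
      ∀ α, 2 * iv α + dv α = p + 1 := by
  classical
  have hfp : ∀ a d, ∀ x ∈ gr d, (f ^ a) x ∈ gr (d + a) := by
    intro a d x hx
    induction a with
    | zero => simpa using hx
    | succ a ih =>
      rw [pow_succ', Module.End.mul_apply]
      exact hf _ _ ih
  let P : ℕ → Submodule k V := fun i => gr i ⊓ LinearMap.ker (f ^ (p - 2 * i + 1))
  let Λ : Type := Σ i : Fin (p / 2 + 1), Fin (Module.finrank k (P i))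
  let b : ∀ i : Fin (p / 2 + 1), Module.Basis (Fin (Module.finrank k (P i))) k (P i) :=
    fun i => Module.finBasis k (P i)
  let iv : Λ → ℕ := fun α => (α.1 : ℕ)
  let dv : Λ → ℕ := fun α => p - 2 * (α.1 : ℕ) + 1
  let e : Λ → V := fun α => (b α.1 α.2 : V)
  have hlt : ∀ i : Fin (p / 2 + 1), 2 * (i : ℕ) ≤ p := fun i => by have := i.2; omega
  have hemem : ∀ α, e α ∈ gr (iv α) := fun α => (b α.1 α.2).2.1
  have heker : ∀ α, (f ^ dv α) (e α) = 0 := fun α => (b α.1 α.2).2.2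
  have heker' : ∀ α a, dv α ≤ a → (f ^ a) (e α) = 0 := by
    intro α a ha
    rw [show a = (a - dv α) + dv α by omega, pow_add, Module.End.mul_apply, heker, map_zero]
  refine ⟨Λ, iv, dv, e, ⟨fun α => by simp [dv], fun α j _ => hfp _ _ _ (hemem α), heker, ?_, ?_⟩,
    fun α => by have := hlt α.1; simp only [iv, dv]; omega⟩
  · -- linear independence
    rw [Fintype.linearIndependent_iff]
    intro g hg
    have key : ∀ r : ℕ, ∀ q : (Σ α : Λ, Fin (dv α)), iv q.1 = r → g q = 0 := by
      intro r
      induction r using Nat.strong_induction_on with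
      | _ r ih =>
        rintro ⟨⟨i, m⟩, j⟩ hr
        have hr' : (i : ℕ) = r := hr
        have hj : (j : ℕ) < p - 2 * (i : ℕ) + 1 := j.2
        have hli := hlt i
        obtain ⟨π, hπ1, hπ2⟩ := exists_degree_proj (k := k) hi ((i : ℕ) + j)
        have hker : LinearMap.ker ((f ^ (p - 2 * (i : ℕ))) ∘ₗ (P i).subtype) = ⊥ := by
          rw [LinearMap.ker_eq_bot']
          intro x hx
          exact Subtype.ext (hinj i hli x x.2.1 hx)
        obtain ⟨φ, hφ⟩ := LinearMap.exists_leftInverse_of_injective _ hker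
        let ψ : V →ₗ[k] k := (b i).coord m ∘ₗ φ ∘ₗ (f ^ (p - 2 * (i : ℕ) - j)) ∘ₗ π
        have h0 := congrArg ψ hg
        rw [map_sum, map_zero, Finset.sum_eq_single (⟨⟨i, m⟩, j⟩ : Σ α : Λ, Fin (dv α))] at h0
        · have hψ : ψ ((f ^ (j : ℕ)) (e ⟨i, m⟩)) = 1 := by
            have h1 : π ((f ^ (j : ℕ)) (e ⟨i, m⟩)) = (f ^ (j : ℕ)) (e ⟨i, m⟩) :=
              hπ1 _ (hfp _ _ _ (hemem ⟨i, m⟩))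
            simp only [ψ, LinearMap.comp_apply, h1]
            rw [← Module.End.mul_apply, ← pow_add,
              show p - 2 * (i : ℕ) - j + j = p - 2 * (i : ℕ) by omega]
            have h2 := LinearMap.congr_fun hφ (b i m)
            simp only [LinearMap.comp_apply, Submodule.subtype_apply, LinearMap.id_apply] at h2
            change ((b i).coord m) (φ ((f ^ (p - 2 * (i : ℕ))) (b i m : V))) = 1
            rw [h2]
            simp
          rw [map_smul] at h0
          simp only at h0
          rw [hψ, smul_eq_mul, mul_one] at h0
          exact h0
        · rintro ⟨⟨i', m'⟩, j'⟩ - hne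
          rw [map_smul]
          by_cases hd : (i' : ℕ) + j' = i + j
          · rcases lt_trichotomy (i' : ℕ) (i : ℕ) with hlt' | heq | hgt
            · rw [ih (i' : ℕ) (by omega) _ rfl, zero_smul]
            · obtain rfl : i' = i := Fin.ext heq
              have hjj : j' = j := Fin.ext (by omega)
              have hmm : m' ≠ m := by
                rintro rfl
                exact hne (by rw [hjj])
              have hψ : ψ ((f ^ (j' : ℕ)) (e ⟨i', m'⟩)) = 0 := by
                have h1 : π ((f ^ (j' : ℕ)) (e ⟨i', m'⟩)) = (f ^ (j' : ℕ)) (e ⟨i', m'⟩) :=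
                  hπ1 _ (by rw [← hd]; exact hfp _ _ _ (hemem ⟨i', m'⟩))
                simp only [ψ, LinearMap.comp_apply, h1]
                rw [← Module.End.mul_apply, ← pow_add,
                  show p - 2 * (i' : ℕ) - j + j' = p - 2 * (i' : ℕ) by omega]
                have h2 := LinearMap.congr_fun hφ (b i' m')
                simp only [LinearMap.comp_apply, Submodule.subtype_apply,
                  LinearMap.id_apply] at h2
                change ((b i').coord m) (φ ((f ^ (p - 2 * (i' : ℕ))) (b i' m' : V))) = 0
                rw [h2]
                simp [hmm]
              simp only
              rw [hψ, smul_zero]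
            · have hψ : ψ ((f ^ (j' : ℕ)) (e ⟨i', m'⟩)) = 0 := by
                have h1 : π ((f ^ (j' : ℕ)) (e ⟨i', m'⟩)) = (f ^ (j' : ℕ)) (e ⟨i', m'⟩) :=
                  hπ1 _ (by rw [← hd]; exact hfp _ _ _ (hemem ⟨i', m'⟩))
                simp only [ψ, LinearMap.comp_apply, h1]
                rw [← Module.End.mul_apply, ← pow_add, heker']
                · simp
                · have := hlt i'
                  simp only [dv]
                  omega
              simp only
              rw [hψ, smul_zero]
          · have h1 : π ((f ^ (j' : ℕ)) (e ⟨i', m'⟩)) = 0 :=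
              hπ2 _ hd _ (hfp _ _ _ (hemem ⟨i', m'⟩))
            simp only [ψ, LinearMap.comp_apply]
            rw [h1]
            simp
        · intro hn
          exact (hn (Finset.mem_univ _)).elim
    exact fun q => key _ q rfl
  · -- spanning
    set S := Submodule.span k (Set.range
      (fun q : Σ α : Λ, Fin (dv α) => (f ^ (q.2 : ℕ)) (e q.1))) with hS
    have hSf : ∀ x ∈ S, f x ∈ S := by
      have : S ≤ S.comap f := by
        refine Submodule.span_le.mpr ?_
        rintro _ ⟨⟨α, j⟩, rfl⟩
        simp only [Submodule.comap_coe, Set.mem_preimage, SetLike.mem_coe]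
        rw [← Module.End.mul_apply, ← pow_succ']
        by_cases hj' : (j : ℕ) + 1 < dv α
        · exact Submodule.subset_span ⟨⟨α, ⟨(j : ℕ) + 1, hj'⟩⟩, rfl⟩
        · rw [heker' _ _ (by omega)]; exact zero_mem _
      exact fun x hx => this hx
    have hSfp : ∀ a, ∀ x ∈ S, (f ^ a) x ∈ S := by
      intro a x hx
      induction a with
      | zero => simpa using hx
      | succ a ih =>
        rw [pow_succ', Module.End.mul_apply]
        exact hSf _ ih
    have hPS : ∀ i, 2 * i ≤ p → P i ≤ S := by
      intro i hip x hx
      let i' : Fin (p / 2 + 1) := ⟨i, by omega⟩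
      have h1 := (b i').sum_repr ⟨x, hx⟩
      have h2 := congrArg (P i').subtype h1
      rw [map_sum] at h2
      rw [Submodule.subtype_apply] at h2
      simp only at h2
      rw [← h2]
      refine Submodule.sum_mem _ fun m _ => ?_
      rw [map_smul]
      refine Submodule.smul_mem _ _ (Submodule.subset_span ?_)
      exact ⟨⟨⟨i', m⟩, ⟨0, by simp [dv]⟩⟩, by simp [e]⟩
    have hlow : ∀ i, 2 * i ≤ p → gr i ≤ S := by
      intro i
      induction i with
      | zero =>
        intro _ x hx
        refine hPS 0 (by omega) ⟨hx, ?_⟩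
        have := hfp (p + 1) 0 x hx
        rw [hp _ (by omega), Submodule.mem_bot] at this
        exact this
      | succ i ih =>
        intro hip x hx
        have h1 := hfp (p - 2 * (i + 1) + 1) (i + 1) x hx
        obtain ⟨z, hz, hzx⟩ := hsurj i (by omega) _
          (by rwa [show i + 1 + (p - 2 * (i + 1) + 1) = p - i by omega] at h1)
        have h2 : x - f z ∈ P (i + 1) := by
          refine ⟨Submodule.sub_mem _ hx (hf _ _ hz), ?_⟩
          rw [SetLike.mem_coe, LinearMap.mem_ker, map_sub, ← hzx, sub_eq_zero]
          rw [← Module.End.mul_apply, ← pow_succ]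
          rw [show p - 2 * (i + 1) + 1 + 1 = p - 2 * i by omega]
        have h3 := Submodule.add_mem _ (hPS _ hip h2) (hSf _ (ih (by omega) hz))
        simpa using h3
    rw [eq_top_iff, ← hi.submodule_iSup_eq_top]
    refine iSup_le fun d => ?_
    by_cases h1 : 2 * d ≤ p
    · exact hlow d h1
    · by_cases h2 : d ≤ p
      · intro x hx
        obtain ⟨z, hz, rfl⟩ := hsurj (p - d) (by omega) x
          (by rwa [show p - (p - d) = d by omega])
        exact hSfp _ _ (hlow _ (by omega) hz)
      · rw [hp d (by omega)]; exact bot_le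

theorem tensorGr_mono {N : Type*} [AddCommGroup N] [Module k N] {A A' : ℕ → Submodule k V}
    {B B' : ℕ → Submodule k N} (hA : ∀ d, A d ≤ A' d) (hB : ∀ d, B d ≤ B' d) (d : ℕ) :
    tensorGr A B d ≤ tensorGr A' B' d := by
  refine Submodule.span_le.mpr ?_
  rintro _ ⟨d₁, d₂, x, y, he, hx, hy, rfl⟩
  exact Submodule.subset_span ⟨d₁, d₂, x, y, he, hA _ hx, hB _ hy, rfl⟩

/-- The main estimate for the tensor product. -/
theorem tensor_bounds [CharZero k] {N : Type*} [AddCommGroup N] [Module k N]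
    {A : ℕ → Submodule k V} {B : ℕ → Submodule k N} {E₁ : Module.End k V} {E₂ : Module.End k N}
    (hA : DirectSum.IsInternal A) (hB : DirectSum.IsInternal B)
    {Λ₁ Λ₂ : Type*} {iv₁ dv₁ : Λ₁ → ℕ} {e₁ : Λ₁ → V} {iv₂ dv₂ : Λ₂ → ℕ} {e₂ : Λ₂ → N}
    (h₁ : IsDecompEnd A E₁ iv₁ dv₁ e₁) (h₂ : IsDecompEnd B E₂ iv₂ dv₂ e₂) (p C : ℕ)
    (hp : ∀ α, 2 * iv₁ α + dv₁ α = p + 1)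
    (hC : ∀ α, 2 * iv₂ α + dv₂ α = C + 1 ∨ 2 * iv₂ α + dv₂ α = C + 1 + 1) :
    (∀ a d, 2 * d + a ≤ p + C → ∀ x ∈ tensorGr A B d,
      ((TensorProduct.map E₁ 1 + TensorProduct.map 1 E₂ : Module.End k (V ⊗[k] N)) ^ a) x = 0 →
        x = 0) ∧
    (∀ a d, p + C + 1 ≤ 2 * d + a → ∀ w ∈ tensorGr A B (d + a), ∃ x ∈ tensorGr A B d,
      ((TensorProduct.map E₁ 1 + TensorProduct.map 1 E₂ : Module.End k (V ⊗[k] N)) ^ a) x = w) ∧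
    (∀ d, p + C + 1 < d → tensorGr A B d = ⊥) := by
  obtain ⟨F₁, hF₁⟩ := exists_ops h₁
  obtain ⟨F₂, hF₂⟩ := exists_ops h₂
  set A' := strPiece E₁ iv₁ dv₁ e₁ p with hA'
  set B0 := strPiece E₂ iv₂ dv₂ e₂ C with hB0
  set B1 := strPiece E₂ iv₂ dv₂ e₂ (C + 1) with hB1
  have hAA' : ∀ d, A d ≤ A' d := gr_le hA h₁ A' (strPiece_le h₁ p)
    (fun α j hj => Submodule.subset_span ⟨α, j, hj, rfl, hp α, rfl⟩)
  have hBB : ∀ d, B d ≤ B0 d ⊔ B1 d := gr_le hB h₂ (fun d => B0 d ⊔ B1 d)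
    (fun d => sup_le (strPiece_le h₂ _ d) (strPiece_le h₂ _ d)) (by
      intro α j hj
      rcases hC α with h | h
      · exact Submodule.mem_sup_left (Submodule.subset_span ⟨α, j, hj, rfl, h, rfl⟩)
      · exact Submodule.mem_sup_right (Submodule.subset_span ⟨α, j, hj, rfl, h, rfl⟩))
  have hAz : ∀ d, p < d → A' d = ⊥ := by
    intro d hd
    rw [hA', strPiece, Submodule.span_eq_bot]
    rintro _ ⟨α, j, hj, h1, h2, rfl⟩
    omega
  have hBz : ∀ s d, s < d → strPiece E₂ iv₂ dv₂ e₂ s d = ⊥ := by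
    intro s d hd
    rw [strPiece, Submodule.span_eq_bot]
    rintro _ ⟨α, j, hj, h1, h2, rfl⟩
    omega
  have hTz : ∀ s d, p + s < d → tensorGr A' (strPiece E₂ iv₂ dv₂ e₂ s) d = ⊥ := by
    intro s d hd
    rw [tensorGr, Submodule.span_eq_bot]
    rintro _ ⟨d₁, d₂, x, y, he, hx, hy, rfl⟩
    by_cases h : p < d₁
    · rw [hAz _ h, Submodule.mem_bot] at hx
      rw [hx, zero_tmul]
    · rw [hBz s _ (by omega), Submodule.mem_bot] at hy
      rw [hy, tmul_zero]
  have hT : ∀ d, tensorGr A B d ≤ tensorGr A' B0 d ⊔ tensorGr A' B1 d := by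
    intro d
    refine Submodule.span_le.mpr ?_
    rintro _ ⟨d₁, d₂, x, y, he, hx, hy, rfl⟩
    obtain ⟨y0, hy0, y1, hy1, rfl⟩ := Submodule.mem_sup.mp (hBB _ hy)
    rw [tmul_add]
    exact Submodule.add_mem_sup (Submodule.subset_span ⟨d₁, d₂, x, y0, he, hAA' _ hx, hy0, rfl⟩)
      (Submodule.subset_span ⟨d₁, d₂, x, y1, he, hAA' _ hx, hy1, rfl⟩)
  have hT0 : ∀ d, tensorGr A' B0 d ≤ tensorGr A B d :=
    tensorGr_mono (strPiece_le h₁ p) (strPiece_le h₂ _)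
  have hT1 : ∀ d, tensorGr A' B1 d ≤ tensorGr A B d :=
    tensorGr_mono (strPiece_le h₁ p) (strPiece_le h₂ _)
  have S0 := (hF₁ p).tensor (hF₂ C)
  have S1 := (hF₁ p).tensor (hF₂ (C + 1))
  set E := (TensorProduct.map E₁ 1 + TensorProduct.map 1 E₂ : Module.End k (V ⊗[k] N)) with hE
  refine ⟨?_, ?_, ?_⟩
  · intro a d had x hx h0
    obtain ⟨x0, hx0, x1, hx1, rfl⟩ := Submodule.mem_sup.mp (hT d hx)
    obtain ⟨π, hπ1, hπ2⟩ := exists_proj h₂ C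
    let π' : Module.End k (V ⊗[k] N) := TensorProduct.map 1 π
    have q0 : ∀ d, ∀ x ∈ tensorGr A' B0 d, π' x = x := by
      intro d x hx
      induction hx using Submodule.span_induction with
      | mem x hx =>
        obtain ⟨d₁, d₂, x, y, he, hx, hy, rfl⟩ := hx
        simp [π', hπ1 _ _ hy]
      | zero => simp
      | add x y _ _ hx hy => rw [map_add, hx, hy]
      | smul c x _ hx => rw [map_smul, hx]
    have q1 : ∀ d, ∀ x ∈ tensorGr A' B1 d, π' x = 0 := by
      intro d x hx
      induction hx using Submodule.span_induction with
      | mem x hx =>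
        obtain ⟨d₁, d₂, x, y, he, hx, hy, rfl⟩ := hx
        simp [π', hπ2 (C + 1) (by omega) _ _ hy]
      | zero => simp
      | add x y _ _ hx hy => rw [map_add, hx, hy, add_zero]
      | smul c x _ hx => rw [map_smul, hx, smul_zero]
    rw [map_add] at h0
    have e0 : (E ^ a) x0 = 0 := by
      have := congrArg π' h0
      rwa [map_add, q0 _ _ (S0.pow_mem a d x0 hx0), q1 _ _ (S1.pow_mem a d x1 hx1), add_zero,
        map_zero] at this
    have e1 : (E ^ a) x1 = 0 := by rwa [e0, zero_add] at h0
    rw [S0.inj d a (by omega) x0 hx0 e0, S1.inj d a (by omega) x1 hx1 e1, add_zero]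
  · intro a d had w hw
    obtain ⟨w0, hw0, w1, hw1, rfl⟩ := Submodule.mem_sup.mp (hT _ hw)
    obtain ⟨x0, hx0, rfl⟩ := S0.surj (p + C) (hTz C) a d (by omega) w0 hw0
    obtain ⟨x1, hx1, rfl⟩ := S1.surj (p + (C + 1)) (hTz (C + 1)) a d (by omega) w1 hw1
    exact ⟨x0 + x1, Submodule.add_mem _ (hT0 _ hx0) (hT1 _ hx1), map_add _ _ _⟩
  · intro d hd
    rw [eq_bot_iff]
    refine (hT d).trans ?_
    rw [hB0, hB1, hTz C d (by omega), hTz (C + 1) d (by omega), sup_bot_eq]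

end final

/-- Let `l, y ∈ R_1` be strong Lefschetz elements for the finite length
graded `R`-modules `M` and `N` respectively.  If the Hilbert function of `M` is symmetric
and the decomposition of `N` as a graded `k[y]`-module is almost centered, then `M ⊗_k N`
has the strong Lefschetz property (witnessed by a linear form of `R ⊗_k R`) and every
decomposition of `M ⊗_k N` as a graded `k[l + y]`-module (`l + y = l ⊗ 1 + 1 ⊗ y`) is
almost centered. -/
theorem statement6 {k : Type} [Field k] [CharZero k] {n : ℕ} {M N : Type}
    [AddCommGroup M] [Module k M] [Module (MvPolynomial (Fin n) k) M]
    [IsScalarTower k (MvPolynomial (Fin n) k) M]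
    [Module.Finite (MvPolynomial (Fin n) k) M] [FiniteDimensional k M]
    [AddCommGroup N] [Module k N] [Module (MvPolynomial (Fin n) k) N]
    [IsScalarTower k (MvPolynomial (Fin n) k) N]
    [Module.Finite (MvPolynomial (Fin n) k) N] [FiniteDimensional k N]
    (grM : ℕ → Submodule k M) (hgrM : IsGrading k n grM)
    (grN : ℕ → Submodule k N) (hgrN : IsGrading k n grN)
    (l : MvPolynomial (Fin n) k) (hl : l ∈ homogeneousSubmodule (Fin n) k 1)
    (hSLM : IsSLAction grM l)
    (y : MvPolynomial (Fin n) k) (hy : y ∈ homogeneousSubmodule (Fin n) k 1)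
    (hSLN : IsSLAction grN y)
    (pM : ℕ) (hpM : IsSocleDegree grM pM)
    (hsym : ∀ d : ℕ, d ≤ pM →
      Module.finrank k (grM d) = Module.finrank k (grM (pM - d)))
    {ΛN : Type} [Fintype ΛN] (ivN dvN : ΛN → ℕ) (eN : ΛN → N)
    (hdecN : IsDecomp grN y ivN dvN eN) (hacN : AlmostCentered ivN dvN) :
    (∃ w : (MvPolynomial (Fin n) k) ⊗[k] (MvPolynomial (Fin n) k),
      IsLinearForm2 w ∧ IsSLEnd (tensorGr grM grN) (tensorAct k M N w)) ∧
    (∀ (Λ' : Type) (_ : Fintype Λ') (iv' dv' : Λ' → ℕ) (e' : Λ' → M ⊗[k] N),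
      IsDecompEnd (tensorGr grM grN)
        (tensorAct k M N (l ⊗ₜ[k] (1 : MvPolynomial (Fin n) k) +
          (1 : MvPolynomial (Fin n) k) ⊗ₜ[k] y)) iv' dv' e' →
        AlmostCentered iv' dv') := by
  classical
  let f : Module.End k M := Algebra.lsmul k k M l
  let g : Module.End k N := Algebra.lsmul k k N y
  have hfa : ∀ (a : ℕ) (x : M), (f ^ a) x = l ^ a • x := by
    intro a x
    simp only [f, ← map_pow]; rfl
  have hga : ∀ (a : ℕ) (x : N), (g ^ a) x = y ^ a • x := by
    intro a x
    simp only [g, ← map_pow]; rfl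
  have hact : tensorAct k M N (l ⊗ₜ[k] (1 : MvPolynomial (Fin n) k) +
      (1 : MvPolynomial (Fin n) k) ⊗ₜ[k] y) =
      (TensorProduct.map f 1 + TensorProduct.map 1 g : Module.End k (M ⊗[k] N)) := by
    refine TensorProduct.ext' fun u v => ?_
    rw [map_add]
    simp only [tensorAct, AlgHom.comp_apply, Algebra.TensorProduct.map_tmul, map_one]
    rfl
  have hf1 : ∀ d, ∀ x ∈ grM d, f x ∈ grM (d + 1) := by
    intro d x hx
    rw [add_comm]
    exact hgrM.2 1 d l hl x hx
  have hfp : ∀ a d, ∀ x ∈ grM d, (f ^ a) x ∈ grM (d + a) := by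
    intro a d x hx
    induction a with
    | zero => simpa using hx
    | succ a ih =>
      rw [pow_succ', Module.End.mul_apply]
      exact hf1 _ _ ih
  have hbij : ∀ d, 2 * d ≤ pM → (∀ x ∈ grM d, (f ^ (pM - 2 * d)) x = 0 → x = 0) ∧
      ∀ w ∈ grM (pM - d), ∃ x ∈ grM d, (f ^ (pM - 2 * d)) x = w := by
    intro d hd
    have hdd : d + (pM - 2 * d) = pM - d := by omega
    let φ : grM d →ₗ[k] grM (pM - d) := (f ^ (pM - 2 * d)).restrict
      (fun x hx => by rw [← hdd]; exact hfp _ _ _ hx)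
    have hφ : ∀ x, (φ x : M) = (f ^ (pM - 2 * d)) x := fun x => rfl
    have hiff : Function.Injective φ ↔ Function.Surjective φ :=
      LinearMap.injective_iff_surjective_of_finrank_eq_finrank (hsym d (by omega))
    have hor : Function.Injective φ := by
      rcases hSLM (pM - 2 * d) d with h | h
      · rw [injective_iff_map_eq_zero]
        intro x hx
        apply Subtype.ext
        refine h x x.2 ?_
        rw [← hfa, ← hφ, hx]; rfl
      · rw [hiff]
        intro w
        obtain ⟨x, hx, hxw⟩ := h w (by rw [hdd]; exact w.2)
        exact ⟨⟨x, hx⟩, Subtype.ext (by rw [hφ, hfa]; exact hxw)⟩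
    constructor
    · intro x hx h0
      have : (⟨x, hx⟩ : grM d) = 0 := hor (by rw [map_zero]; exact Subtype.ext h0)
      exact congrArg Subtype.val this
    · intro w hw
      obtain ⟨x, hx⟩ := hiff.mp hor ⟨w, hw⟩
      exact ⟨x, x.2, by rw [← hφ, hx]⟩
  obtain ⟨Λ, iv, dv, e, hdec, hcen⟩ := exists_decomp hgrM.1 hf1 pM hpM.2
    (fun d hd => (hbij d hd).1) (fun d hd => (hbij d hd).2)
  have hdecN' : IsDecompEnd grN g ivN dvN eN := by
    simpa only [IsDecompEnd, IsDecomp, hga] using hdecN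
  have hSLN' : IsSLEnd grN g := by
    simpa only [IsSLEnd, IsSLAction, hga] using hSLN
  obtain ⟨C, hC⟩ := exists_center hSLN' hdecN' hacN
  obtain ⟨b1, b2, b3⟩ := tensor_bounds hgrM.1 hgrN.1 hdec hdecN' pM C hcen hC
  refine ⟨⟨_, ⟨l, y, hl, hy, rfl⟩, ?_⟩, ?_⟩
  · rw [hact]
    intro a d
    by_cases h : 2 * d + a ≤ pM + C
    · exact Or.inl (b1 a d h)
    · exact Or.inr (b2 a d (by omega))
  · intro Λ' _ iv' dv' e' h'
    rw [hact] at h'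
    exact almostCentered_of_bounds (pM + C) b1 b2 b3 h'
end
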